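/- arXiv:1411.3842 — 3 statements merged into one kernel-verified Lean document; each statement's English description precedes it below -/
import Mathlib

section
/- Let n ≥ 6 be an even integer and let K ⊂ ℝ² be an o-symmetric convex polygon with at most n vertices and with the origin o in its interior. Then V(K)·V(K*) ≤ n²·sin²(π/n). -/
open MeasureTheory Real
open scoped Pointwise RealInnerProductSpace ENNReal

noncomputable section

abbrev E2 := EuclideanSpace ℝ (Fin 2)

/-- The polar body `K* = {y : ⟪x,y⟫ ≤ 1 for all x ∈ K}`. -/
def polarBody (K : Set E2) : Set E2 := {y | ∀ x ∈ K, ⟪x, y⟫ ≤ 1}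

/-!
Let `x 0, …, x (m - 1), -x 0, …, -x (m - 1)` be the vertices of `K` in counterclockwise order, with
`2 * m ≤ n`, and let `d i` be the determinant of `x i` and `x (i + 1)`. Cutting `K` and its polar
into triangles at the origin gives `V(K) = ∑ d i` and `V(K*) = ∑ L i` over half a turn, where
`L i` is the determinant of the two endpoints of the edge of the polar dual to `x (i + 1)`. Only
the upper bounds are needed, and these come from coverings by the triangles.

The coordinates of `x` solve a discrete Sturm–Liouville equation with weights `1 / d i` and
potential `L i`, with the antiperiodic boundary condition `x (i + m) = -x i`. Since `x` makes half
a turn in `m` steps, it is a ground state, which yields the discrete Wirtinger inequality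
`∑ L i * u (i + 1) ^ 2 ≤ ∑ (u (i + 1) - u i) ^ 2 / d i` for every antiperiodic `u`.

Choose `s > 0` and angles `t i` in `[0, π / 2]` with `sin (t i) = s * d i` and `∑ t i = π / 2`, and
take for `u` the cosine and the sine of the partial sums of `2 * t i`. Adding the two inequalities
gives `∑ L i ≤ ∑ 4 * sin (t i) ^ 2 / d i = 4 * s ^ 2 * ∑ d i`, hence
`V(K) * V(K*) ≤ 4 * (∑ sin (t i)) ^ 2`, and Jensen's inequality finishes the proof.
-/

/-! ### Sturm–Liouville difference equations -/

/-- The Sturm–Liouville difference equation `Δ (w Δ x) = -q x` with weights `w` and potential `q`.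
The potential is indexed so that `q i` is the coefficient of `x (i + 1)`. -/
def IsSturmLiouvilleSolution {E : Type*} [AddCommGroup E] [Module ℝ E] (w q : ℕ → ℝ) (x : ℕ → E) :
    Prop :=
  ∀ i, w (i + 1) • (x (i + 2) - x (i + 1)) - w i • (x (i + 1) - x i) = -(q i • x (i + 1))

namespace IsSturmLiouvilleSolution

variable {w q v : ℕ → ℝ}

lemma map {E F : Type*} [AddCommGroup E] [Module ℝ E] [AddCommGroup F] [Module ℝ F] {x : ℕ → E}
    (h : IsSturmLiouvilleSolution w q x) (f : E →ₗ[ℝ] F) :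
    IsSturmLiouvilleSolution w q fun i => f (x i) := fun i => by
  simpa only [map_sub, map_neg, map_smul] using congrArg f (h i)

lemma sum_mul_sub_mul_sub (h : IsSturmLiouvilleSolution w q v) (y : ℕ → ℝ) (m : ℕ) :
    ∑ i ∈ Finset.range m, w i * (v (i + 1) - v i) * (y (i + 1) - y i) =
      ∑ i ∈ Finset.range m, q i * v (i + 1) * y (i + 1) +
        (w m * (v (m + 1) - v m) * y m - w 0 * (v 1 - v 0) * y 0) := by
  rw [← Finset.sum_range_sub fun i => w i * (v (i + 1) - v i) * y i, ← Finset.sum_add_distrib]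
  refine Finset.sum_congr rfl fun i _ => ?_
  have hi := h i
  simp only [smul_eq_mul] at hi
  linear_combination -y (i + 1) * hi

end IsSturmLiouvilleSolution

lemma picone_inequality {a b x y : ℝ} (ha : 0 ≤ a) (hb : 0 ≤ b) (hx : a = 0 → x = 0)
    (hy : b = 0 → y = 0) : (b - a) * (y ^ 2 / b - x ^ 2 / a) ≤ (y - x) ^ 2 := by
  rcases ha.eq_or_lt' with rfl | ha
  · rcases hb.eq_or_lt' with rfl | hb
    · simp [hx, hy]
    · simp [hx, mul_div_cancel₀ _ hb.ne']
  rcases hb.eq_or_lt' with rfl | hb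
  · simp [hy, mul_div_cancel₀ _ ha.ne']
  · have hsq : (y - x) ^ 2 - (b - a) * (y ^ 2 / b - x ^ 2 / a) = a * b * (x / a - y / b) ^ 2 := by
      field_simp
      ring
    linarith [show 0 ≤ a * b * (x / a - y / b) ^ 2 by positivity]

namespace IsSturmLiouvilleSolution

variable {w q v : ℕ → ℝ} {m : ℕ}

/-- The positive solution `v` serves as a ground state: summing Picone's inequality against `w`
turns the left-hand sides into the potential term. -/
lemma sum_mul_sq_le_of_boundary_eq_zero (h : IsSturmLiouvilleSolution w q v) (hw : ∀ i, 0 ≤ w i)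
    (hv : ∀ i ≤ m, 0 ≤ v i) {z : ℕ → ℝ} (hvz : ∀ i ≤ m, v i = 0 → z i = 0) (hz0 : z 0 = 0)
    (hzm : z m = 0) :
    ∑ i ∈ Finset.range m, q i * z (i + 1) ^ 2 ≤
      ∑ i ∈ Finset.range m, w i * (z (i + 1) - z i) ^ 2 := by
  have hgreen := h.sum_mul_sub_mul_sub (fun i => z i ^ 2 / v i) m
  simp only [hz0, hzm, ne_eq, OfNat.ofNat_ne_zero, not_false_eq_true, zero_pow, zero_div, mul_zero,
    sub_zero, add_zero] at hgreen
  calc ∑ i ∈ Finset.range m, q i * z (i + 1) ^ 2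
      = ∑ i ∈ Finset.range m, q i * v (i + 1) * (z (i + 1) ^ 2 / v (i + 1)) := by
        refine Finset.sum_congr rfl fun i hi => ?_
        rw [mul_assoc, mul_div_cancel_of_imp']
        exact fun hvi => by simp [hvz (i + 1) (Finset.mem_range.1 hi) hvi]
    _ = ∑ i ∈ Finset.range m,
          w i * (v (i + 1) - v i) * (z (i + 1) ^ 2 / v (i + 1) - z i ^ 2 / v i) := hgreen.symm
    _ ≤ ∑ i ∈ Finset.range m, w i * (z (i + 1) - z i) ^ 2 := by
        refine Finset.sum_le_sum fun i hi => ?_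
        have him : i < m := Finset.mem_range.1 hi
        rw [mul_assoc]
        exact mul_le_mul_of_nonneg_left (picone_inequality (hv i him.le) (hv (i + 1) him)
          (hvz i him.le) (hvz (i + 1) him)) (hw i)

/-- Subtracting from `u` the antiperiodic solution `l` with the same initial value changes the two
sides by the same amount, so the inequality reduces to sequences vanishing at `0` and `m`. -/
lemma sum_mul_sq_le_of_antiperiodic (h : IsSturmLiouvilleSolution w q v) (hw : ∀ i, 0 ≤ w i)
    (hwm : w m = w 0) (hv : ∀ i ≤ m, 0 ≤ v i) (hv_ne : ∀ i, 0 < i → i < m → v i ≠ 0)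
    {l u : ℕ → ℝ} (hl : IsSturmLiouvilleSolution w q l) (hl_anti : Function.Antiperiodic l m)
    (hu : Function.Antiperiodic u m) (hlu : l 0 = u 0) :
    ∑ i ∈ Finset.range m, q i * u (i + 1) ^ 2 ≤
      ∑ i ∈ Finset.range m, w i * (u (i + 1) - u i) ^ 2 := by
  have hlm1 : l (m + 1) = -l 1 := by rw [add_comm]; exact hl_anti 1
  have hz0 : u 0 - l 0 = 0 := by rw [hlu, sub_self]
  have hzm : u m - l m = 0 := by rw [hu.eq, hl_anti.eq, hlu, sub_self]
  have hvz : ∀ i ≤ m, v i = 0 → u i - l i = 0 := by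
    intro i him hvi
    rcases i.eq_zero_or_pos with rfl | hi
    · exact hz0
    rcases him.eq_or_lt with rfl | him
    · exact hzm
    · exact absurd hvi (hv_ne i hi him)
  have hdir := h.sum_mul_sq_le_of_boundary_eq_zero hw hv hvz hz0 hzm
  have hgreen := hl.sum_mul_sub_mul_sub (fun i => 2 * u i - l i) m
  rw [hlm1, hl_anti.eq, hu.eq, hwm] at hgreen
  have hlhs : ∑ i ∈ Finset.range m, q i * u (i + 1) ^ 2 =
      ∑ i ∈ Finset.range m, q i * (u (i + 1) - l (i + 1)) ^ 2 +
        ∑ i ∈ Finset.range m, q i * l (i + 1) * (2 * u (i + 1) - l (i + 1)) := by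
    rw [← Finset.sum_add_distrib]
    exact Finset.sum_congr rfl fun i _ => by ring
  have hrhs : ∑ i ∈ Finset.range m, w i * (u (i + 1) - u i) ^ 2 =
      ∑ i ∈ Finset.range m, w i * ((u (i + 1) - l (i + 1)) - (u i - l i)) ^ 2 +
        ∑ i ∈ Finset.range m, w i * (l (i + 1) - l i) *
          ((2 * u (i + 1) - l (i + 1)) - (2 * u i - l i)) := by
    rw [← Finset.sum_add_distrib]
    exact Finset.sum_congr rfl fun i _ => by ring
  linarith

end IsSturmLiouvilleSolution

/-! ### Sums of sines -/

/-- The largest term of the sum is `π / 2` when `s` is the reciprocal of the largest `d i`, so the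
intermediate value theorem applies. -/
lemma exists_sum_arcsin_mul_eq_pi_div_two {ι : Type*} {I : Finset ι} (hI : I.Nonempty) {d : ι → ℝ}
    (hd : ∀ i ∈ I, 0 < d i) :
    ∃ s : ℝ, 0 < s ∧ (∀ i ∈ I, sin (arcsin (s * d i)) = s * d i) ∧
      ∑ i ∈ I, arcsin (s * d i) = π / 2 := by
  obtain ⟨k, hk, hmax⟩ := I.exists_max_image d hI
  have hdk := hd k hk
  set f : ℝ → ℝ := fun s => ∑ i ∈ I, arcsin (s * d i)
  have hf : Continuous f :=
    continuous_finsetSum _ fun i _ => continuous_arcsin.comp (continuous_mul_const (d i))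
  have hf0 : f 0 = 0 := by simp [f]
  have hfk : π / 2 ≤ f (d k)⁻¹ := by
    have hnonneg : ∀ i ∈ I, 0 ≤ arcsin ((d k)⁻¹ * d i) := fun i hi =>
      arcsin_nonneg.2 (mul_nonneg (inv_nonneg.2 hdk.le) (hd i hi).le)
    simpa only [inv_mul_cancel₀ hdk.ne', arcsin_one] using Finset.single_le_sum hnonneg hk
  obtain ⟨s, ⟨hs0, hsk⟩, hfs⟩ := intermediate_value_Icc (inv_nonneg.2 hdk.le) hf.continuousOn
    ⟨hf0.trans_le pi_div_two_pos.le, hfk⟩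
  have hs : 0 < s := hs0.lt_of_ne' <| by
    rintro rfl
    exact pi_div_two_pos.ne (hf0.symm.trans hfs)
  refine ⟨s, hs, fun i hi => sin_arcsin ?_ ?_, hfs⟩
  · linarith [mul_pos hs (hd i hi)]
  · calc s * d i ≤ (d k)⁻¹ * d k :=
          mul_le_mul hsk (hmax i hi) (hd i hi).le (inv_nonneg.2 hdk.le)
      _ = 1 := inv_mul_cancel₀ hdk.ne'

lemma sum_sin_le_card_mul_sin {ι : Type*} {I : Finset ι} (hI : I.Nonempty) {t : ι → ℝ}
    (ht : ∀ i ∈ I, t i ∈ Set.Icc 0 π) :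
    ∑ i ∈ I, sin (t i) ≤ I.card * sin ((∑ i ∈ I, t i) / I.card) := by
  have hcard : (0 : ℝ) < I.card := Nat.cast_pos.2 hI.card_pos
  have hjensen := strictConcaveOn_sin_Icc.concaveOn.le_map_sum (w := fun _ => (I.card : ℝ)⁻¹)
    (fun _ _ => inv_nonneg.2 hcard.le) (by simp [hcard.ne']) ht
  simp only [smul_eq_mul, ← Finset.mul_sum] at hjensen
  rwa [inv_mul_le_iff₀ hcard, inv_mul_eq_div] at hjensen

lemma mul_sin_div_le_mul_sin_div {θ a b : ℝ} (ha : 0 < a) (hab : a ≤ b) (hθ : θ / a ∈ Set.Icc 0 π) :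
    a * sin (θ / a) ≤ b * sin (θ / b) := by
  have hb : 0 < b := ha.trans_le hab
  have hconcave := strictConcaveOn_sin_Icc.concaveOn.2 hθ (Set.left_mem_Icc.2 pi_pos.le)
    (div_nonneg ha.le hb.le) (sub_nonneg.2 ((div_le_one hb).2 hab)) (add_sub_cancel _ _)
  simp only [smul_eq_mul, mul_zero, add_zero, sin_zero] at hconcave
  rwa [mul_comm (a / b) (θ / a), div_mul_div_cancel₀ ha.ne', div_mul_eq_mul_div,
    div_le_iff₀' hb] at hconcave

/-! ### The wedge product of the plane -/

/-- The determinant of two vectors of the plane: twice the oriented area of the triangle they span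
with the origin. -/
def wedge : E2 →ₗ[ℝ] E2 →ₗ[ℝ] ℝ :=
  LinearMap.mk₂ ℝ (fun p q => p 0 * q 1 - p 1 * q 0)
    (fun p p' q => by simp only [PiLp.add_apply]; ring)
    (fun c p q => by simp only [PiLp.smul_apply, smul_eq_mul]; ring)
    (fun p q q' => by simp only [PiLp.add_apply]; ring)
    (fun c p q => by simp only [PiLp.smul_apply, smul_eq_mul]; ring)

lemma wedge_apply (p q : E2) : wedge p q = p 0 * q 1 - p 1 * q 0 := rfl

lemma wedge_self (p : E2) : wedge p p = 0 := by
  rw [wedge_apply]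
  ring

lemma neg_wedge (p q : E2) : -wedge p q = wedge q p := by
  rw [wedge_apply, wedge_apply]
  ring

lemma wedge_neg_neg (p q : E2) : wedge (-p) (-q) = wedge p q := by
  simp only [map_neg, LinearMap.neg_apply, neg_neg]

lemma periodic_wedge_succ {x : ℕ → E2} {m : ℕ} (hx : Function.Antiperiodic x m) :
    Function.Periodic (fun i => wedge (x i) (x (i + 1))) m := fun i => by
  simp only [add_right_comm i m, hx i, hx (i + 1), wedge_neg_neg]

lemma wedge_smul_eq (p q z : E2) : wedge p q • z = wedge z q • p + wedge p z • q := by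
  ext i
  fin_cases i <;> simp [wedge_apply] <;> ring

lemma inner_eq_mul_add_mul (p q : E2) : ⟪p, q⟫ = p 0 * q 0 + p 1 * q 1 := by
  simp [PiLp.inner_apply, Fin.sum_univ_two, mul_comm]

/-! ### Dual vertices -/

/-- The point `y` with `⟪p, y⟫ = ⟪q, y⟫ = 1`, for linearly independent `p` and `q`: the vertex of
the polar body dual to the edge from `p` to `q`. -/
def dualVertex (p q : E2) : E2 := (wedge p q)⁻¹ • !₂[q 1 - p 1, p 0 - q 0]

lemma inner_dualVertex (p q z : E2) :
    ⟪z, dualVertex p q⟫ = (wedge z q + wedge p z) / wedge p q := by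
  simp [inner_eq_mul_add_mul, dualVertex, wedge_apply]
  ring

lemma wedge_dualVertex_left (p q z : E2) :
    wedge (dualVertex p q) z = (⟪q, z⟫ - ⟪p, z⟫) / wedge p q := by
  simp [inner_eq_mul_add_mul, dualVertex, wedge_apply]
  ring

lemma wedge_dualVertex_right (p q z : E2) :
    wedge z (dualVertex p q) = (⟪p, z⟫ - ⟪q, z⟫) / wedge p q := by
  rw [← neg_wedge, wedge_dualVertex_left, ← neg_div, neg_sub]

lemma inner_left_dualVertex {p q : E2} (h : wedge p q ≠ 0) : ⟪p, dualVertex p q⟫ = 1 := by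
  rw [inner_dualVertex, wedge_self, add_zero, div_self h]

lemma inner_right_dualVertex {p q : E2} (h : wedge p q ≠ 0) : ⟪q, dualVertex p q⟫ = 1 := by
  rw [inner_dualVertex, wedge_self, zero_add, div_self h]

lemma dualVertex_neg_neg (p q : E2) : dualVertex (-p) (-q) = -dualVertex p q := by
  rw [dualVertex, dualVertex, wedge_neg_neg, ← smul_neg]
  congr 1
  ext i
  fin_cases i <;> simp <;> ring

lemma inv_smul_sub_sub_inv_smul_sub {p q r : E2} (hpq : wedge p q ≠ 0) (hqr : wedge q r ≠ 0) :
    (wedge q r)⁻¹ • (r - q) - (wedge p q)⁻¹ • (q - p) =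
      -(wedge (dualVertex p q) (dualVertex q r) • q) := by
  rw [wedge_dualVertex_left, inner_left_dualVertex hqr, inner_dualVertex]
  ext i
  simp only [PiLp.sub_apply, PiLp.smul_apply, PiLp.neg_apply, smul_eq_mul]
  field_simp
  fin_cases i <;> simp [wedge_apply] <;> ring

lemma dualVertex_dualVertex {p q r : E2} (hpq : wedge p q ≠ 0) (hqr : wedge q r ≠ 0)
    (hdual : wedge (dualVertex p q) (dualVertex q r) ≠ 0) :
    dualVertex (dualVertex p q) (dualVertex q r) = q := by
  rw [dualVertex, inv_smul_eq_iff₀ hdual, ← neg_inj, ← inv_smul_sub_sub_inv_smul_sub hpq hqr]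
  ext i
  fin_cases i
  · simp [dualVertex]
    ring
  · simp [dualVertex]

/-! ### Triangles with a vertex at the origin -/

lemma smul_add_smul_mem_of_zero_mem {E : Type*} [AddCommGroup E] [Module ℝ E] {C : Set E}
    (hC : Convex ℝ C) (h0 : 0 ∈ C) {p q : E} (hp : p ∈ C) (hq : q ∈ C) {a b : ℝ} (ha : 0 ≤ a)
    (hb : 0 ≤ b) (hab : a + b ≤ 1) : a • p + b • q ∈ C := by
  have hsum := hC.sum_mem (t := Finset.univ) (w := ![1 - a - b, a, b]) (z := ![0, p, q])
    (by simp [Fin.forall_fin_succ, ha, hb]; linarith) (by simp [Fin.sum_univ_succ])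
    (by simp [Fin.forall_fin_succ, h0, hp, hq])
  simpa [Fin.sum_univ_succ] using hsum

lemma mem_convexHull_zero_of_wedge {p q z : E2} (hpq : 0 < wedge p q) (hzq : 0 ≤ wedge z q)
    (hpz : 0 ≤ wedge p z) (hz : wedge z q + wedge p z ≤ wedge p q) :
    z ∈ convexHull ℝ {0, p, q} := by
  have hz_eq : z = (wedge z q / wedge p q) • p + (wedge p z / wedge p q) • q := by
    rw [div_eq_inv_mul, div_eq_inv_mul, mul_smul, mul_smul, ← smul_add, ← wedge_smul_eq,
      inv_smul_smul₀ hpq.ne']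
  rw [hz_eq]
  have hsub := subset_convexHull ℝ ({0, p, q} : Set E2)
  exact smul_add_smul_mem_of_zero_mem (convex_convexHull ℝ _) (hsub (by simp)) (hsub (by simp))
    (hsub (by simp)) (div_nonneg hzq hpq.le) (div_nonneg hpz hpq.le)
    (by rwa [← add_div, div_le_one hpq])

lemma volume_setOf_add_le_one :
    volume {z : E2 | 0 ≤ z 0 ∧ 0 ≤ z 1 ∧ z 0 + z 1 ≤ 1} = ENNReal.ofReal (1 / 2) := by
  have hpreserve : MeasurePreserving (fun z : E2 => (z 0, z 1)) volume volume :=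
    (volume_preserving_finTwoArrow ℝ).comp (PiLp.volume_preserving_ofLp (Fin 2))
  set T : Set (ℝ × ℝ) := {z | 0 ≤ z.1 ∧ 0 ≤ z.2 ∧ z.1 + z.2 ≤ 1} with hT
  have hT_meas : MeasurableSet T :=
    (measurableSet_le measurable_const measurable_fst).inter
      ((measurableSet_le measurable_const measurable_snd).inter
        (measurableSet_le (measurable_fst.add measurable_snd) measurable_const))
  have hslice (x : ℝ) : volume (Prod.mk x ⁻¹' T) =
      (Set.Icc (0 : ℝ) 1).indicator (fun x => ENNReal.ofReal (1 - x)) x := by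
    by_cases hx : x ∈ Set.Icc (0 : ℝ) 1
    · have : Prod.mk x ⁻¹' T = Set.Icc 0 (1 - x) := by
        ext y
        simp only [hT, Set.mem_preimage, Set.mem_ofPred_eq, Set.mem_Icc, hx.1, true_and,
          le_sub_iff_add_le']
      rw [this, Set.indicator_of_mem hx, Real.volume_Icc, sub_zero]
    · have : Prod.mk x ⁻¹' T = ∅ :=
        Set.eq_empty_of_forall_notMem fun y hy => hx ⟨hy.1, by linarith [hy.2.1, hy.2.2]⟩
      rw [this, Set.indicator_of_notMem hx, measure_empty]
  rw [show {z : E2 | 0 ≤ z 0 ∧ 0 ≤ z 1 ∧ z 0 + z 1 ≤ 1} = (fun z : E2 => (z 0, z 1)) ⁻¹' T from rfl,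
    hpreserve.measure_preimage hT_meas.nullMeasurableSet, Measure.volume_eq_prod,
    Measure.prod_apply hT_meas]
  simp_rw [hslice]
  rw [lintegral_indicator measurableSet_Icc, ← ofReal_integral_eq_lintegral_ofReal]
  · rw [integral_Icc_eq_integral_Ioc, ← intervalIntegral.integral_of_le zero_le_one,
      intervalIntegral.integral_sub (by simp) (by simp)]
    norm_num
  · exact (continuous_const.sub continuous_id).continuousOn.integrableOn_Icc
  · filter_upwards [ae_restrict_mem measurableSet_Icc] with x hx
    exact sub_nonneg.2 hx.2

lemma convexHull_zero_single_single :
    convexHull ℝ {0, EuclideanSpace.single 0 1, EuclideanSpace.single 1 1} =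
      {z : E2 | 0 ≤ z 0 ∧ 0 ≤ z 1 ∧ z 0 + z 1 ≤ 1} := by
  apply Set.Subset.antisymm
  · refine convexHull_min ?_ ?_
    · simp [Set.insert_subset_iff]
    · rintro z ⟨hz0, hz1, hz⟩ z' ⟨hz'0, hz'1, hz'⟩ a b ha hb hab
      refine ⟨add_nonneg (mul_nonneg ha hz0) (mul_nonneg hb hz'0),
        add_nonneg (mul_nonneg ha hz1) (mul_nonneg hb hz'1), ?_⟩
      simp only [PiLp.add_apply, PiLp.smul_apply, smul_eq_mul]
      nlinarith
  · rintro z ⟨hz0, hz1, hz⟩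
    apply mem_convexHull_zero_of_wedge <;> simp [wedge_apply, hz0, hz1, hz]

lemma volume_convexHull_zero (p q : E2) :
    volume (convexHull ℝ {0, p, q}) = ENNReal.ofReal (|wedge p q| / 2) := by
  set f : E2 →ₗ[ℝ] E2 := Matrix.toLpLin 2 2 !![p 0, q 0; p 1, q 1] with hf
  have hf_det : LinearMap.det f = wedge p q := by
    simp [hf, Matrix.toLpLin_eq_toLin, LinearMap.det_toLin, Matrix.det_fin_two, wedge_apply,
      mul_comm]
  have hf_image : f '' {0, EuclideanSpace.single 0 1, EuclideanSpace.single 1 1} = {0, p, q} := by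
    have hfp : f (EuclideanSpace.single 0 1) = p := by
      ext i
      fin_cases i <;> simp [hf, Matrix.toLpLin_apply, Matrix.mulVec_single]
    have hfq : f (EuclideanSpace.single 1 1) = q := by
      ext i
      fin_cases i <;> simp [hf, Matrix.toLpLin_apply, Matrix.mulVec_single]
    rw [Set.image_insert_eq, Set.image_pair, map_zero, hfp, hfq]
  rw [← hf_image, ← f.image_convexHull, Measure.addHaar_image_linearMap, hf_det,
    convexHull_zero_single_single, volume_setOf_add_le_one,
    ← ENNReal.ofReal_mul (abs_nonneg _), mul_one_div]

/-- The triangles with indices below `2 * m` already cover `A`, and those in the second half turn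
have the same areas as those in the first. -/
lemma volume_le_sum_wedge {P : ℕ → E2} {m : ℕ} (hm : 0 < m) (hP : Function.Antiperiodic P m)
    (hP_nonneg : ∀ i, 0 ≤ wedge (P i) (P (i + 1))) {A : Set E2}
    (hA : A ⊆ ⋃ i, convexHull ℝ {0, P i, P (i + 1)}) :
    volume A ≤ ENNReal.ofReal (∑ i ∈ Finset.range m, wedge (P i) (P (i + 1))) := by
  have hwedge := periodic_wedge_succ hP
  have htri : Function.Periodic (fun i => convexHull ℝ {0, P i, P (i + 1)}) (2 * m) := fun i => by
    simp only [add_right_comm i (2 * m), hP.periodic_two_mul i, hP.periodic_two_mul (i + 1)]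
  calc volume A
      ≤ volume (⋃ i ∈ Finset.range (2 * m), convexHull ℝ {0, P i, P (i + 1)}) := by
        refine measure_mono (hA.trans (Set.iUnion_subset fun i => ?_))
        rw [← htri.map_mod_nat i]
        exact Set.subset_biUnion_of_mem (u := fun i => convexHull ℝ {0, P i, P (i + 1)})
          (Finset.mem_range.2 (Nat.mod_lt i (by positivity)))
    _ ≤ ∑ i ∈ Finset.range (2 * m), volume (convexHull ℝ {0, P i, P (i + 1)}) :=
        measure_biUnion_finset_le _ _
    _ = ∑ i ∈ Finset.range (2 * m), ENNReal.ofReal (wedge (P i) (P (i + 1)) / 2) :=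
        Finset.sum_congr rfl fun i _ => by
          rw [volume_convexHull_zero, abs_of_nonneg (hP_nonneg i)]
    _ = ENNReal.ofReal (∑ i ∈ Finset.range m, wedge (P i) (P (i + 1))) := by
        rw [← ENNReal.ofReal_sum_of_nonneg fun i _ => div_nonneg (hP_nonneg i) zero_le_two,
          ← Finset.sum_div, two_mul, Finset.sum_range_add]
        simp only [add_comm m, hwedge _, add_self_div_two]

lemma exists_forall_le_apply_succ {α : Type*} [LinearOrder α] {f : ℕ → α} {m : ℕ} (hm : 0 < m)
    (hf : Function.Periodic f m) : ∃ i, ∀ j, f j ≤ f (i + 1) := by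
  obtain ⟨k, -, hk⟩ := (Finset.range m).exists_max_image f ⟨0, Finset.mem_range.2 hm⟩
  refine ⟨k + (m - 1), fun j => ?_⟩
  rw [add_assoc, Nat.sub_add_cancel hm, hf k, ← hf.map_mod_nat j]
  exact hk _ (Finset.mem_range.2 (Nat.mod_lt j hm))

/-! ### Cyclic sequences of vertices and their duals -/

/-- The dual of a closed polygon, given as the periodic sequence `x` of its vertices: the `i`-th
vertex is dual to the edge from `x i` to `x (i + 1)`. -/
def dualPolygon (x : ℕ → E2) (i : ℕ) : E2 := dualVertex (x i) (x (i + 1))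

lemma dualPolygon_antiperiodic {x : ℕ → E2} {m : ℕ} (hx : Function.Antiperiodic x m) :
    Function.Antiperiodic (dualPolygon x) m := fun i => by
  rw [dualPolygon, add_right_comm, hx, hx, dualVertex_neg_neg, dualPolygon]

lemma isSturmLiouvilleSolution_of_wedge_ne_zero {x : ℕ → E2}
    (hx : ∀ i, wedge (x i) (x (i + 1)) ≠ 0) :
    IsSturmLiouvilleSolution (fun i => (wedge (x i) (x (i + 1)))⁻¹)
      (fun i => wedge (dualPolygon x i) (dualPolygon x (i + 1))) x := fun i =>
  inv_smul_sub_sub_inv_smul_sub (hx i) (hx (i + 1))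

section DualPolygon

variable {x : ℕ → E2} {m : ℕ} (hx : ∀ i, 0 < wedge (x i) (x (i + 1)))
  (hx_dual : ∀ i, 0 < wedge (dualPolygon x i) (dualPolygon x (i + 1)))
include hx hx_dual

lemma dualPolygon_dualPolygon (i : ℕ) : dualPolygon (dualPolygon x) i = x (i + 1) :=
  dualVertex_dualVertex (hx i).ne' (hx (i + 1)).ne' (hx_dual i).ne'

/-- If `⟪x j, z⟫` is largest for `j = i + 1`, then `z` lies in the triangle over the edge from
`dualPolygon x i` to `dualPolygon x (i + 1)`. -/
lemma setOf_inner_le_one_subset_iUnion (hm : 0 < m) (hx_per : Function.Periodic x m) :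
    {z | ∀ i, ⟪x i, z⟫ ≤ 1} ⊆
      ⋃ i, convexHull ℝ {0, dualPolygon x i, dualPolygon x (i + 1)} := by
  intro z hz
  obtain ⟨i, hi⟩ := exists_forall_le_apply_succ hm (hx_per.comp fun p => ⟪p, z⟫)
  refine Set.mem_iUnion.2 ⟨i, mem_convexHull_zero_of_wedge (hx_dual i) ?_ ?_ ?_⟩
  · rw [dualPolygon, wedge_dualVertex_right]
    exact div_nonneg (sub_nonneg.2 (hi (i + 2))) (hx (i + 1)).le
  · rw [dualPolygon, wedge_dualVertex_left]
    exact div_nonneg (sub_nonneg.2 (hi i)) (hx i).le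
  · rw [← div_le_one (hx_dual i), ← inner_dualVertex, ← dualPolygon,
      dualPolygon_dualPolygon hx hx_dual, real_inner_comm]
    exact hz (i + 1)

lemma volume_setOf_inner_le_one_le (hm : 0 < m) (hx_anti : Function.Antiperiodic x m) :
    volume {z | ∀ i, ⟪x i, z⟫ ≤ 1} ≤
      ENNReal.ofReal (∑ i ∈ Finset.range m, wedge (dualPolygon x i) (dualPolygon x (i + 1))) :=
  volume_le_sum_wedge hm (dualPolygon_antiperiodic hx_anti) (fun i => (hx_dual i).le)
    (setOf_inner_le_one_subset_iUnion hx hx_dual (by positivity) hx_anti.periodic_two_mul)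

lemma volume_setOf_inner_dualPolygon_le_one_le (hm : 0 < m) (hx_anti : Function.Antiperiodic x m) :
    volume {z | ∀ i, ⟪dualPolygon x i, z⟫ ≤ 1} ≤
      ENNReal.ofReal (∑ i ∈ Finset.range m, wedge (x i) (x (i + 1))) := by
  have hdual := dualPolygon_dualPolygon hx hx_dual
  have hvol := volume_setOf_inner_le_one_le hx_dual
    (fun i => by simpa only [hdual] using hx (i + 1)) hm (dualPolygon_antiperiodic hx_anti)
  have hshift := Finset.sum_range_succ_comm (fun i => wedge (x i) (x (i + 1))) m
  rw [Finset.sum_range_succ', (periodic_wedge_succ hx_anti).eq, add_comm, add_right_inj] at hshift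
  simpa only [hdual, hshift] using hvol

end DualPolygon

/-- The sequence `x` runs counterclockwise around the origin, making half a turn in `m` steps, and
is continued by `x (i + m) = -x i`. -/
structure IsCounterclockwise (x : ℕ → E2) (m : ℕ) : Prop where
  antiperiodic : Function.Antiperiodic x m
  wedge_pos : ∀ i j, i < j → j < i + m → 0 < wedge (x i) (x j)

lemma cos_sub_cos_sq_add_sin_sub_sin_sq (a b : ℝ) :
    (cos b - cos a) ^ 2 + (sin b - sin a) ^ 2 = (2 * sin ((b - a) / 2)) ^ 2 := by
  rw [cos_sub_cos, sin_sub_sin]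
  linear_combination (2 * sin ((b - a) / 2)) ^ 2 * sin_sq_add_cos_sq ((b + a) / 2)

lemma sum_range_add_of_periodic {M : Type*} [AddCommMonoid M] {f : ℕ → M} {m : ℕ}
    (hf : Function.Periodic f m) (i : ℕ) :
    ∑ j ∈ Finset.range (i + m), f j = ∑ j ∈ Finset.range i, f j + ∑ j ∈ Finset.range m, f j := by
  rw [add_comm i, Finset.sum_range_add, add_comm]
  simp only [add_comm m, hf _]

namespace IsCounterclockwise

variable {x : ℕ → E2} {m : ℕ}

lemma wedge_succ_pos (h : IsCounterclockwise x m) (hm : 2 ≤ m) (i : ℕ) :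
    0 < wedge (x i) (x (i + 1)) :=
  h.wedge_pos i (i + 1) i.lt_succ_self (by lia)

lemma wedge_lt_zero_or_wedge_lt_zero (h : IsCounterclockwise x m) {i k : ℕ} (hk2 : 2 ≤ k)
    (hk : k < 2 * m) :
    wedge (x i) (x (i + k)) < 0 ∨ wedge (x (i + k)) (x (i + 1)) < 0 := by
  rcases lt_or_ge m k with hmk | hkm
  · left
    have hpos := h.wedge_pos (i + m) (i + k) (by lia) (by lia)
    rwa [h.antiperiodic i, map_neg, LinearMap.neg_apply, neg_pos] at hpos
  · right
    rw [← neg_wedge, neg_lt_zero]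
    exact h.wedge_pos (i + 1) (i + k) (by lia) (by lia)

/-- The ground state is `wedge (x 0) (x i)`, and the solution with initial value `u 0` is a multiple
of `wedge (x 1) (x i)`. -/
lemma sum_wedge_dualPolygon_mul_sq_le (h : IsCounterclockwise x m) (hm : 2 ≤ m) {u : ℕ → ℝ}
    (hu : Function.Antiperiodic u m) :
    ∑ i ∈ Finset.range m, wedge (dualPolygon x i) (dualPolygon x (i + 1)) * u (i + 1) ^ 2 ≤
      ∑ i ∈ Finset.range m, (wedge (x i) (x (i + 1)))⁻¹ * (u (i + 1) - u i) ^ 2 := by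
  have hpos := h.wedge_succ_pos hm
  have hsol := isSturmLiouvilleSolution_of_wedge_ne_zero fun i => (hpos i).ne'
  have hground_pos (i : ℕ) (h0 : 0 < i) (him : i < m) : 0 < wedge (x 0) (x i) :=
    h.wedge_pos 0 i h0 (by rwa [zero_add])
  have hground_nonneg (i : ℕ) (him : i ≤ m) : 0 ≤ wedge (x 0) (x i) := by
    rcases i.eq_zero_or_pos with rfl | h0
    · exact (wedge_self _).ge
    rcases him.eq_or_lt with rfl | him
    · rw [h.antiperiodic.eq, map_neg, wedge_self, neg_zero]
    · exact (hground_pos i h0 him).le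
  set f : E2 →ₗ[ℝ] ℝ := (u 0 / wedge (x 1) (x 0)) • wedge (x 1)
  refine (hsol.map (wedge (x 0))).sum_mul_sq_le_of_antiperiodic (fun i => inv_nonneg.2 (hpos i).le)
    (congrArg Inv.inv (periodic_wedge_succ h.antiperiodic).eq) hground_nonneg
    (fun i h0 him => (hground_pos i h0 him).ne') (hsol.map f)
    (fun i => by rw [h.antiperiodic i, map_neg]) hu ?_
  exact div_mul_cancel₀ _ (neg_wedge (x 0) (x 1) ▸ neg_ne_zero.2 (hpos 0).ne')

/-- The test sequences are the coordinates of the points of the unit circle with angles `φ i`. -/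
lemma sum_wedge_dualPolygon_le (h : IsCounterclockwise x m) (hm : 2 ≤ m) {φ : ℕ → ℝ}
    (hφ : ∀ i, φ (i + m) = φ i + π) :
    ∑ i ∈ Finset.range m, wedge (dualPolygon x i) (dualPolygon x (i + 1)) ≤
      ∑ i ∈ Finset.range m,
        (wedge (x i) (x (i + 1)))⁻¹ * (2 * sin ((φ (i + 1) - φ i) / 2)) ^ 2 := by
  have hcos := h.sum_wedge_dualPolygon_mul_sq_le hm (u := fun i => cos (φ i))
    fun i => by simp only [hφ, cos_add_pi]
  have hsin := h.sum_wedge_dualPolygon_mul_sq_le hm (u := fun i => sin (φ i))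
    fun i => by simp only [hφ, sin_add_pi]
  simpa only [← Finset.sum_add_distrib, ← mul_add, cos_sq_add_sin_sq, mul_one,
    cos_sub_cos_sq_add_sin_sub_sin_sq] using add_le_add hcos hsin

/-- The angles of the test points are chosen so that the chords `2 * sin (t i)` are proportional to
the areas `wedge (x i) (x (i + 1))`. -/
lemma sum_wedge_mul_sum_wedge_dualPolygon_le (h : IsCounterclockwise x m) (hm : 2 ≤ m) :
    (∑ i ∈ Finset.range m, wedge (x i) (x (i + 1))) *
        ∑ i ∈ Finset.range m, wedge (dualPolygon x i) (dualPolygon x (i + 1)) ≤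
      (2 * m * sin (π / (2 * m))) ^ 2 := by
  set d : ℕ → ℝ := fun i => wedge (x i) (x (i + 1))
  have hd_pos : ∀ i, 0 < d i := h.wedge_succ_pos hm
  have hd_nonneg : 0 ≤ ∑ i ∈ Finset.range m, d i := Finset.sum_nonneg fun i _ => (hd_pos i).le
  have hrange : (Finset.range m).Nonempty := Finset.nonempty_range_iff.2 (by lia)
  obtain ⟨s, hs, hsin, hsum⟩ := exists_sum_arcsin_mul_eq_pi_div_two hrange fun i _ => hd_pos i
  set t : ℕ → ℝ := fun i => arcsin (s * d i)
  have ht_mem (i : ℕ) : t i ∈ Set.Icc 0 π := ⟨arcsin_nonneg.2 (mul_pos hs (hd_pos i)).le,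
    (arcsin_le_pi_div_two _).trans (half_le_self pi_pos.le)⟩
  have ht_per : Function.Periodic (fun i => 2 * t i) m :=
    (periodic_wedge_succ h.antiperiodic).comp fun a => 2 * arcsin (s * a)
  have hφ (i : ℕ) :
      ∑ j ∈ Finset.range (i + m), 2 * t j = ∑ j ∈ Finset.range i, 2 * t j + π := by
    rw [sum_range_add_of_periodic ht_per, ← Finset.mul_sum (Finset.range m), hsum,
      mul_div_cancel₀ _ two_ne_zero]
  have hdual := h.sum_wedge_dualPolygon_le hm (φ := fun i => ∑ j ∈ Finset.range i, 2 * t j) hφ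
  simp only [Finset.sum_range_succ, add_sub_cancel_left] at hdual
  have hchord : ∑ i ∈ Finset.range m, (d i)⁻¹ * (2 * sin (2 * t i / 2)) ^ 2 =
      4 * s ^ 2 * ∑ i ∈ Finset.range m, d i := by
    rw [Finset.mul_sum]
    refine Finset.sum_congr rfl fun i hi => ?_
    rw [mul_div_cancel_left₀ _ two_ne_zero, hsin i hi]
    field [(hd_pos i).ne']
  have hjensen := sum_sin_le_card_mul_sin hrange fun i _ => ht_mem i
  rw [Finset.sum_congr rfl hsin, ← Finset.mul_sum, hsum, Finset.card_range, div_div] at hjensen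
  calc (∑ i ∈ Finset.range m, d i) *
        ∑ i ∈ Finset.range m, wedge (dualPolygon x i) (dualPolygon x (i + 1))
      ≤ (∑ i ∈ Finset.range m, d i) * (4 * s ^ 2 * ∑ i ∈ Finset.range m, d i) :=
        mul_le_mul_of_nonneg_left (hdual.trans_eq hchord) hd_nonneg
    _ = (2 * (s * ∑ i ∈ Finset.range m, d i)) ^ 2 := by ring
    _ ≤ (2 * (m * sin (π / (2 * m)))) ^ 2 := by gcongr
    _ = (2 * m * sin (π / (2 * m))) ^ 2 := by rw [mul_assoc]

end IsCounterclockwise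

/-- The points `x i` are the vertices in counterclockwise order, without repetition, of a convex
polygon with `2 * m` vertices that is symmetric about the origin. Strict convexity at the vertices
is expressed by the edges: apart from its endpoints, no vertex lies on or beyond the line through
`x i` and `x (i + 1)`. -/
structure IsSymmPolygon (x : ℕ → E2) (m : ℕ) : Prop extends IsCounterclockwise x m where
  two_le : 2 ≤ m
  inner_dualPolygon_lt_one :
    ∀ i k, 2 ≤ k → k < 2 * m → ⟪x (i + k), dualPolygon x i⟫ < 1

lemma exists_lt_apply_eq_apply_add_of_periodic {α : Type*} {f : ℕ → α} {m : ℕ} (hm : 0 < m)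
    (hf : Function.Periodic f m) (i j : ℕ) : ∃ k < m, f j = f (i + k) := by
  refine ⟨(j + i * m - i) % m, Nat.mod_lt _ hm, ?_⟩
  have hi : i ≤ i * m := Nat.le_mul_of_pos_right i hm
  rw [← hf.map_mod_nat (i + _), Nat.add_mod_mod, Nat.add_sub_cancel' (by lia),
    Nat.add_mul_mod_self_right, hf.map_mod_nat]

namespace IsSymmPolygon

variable {x : ℕ → E2} {m : ℕ}

lemma inner_dualPolygon_le_one (h : IsSymmPolygon x m) (i : ℕ) {z : E2}
    (hz : z ∈ convexHull ℝ (Set.range x)) : ⟪dualPolygon x i, z⟫ ≤ 1 := by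
  refine convexHull_min (Set.range_subset_iff.2 fun j => ?_)
    (convex_halfSpace_le (innerₛₗ ℝ (dualPolygon x i)).isLinear 1) hz
  obtain ⟨k, hk, hjk⟩ := exists_lt_apply_eq_apply_add_of_periodic (by have := h.two_le; positivity)
    h.antiperiodic.periodic_two_mul i j
  have hedge := (h.wedge_succ_pos h.two_le i).ne'
  change ⟪dualPolygon x i, x j⟫ ≤ 1
  rw [hjk, real_inner_comm]
  rcases k with _ | _ | k
  · exact (inner_left_dualVertex hedge).le
  · exact (inner_right_dualVertex hedge).le
  · exact (h.inner_dualPolygon_lt_one i (k + 2) (by lia) hk).le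

lemma wedge_dualPolygon_pos (h : IsSymmPolygon x m) (i : ℕ) :
    0 < wedge (dualPolygon x i) (dualPolygon x (i + 1)) := by
  have hpos := h.wedge_succ_pos h.two_le
  rw [dualPolygon.eq_1 x (i + 1), wedge_dualVertex_right, dualPolygon,
    inner_right_dualVertex (hpos i).ne']
  exact div_pos (sub_pos.2 (h.inner_dualPolygon_lt_one i 2 le_rfl (by linarith [h.two_le])))
    (hpos (i + 1))

lemma volume_mul_volume_polarBody_le (h : IsSymmPolygon x m) :
    volume (convexHull ℝ (Set.range x)) * volume (polarBody (convexHull ℝ (Set.range x))) ≤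
      ENNReal.ofReal ((2 * m * sin (π / (2 * m))) ^ 2) := by
  have hpos := h.wedge_succ_pos h.two_le
  have hm : 0 < m := by have := h.two_le; positivity
  have hpolygon : convexHull ℝ (Set.range x) ⊆ {z | ∀ i, ⟪dualPolygon x i, z⟫ ≤ 1} :=
    fun z hz i => h.inner_dualPolygon_le_one i hz
  have hpolar : polarBody (convexHull ℝ (Set.range x)) ⊆ {z | ∀ i, ⟪x i, z⟫ ≤ 1} :=
    fun z hz i => hz (x i) (subset_convexHull ℝ _ (Set.mem_range_self i))
  calc volume (convexHull ℝ (Set.range x)) * volume (polarBody (convexHull ℝ (Set.range x)))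
      ≤ ENNReal.ofReal (∑ i ∈ Finset.range m, wedge (x i) (x (i + 1))) *
          ENNReal.ofReal
            (∑ i ∈ Finset.range m, wedge (dualPolygon x i) (dualPolygon x (i + 1))) :=
        mul_le_mul' ((measure_mono hpolygon).trans (volume_setOf_inner_dualPolygon_le_one_le hpos
            h.wedge_dualPolygon_pos hm h.antiperiodic))
          ((measure_mono hpolar).trans (volume_setOf_inner_le_one_le hpos
            h.wedge_dualPolygon_pos hm h.antiperiodic))
    _ ≤ ENNReal.ofReal ((2 * m * sin (π / (2 * m))) ^ 2) := by
        rw [← ENNReal.ofReal_mul (Finset.sum_nonneg fun i _ => (hpos i).le)]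
        exact ENNReal.ofReal_le_ofReal (h.sum_wedge_mul_sum_wedge_dualPolygon_le h.two_le)

end IsSymmPolygon

/-! ### Ordering points by angle -/

lemma exists_strictMono_image_Iio_eq {G : Type*} [AddCommGroup G] [LinearOrder G]
    [IsOrderedAddMonoid G] {A : Finset G} (hA : A.Nonempty) {T : G}
    (hT : ∀ a ∈ A, ∀ b ∈ A, b < a + T) :
    ∃ θ : ℕ → G, StrictMono θ ∧ (∀ i, θ (i + A.card) = θ i + T) ∧
      θ '' Set.Iio A.card = (A : Set G) := by
  have hm : 0 < A.card := hA.card_pos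
  set g : Fin A.card ↪o G := A.orderEmbOfFin rfl
  set r : ℕ → Fin A.card := fun i => ⟨i % A.card, Nat.mod_lt i hm⟩
  have hg (i : Fin A.card) : g i ∈ A := A.orderEmbOfFin_mem rfl i
  have hT_nonneg : 0 ≤ T := (pos_of_lt_add_right (hT _ (hg (r 0)) _ (hg (r 0)))).le
  refine ⟨fun i => g (r i) + (i / A.card) • T, fun i j hij => ?_, fun i => ?_, ?_⟩
  · rcases (Nat.div_le_div_right (c := A.card) hij.le).lt_or_eq with hdiv | hdiv
    · calc g (r i) + (i / A.card) • T < g (r j) + T + (i / A.card) • T := by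
            gcongr
            exact hT _ (hg _) _ (hg _)
        _ = g (r j) + (i / A.card + 1) • T := by rw [add_assoc, succ_nsmul']
        _ ≤ g (r j) + (j / A.card) • T := by
            gcongr
            exact hdiv
    · have hmod : i % A.card < j % A.card := by
        have hi := Nat.div_add_mod i A.card
        have hj := Nat.div_add_mod j A.card
        rw [hdiv] at hi
        lia
      simp only [hdiv]
      gcongr
      exact g.strictMono hmod
  · simp only [r, Nat.add_mod_right, Nat.add_div_right i hm, succ_nsmul,
      add_assoc]
  · rw [← A.range_orderEmbOfFin rfl]
    ext a
    constructor
    · rintro ⟨i, hi, rfl⟩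
      exact ⟨r i, by simp [Nat.div_eq_of_lt hi, g]⟩
    · rintro ⟨k, rfl⟩
      exact ⟨k, k.2, by simp [r, Nat.mod_eq_of_lt k.2, Nat.div_eq_of_lt k.2, g]⟩

/-- The point of the unit circle at angle `θ`. -/
def circleVec (θ : ℝ) : E2 := !₂[cos θ, sin θ]

lemma circleVec_add_pi (θ : ℝ) : circleVec (θ + π) = -circleVec θ := by
  ext i
  fin_cases i <;> simp [circleVec]

lemma wedge_circleVec (a b : ℝ) : wedge (circleVec a) (circleVec b) = sin (b - a) := by
  simp [wedge_apply, circleVec, sin_sub]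
  ring

/-- The angle in `(-π / 2, π / 2]` of the line through `0` and `z`. Squaring identifies `z` with
`-z` and doubles the angle. -/
def lineAngle (z : E2) : ℝ := Complex.arg (⟨z 0, z 1⟩ ^ 2) / 2

lemma lineAngle_neg (z : E2) : lineAngle (-z) = lineAngle z := by
  rw [lineAngle, lineAngle, ← neg_sq]
  congr 2
  simp [Complex.ext_iff, pow_two]

lemma lineAngle_lt_add_pi (z z' : E2) : lineAngle z < lineAngle z' + π := by
  simp only [lineAngle]
  linarith [Complex.arg_le_pi (⟨z 0, z 1⟩ ^ 2), Complex.neg_pi_lt_arg (⟨z' 0, z' 1⟩ ^ 2)]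

lemma exists_eq_smul_circleVec_lineAngle (z : E2) : ∃ r : ℝ, z = r • circleVec (lineAngle z) := by
  set w : ℂ := ⟨z 0, z 1⟩
  have hsq : w ^ 2 = (‖w‖ * Complex.exp (lineAngle z * Complex.I)) ^ 2 := by
    rw [mul_pow, ← Complex.exp_nat_mul]
    have hangle : (2 : ℕ) * (lineAngle z * Complex.I) = Complex.arg (w ^ 2) * Complex.I := by
      rw [lineAngle]
      push_cast
      ring
    rw [hangle, ← Complex.ofReal_pow, ← norm_pow, Complex.norm_mul_exp_arg_mul_I]
  have hz (r : ℝ) (hr : w = r * Complex.exp (lineAngle z * Complex.I)) :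
      z = r • circleVec (lineAngle z) := by
    ext i
    fin_cases i
    · simpa [circleVec, Complex.exp_ofReal_mul_I_re] using congrArg Complex.re hr
    · simpa [circleVec, Complex.exp_ofReal_mul_I_im] using congrArg Complex.im hr
  rcases sq_eq_sq_iff_eq_or_eq_neg.1 hsq with h | h
  · exact ⟨‖w‖, hz _ h⟩
  · exact ⟨-‖w‖, hz _ (by rwa [Complex.ofReal_neg, neg_mul])⟩

lemma exists_pos_smul_circleVec_lineAngle_eq_or {z : E2} (hz : z ≠ 0) :
    ∃ r : ℝ, 0 < r ∧
      (r • circleVec (lineAngle z) = z ∨ r • circleVec (lineAngle z) = -z) := by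
  obtain ⟨r, hr⟩ := exists_eq_smul_circleVec_lineAngle z
  have hr_ne : r ≠ 0 := by
    rintro rfl
    exact hz (hr.trans (zero_smul ℝ _))
  rcases hr_ne.lt_or_gt with hr_neg | hr_pos
  · exact ⟨-r, neg_pos.2 hr_neg, .inr (by rw [neg_smul, ← hr])⟩
  · exact ⟨r, hr_pos, .inl hr.symm⟩

lemma two_mul_card_image_lineAngle_le {X : Finset E2} (hneg : ∀ p ∈ X, -p ∈ X) (h0 : 0 ∉ X) :
    2 * (X.image lineAngle).card ≤ X.card := by
  refine Finset.mul_card_image_le_card X 2 fun a ha => ?_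
  obtain ⟨p, hp, rfl⟩ := Finset.mem_image.1 ha
  have : IsAddTorsionFree E2 := .of_isTorsionFree ℝ E2
  have hp_ne : p ≠ -p := fun h => h0 (self_eq_neg.1 h ▸ hp)
  rw [← Finset.card_pair hp_ne]
  refine Finset.card_le_card (Finset.insert_subset_iff.2 ⟨?_, Finset.singleton_subset_iff.2 ?_⟩)
  · exact Finset.mem_filter.2 ⟨hp, rfl⟩
  · exact Finset.mem_filter.2 ⟨hneg p hp, lineAngle_neg p⟩

lemma exists_pos_smul_circleVec_mem {X : Finset E2} (hneg : ∀ p ∈ X, -p ∈ X) (h0 : 0 ∉ X)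
    {θ : ℕ → ℝ} {m : ℕ} (hm : 0 < m) (hθ : ∀ i, θ (i + m) = θ i + π)
    (hX : ∀ i < m, θ i ∈ X.image lineAngle) (i : ℕ) :
    ∃ r : ℝ, 0 < r ∧ r • circleVec (θ i) ∈ X := by
  induction i using Nat.strong_induction_on with
  | _ i ih =>
    rcases lt_or_ge i m with him | hmi
    · obtain ⟨p, hp, hpθ⟩ := Finset.mem_image.1 (hX i him)
      obtain ⟨r, hr, hrp⟩ :=
        exists_pos_smul_circleVec_lineAngle_eq_or (ne_of_mem_of_not_mem hp h0)
      rw [hpθ] at hrp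
      refine ⟨r, hr, ?_⟩
      rcases hrp with hrp | hrp
      · exact hrp ▸ hp
      · exact hrp ▸ hneg p hp
    · obtain ⟨k, rfl⟩ := Nat.exists_eq_add_of_le' hmi
      obtain ⟨r, hr, hrX⟩ := ih k (Nat.lt_add_of_pos_right hm)
      exact ⟨r, hr, by simpa only [hθ, circleVec_add_pi, smul_neg] using hneg _ hrX⟩

lemma exists_isCounterclockwise_range_eq {X : Finset E2} (hX : X.Nonempty)
    (hneg : ∀ p ∈ X, -p ∈ X) (h0 : 0 ∉ X)
    (hray : (X : Set E2).Pairwise fun p q => ¬SameRay ℝ p q) :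
    ∃ (m : ℕ) (x : ℕ → E2), 2 * m ≤ X.card ∧ IsCounterclockwise x m ∧ Set.range x = X := by
  obtain ⟨θ, hθ_mono, hθ_add, hθ_image⟩ := exists_strictMono_image_Iio_eq (hX.image lineAngle)
    (T := π) (by simp only [Finset.forall_mem_image, lineAngle_lt_add_pi, implies_true])
  set m := (X.image lineAngle).card
  have hθ_mem (i : ℕ) (hi : i < m) : θ i ∈ X.image lineAngle :=
    Finset.mem_coe.1 (hθ_image ▸ Set.mem_image_of_mem θ hi)
  choose r hr_pos hr_mem using
    exists_pos_smul_circleVec_mem hneg h0 (hX.image lineAngle).card_pos hθ_add hθ_mem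
  set x : ℕ → E2 := fun i => r i • circleVec (θ i)
  have hx_eq {z : E2} (hz : z ∈ X) {s : ℝ} (hs : 0 < s) {i : ℕ} (h : s • circleVec (θ i) = z) :
      x i = z :=
    hray.eq (hr_mem i) hz (not_not.2 (h ▸
      ((SameRay.refl (circleVec (θ i))).pos_smul_left (hr_pos i)).pos_smul_right hs))
  have hx_anti : Function.Antiperiodic x m := fun i => hx_eq (hneg _ (hr_mem i)) (hr_pos i) (by
    rw [hθ_add, circleVec_add_pi, smul_neg])
  refine ⟨m, x, two_mul_card_image_lineAngle_le hneg h0, ⟨hx_anti, fun i j hij hji => ?_⟩, ?_⟩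
  · have hθij := hθ_mono hij
    have hθji := hθ_mono hji
    rw [hθ_add] at hθji
    simp only [x, map_smul, LinearMap.smul_apply, wedge_circleVec, smul_eq_mul]
    exact mul_pos (hr_pos j) (mul_pos (hr_pos i)
      (sin_pos_of_pos_of_lt_pi (sub_pos.2 hθij) (sub_lt_iff_lt_add'.2 hθji)))
  · refine (Set.range_subset_iff.2 hr_mem).antisymm fun z hz => ?_
    obtain ⟨i, -, hi⟩ : lineAngle z ∈ θ '' Set.Iio m :=
      hθ_image ▸ Finset.mem_coe.2 (Finset.mem_image_of_mem _ hz)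
    obtain ⟨s, hs, hsz⟩ :=
      exists_pos_smul_circleVec_lineAngle_eq_or (ne_of_mem_of_not_mem (Finset.mem_coe.1 hz) h0)
    rw [← hi] at hsz
    rcases hsz with hsz | hsz
    · exact ⟨i, hx_eq hz hs hsz⟩
    · exact ⟨i + m, (hx_anti i).trans (by rw [hx_eq (hneg z hz) hs hsz, neg_neg])⟩

/-! ### Extreme points of a symmetric polygon -/

lemma smul_ne_smul_add_smul_of_mem_extremePoints {E : Type*} [AddCommGroup E] [Module ℝ E]
    {C : Set E} (hC : Convex ℝ C) (h0 : 0 ∈ C) {p q z : E} (hq : q ∈ Set.extremePoints ℝ C)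
    (hq0 : q ≠ 0) (hz : z ∈ C) (hzq : z ≠ q) (hp : p ∈ C) (hpq : p ≠ q) {a b c : ℝ}
    (ha : 0 ≤ a) (hb : 0 ≤ b) (hc : 0 < c) (hab : a + b ≤ c) : c • q ≠ a • z + b • p := by
  intro h
  refine (smul_add_smul_mem_of_zero_mem (hC.mem_extremePoints_iff_convex_sdiff.1 hq).2
    ⟨h0, hq0.symm⟩ ⟨hz, hzq⟩ ⟨hp, hpq⟩ (div_nonneg ha hc.le) (div_nonneg hb hc.le)
    (by rwa [← add_div, div_le_one hc])).2 ?_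
  rw [Set.mem_singleton_iff, div_eq_inv_mul, div_eq_inv_mul, mul_smul, mul_smul, ← smul_add, ← h,
    inv_smul_smul₀ hc.ne']

lemma pairwise_not_sameRay_extremePoints {E : Type*} [AddCommGroup E] [Module ℝ E] {C : Set E}
    (hC : Convex ℝ C) (h0 : 0 ∈ C) (h0_notMem : 0 ∉ Set.extremePoints ℝ C) :
    (Set.extremePoints ℝ C).Pairwise fun p q => ¬SameRay ℝ p q := by
  have hne {p : E} (hp : p ∈ Set.extremePoints ℝ C) : p ≠ 0 := ne_of_mem_of_not_mem hp h0_notMem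
  have hsmul {p q : E} (hp : p ∈ Set.extremePoints ℝ C) (hq : q ∈ Set.extremePoints ℝ C)
      (hpq : p ≠ q) {a b : ℝ} (ha : 0 ≤ a) (hb : 0 < b) (hab : a ≤ b) : b • q ≠ a • p := by
    simpa only [zero_smul, add_zero] using smul_ne_smul_add_smul_of_mem_extremePoints hC h0 hq
      (hne hq) hp.1 hpq hp.1 hpq ha le_rfl hb ((add_zero a).trans_le hab)
  intro p hp q hq hpq hray
  obtain ⟨a, b, ha, hb, h⟩ := hray.exists_pos (hne hp) (hne hq)
  rcases le_total a b with hab | hba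
  · exact hsmul hp hq hpq ha.le hb hab h.symm
  · exact hsmul hq hp hpq.symm hb.le ha hba h

lemma convexHull_extremePoints_convexHull {E : Type*} [AddCommGroup E] [Module ℝ E]
    [TopologicalSpace E] [T2Space E] [IsTopologicalAddGroup E] [ContinuousSMul ℝ E]
    [LocallyConvexSpace ℝ E] {S : Set E} (hS : S.Finite) :
    convexHull ℝ (Set.extremePoints ℝ (convexHull ℝ S)) = convexHull ℝ S := by
  have hfin : (Set.extremePoints ℝ (convexHull ℝ S)).Finite :=
    hS.subset extremePoints_convexHull_subset
  rw [← (hfin.isCompact_convexHull ℝ).isClosed.closure_eq]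
  exact closure_convexHull_extremePoints (hS.isCompact_convexHull ℝ) (convex_convexHull ℝ S)

lemma neg_mem_extremePoints {E : Type*} [AddCommGroup E] [Module ℝ E] {C : Set E} (hC : C = -C)
    {p : E} (hp : p ∈ Set.extremePoints ℝ C) : -p ∈ Set.extremePoints ℝ C := by
  have himage : LinearEquiv.neg ℝ '' C = C := by
    conv_rhs => rw [hC, ← Set.image_neg_eq_neg]
    rfl
  rw [← himage, ← image_extremePoints]
  exact Set.mem_image_of_mem _ hp

/-- In the expansion of `z` in the basis `p`, `q` one coefficient is negative; if the two summed to
at least `1`, the point of the other coefficient would be a combination of `0`, `z` and the third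
point. -/
lemma wedge_add_wedge_lt_of_mem_extremePoints {C : Set E2} (hC : Convex ℝ C) (h0 : 0 ∈ C)
    {p q z : E2} (hp : p ∈ Set.extremePoints ℝ C) (hq : q ∈ Set.extremePoints ℝ C) (hz : z ∈ C)
    (hpq : 0 < wedge p q) (hcone : wedge p z < 0 ∨ wedge z q < 0) :
    wedge z q + wedge p z < wedge p q := by
  by_contra! hle
  have hp0 : p ≠ 0 := by
    rintro rfl
    simp only [map_zero, LinearMap.zero_apply, lt_irrefl] at hpq
  have hq0 : q ≠ 0 := by
    rintro rfl
    simp only [map_zero, lt_irrefl] at hpq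
  have hpq_ne : p ≠ q := by
    rintro rfl
    exact hpq.ne' (wedge_self p)
  have hz_eq := wedge_smul_eq p q z
  rcases hcone with hpz | hzq
  · have hzp : z ≠ p := by
      rintro rfl
      exact hpz.ne (wedge_self z)
    refine smul_ne_smul_add_smul_of_mem_extremePoints hC h0 hp hp0 hz hzp hq.1 hpq_ne.symm hpq.le
      (neg_nonneg.2 hpz.le) (c := wedge z q) (by linarith) (by linarith) ?_
    rw [hz_eq, neg_smul, add_neg_cancel_right]
  · have hzq' : z ≠ q := by
      rintro rfl
      exact hzq.ne (wedge_self z)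
    refine smul_ne_smul_add_smul_of_mem_extremePoints hC h0 hq hq0 hz hzq' hp.1 hpq_ne hpq.le
      (neg_nonneg.2 hzq.le) (c := wedge p z) (by linarith) (by linarith) ?_
    rw [hz_eq, neg_smul, add_neg_cancel_comm]

lemma finrank_le_of_antiperiodic {E : Type*} [NormedAddCommGroup E] [NormedSpace ℝ E] {x : ℕ → E}
    {m : ℕ} (hx : Function.Antiperiodic x m)
    (hint : (interior (convexHull ℝ (Set.range x))).Nonempty) : Module.finrank ℝ E ≤ m := by
  set W := Submodule.span ℝ (Set.range fun i : Fin m => x i)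
  have hmem (i : ℕ) : x i ∈ W := by
    induction i using Nat.strong_induction_on with
    | _ i ih =>
      rcases lt_or_ge i m with him | hmi
      · exact Submodule.subset_span ⟨⟨i, him⟩, rfl⟩
      obtain ⟨k, rfl⟩ := Nat.exists_eq_add_of_le' hmi
      rcases m.eq_zero_or_pos with rfl | hm
      · have : IsAddTorsionFree E := .of_isTorsionFree ℝ E
        rw [self_eq_neg.1 (hx k)]
        exact W.zero_mem
      · exact hx k ▸ W.neg_mem (ih k (Nat.lt_add_of_pos_right hm))
  have hsub : convexHull ℝ (Set.range x) ⊆ W :=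
    convexHull_min (Set.range_subset_iff.2 hmem) W.convex
  have htop : W = ⊤ := W.eq_top_of_nonempty_interior' (hint.mono (interior_mono hsub))
  calc Module.finrank ℝ E = Module.finrank ℝ W := by rw [htop, finrank_top]
    _ ≤ Fintype.card (Fin m) := finrank_range_le_card _
    _ = m := Fintype.card_fin m

lemma isSymmPolygon_of_range_eq_extremePoints {x : ℕ → E2} {m : ℕ} (hx : IsCounterclockwise x m)
    {K : Set E2} (hK : Convex ℝ K) (h0 : 0 ∈ K) (hm : 2 ≤ m)
    (hrange : Set.range x = Set.extremePoints ℝ K) : IsSymmPolygon x m where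
  toIsCounterclockwise := hx
  two_le := hm
  inner_dualPolygon_lt_one i k hk2 hk := by
    have hmem (j : ℕ) : x j ∈ Set.extremePoints ℝ K := hrange ▸ Set.mem_range_self j
    have hedge := hx.wedge_succ_pos hm i
    rw [dualPolygon, inner_dualVertex, div_lt_one hedge]
    exact wedge_add_wedge_lt_of_mem_extremePoints hK h0 (hmem i) (hmem (i + 1)) (hmem (i + k)).1
      hedge (hx.wedge_lt_zero_or_wedge_lt_zero hk2 hk)

lemma exists_isSymmPolygon {S : Finset E2} (hsym : convexHull ℝ (S : Set E2) = -convexHull ℝ S)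
    (h0 : 0 ∈ interior (convexHull ℝ (S : Set E2))) :
    ∃ (m : ℕ) (x : ℕ → E2), 2 * m ≤ S.card ∧ IsSymmPolygon x m ∧
      convexHull ℝ (Set.range x) = convexHull ℝ (S : Set E2) := by
  set K := convexHull ℝ (S : Set E2)
  have hK : Convex ℝ K := convex_convexHull ℝ _
  have hextreme : Set.extremePoints ℝ K ⊆ S := extremePoints_convexHull_subset
  have hull_extreme : convexHull ℝ (Set.extremePoints ℝ K) = K :=
    convexHull_extremePoints_convexHull S.finite_toSet
  have h0_notMem : 0 ∉ Set.extremePoints ℝ K :=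
    Set.disjoint_left.1 (disjoint_interior_extremePoints K) h0
  obtain ⟨X, hX⟩ := (S.finite_toSet.subset hextreme).exists_finset_coe
  have hmem {p : E2} : p ∈ X ↔ p ∈ Set.extremePoints ℝ K := by rw [← Finset.mem_coe, hX]
  have hX_nonempty : X.Nonempty := by
    rw [← Finset.coe_nonempty, hX, ← convexHull_nonempty_iff (𝕜 := ℝ), hull_extreme]
    exact ⟨0, interior_subset h0⟩
  obtain ⟨m, x, hmX, hx, hrange⟩ := exists_isCounterclockwise_range_eq hX_nonempty
    (fun p hp => hmem.2 (neg_mem_extremePoints hsym (hmem.1 hp))) (hmem.not.2 h0_notMem)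
    (hX ▸ pairwise_not_sameRay_extremePoints hK (interior_subset h0) h0_notMem)
  rw [hX] at hrange
  have hull_range : convexHull ℝ (Set.range x) = K := by rw [hrange, hull_extreme]
  have hm : 2 ≤ m := by
    simpa using finrank_le_of_antiperiodic hx.antiperiodic (hull_range ▸ ⟨0, h0⟩)
  exact ⟨m, x, hmX.trans (Finset.card_le_card (Finset.coe_subset.1 (hX ▸ hextreme))),
    isSymmPolygon_of_range_eq_extremePoints hx hK (interior_subset h0) hm hrange, hull_range⟩

theorem polygonal_blaschke_santalo_sym_general
    (n : ℕ)
    (S : Finset E2) (hScard : S.card ≤ n)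
    (K : Set E2) (hK : K = convexHull ℝ (S : Set E2))
    (hsym : K = -K) (h0 : (0 : E2) ∈ interior K) :
    volume K * volume (polarBody K) ≤
      ENNReal.ofReal ((n : ℝ) ^ 2 * Real.sin (π / n) ^ 2) := by
  subst hK
  obtain ⟨m, x, hmS, hx, hull⟩ := exists_isSymmPolygon hsym h0
  have hm : (2 : ℝ) ≤ m := mod_cast hx.two_le
  have hmn : 2 * (m : ℝ) ≤ n := mod_cast hmS.trans hScard
  have hangle : π / (2 * m) ∈ Set.Icc 0 π :=
    ⟨by positivity, div_le_self pi_pos.le (by linarith)⟩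
  rw [← hull, ← mul_pow]
  refine hx.volume_mul_volume_polarBody_le.trans (ENNReal.ofReal_le_ofReal ?_)
  gcongr ?_ ^ 2
  · exact mul_nonneg (by positivity) (sin_nonneg_of_mem_Icc hangle)
  · exact mul_sin_div_le_mul_sin_div (by positivity) hmn hangle

/-- Blaschke–Santaló inequality for o-symmetric polygons with at most n vertices. -/
theorem polygonal_blaschke_santalo_sym
    (n : ℕ) (hn6 : 6 ≤ n) (hneven : Even n)
    (S : Finset E2) (hScard : S.card ≤ n)
    (K : Set E2) (hK : K = convexHull ℝ (S : Set E2))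
    (hsym : K = -K) (h0 : (0 : E2) ∈ interior K) :
    volume K * volume (polarBody K) ≤
      ENNReal.ofReal ((n : ℝ) ^ 2 * Real.sin (π / n) ^ 2) :=
  polygonal_blaschke_santalo_sym_general n S hScard K hK hsym h0
end
end

section
/- Let n ≥ 6 be an even integer and let K ⊂ ℝ² be an o-symmetric convex polygon with exactly n vertices and o in its interior that maximizes the volume product, i.e. V(L)·V(L*) ≤ V(K)·V(K*) for every o-symmetric convex polygon L with at most n vertices and o in its interior. If x₁, x₂, x₃ are three consecutive vertices of K (in counterclockwise order), then o, (x₁+x₃)/2 and x₂ are collinear; equivalently, x₂ is a scalar multiple of x₁+x₃. -/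
/-!
Let `x₁` and `x₃` be the neighbours of the vertex `x₂` of the maximizer `K`. Slide `x₂` to
`x₂ + t • (x₃ - x₁)`, and `-x₂` to the opposite point. The triangle `x₁x₂x₃` is sheared into the new
polygon while the other vertices stay, so the area does not decrease, and maximality forces the area
of the polar body to be largest at `t = 0`.

Let `a` and `a'` be the vertices of `K*` dual to the edges `x₁x₂` and `x₂x₃`, and let `q` be the
gauge of the moving polar body. In the coordinates `s • (a + w • (a' - a))` its area is a constant
times the integral of `q (a + w • (a' - a))⁻²` over `w ∈ ℝ`. On this line `q` is
`|1 + t ⟪x₃ - x₁, ·⟫|` between `a` and `a'`, and up to `o(t)` in the integral it does not depend on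
`t` elsewhere, so the derivative of the integral at `t = 0` is `-⟪x₃ - x₁, a + a'⟫`. Its vanishing
says that the barycentric coordinates of the origin in the triangle `x₁x₂x₃` with respect to `x₁`
and `x₃` agree, that is, `x₁ + x₃` is a multiple of `x₂`.
-/

open MeasureTheory Real
open scoped Pointwise RealInnerProductSpace ENNReal

noncomputable section

open Filter Set
open scoped Topology

theorem setLIntegral_abs_Icc {r : ℝ} (hr : 0 ≤ r) :
    ∫⁻ s in Icc (-r) r, ENNReal.ofReal |s| = ENNReal.ofReal (r ^ 2) := by
  rw [← ofReal_integral_eq_lintegral_ofReal continuous_abs.continuousOn.integrableOn_Icc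
    (.of_forall abs_nonneg), integral_Icc_eq_integral_Ioc,
    ← intervalIntegral.integral_of_le (neg_le_self hr),
    ← intervalIntegral.integral_add_adjacent_intervals (b := 0)
      (continuous_abs.intervalIntegrable _ _) (continuous_abs.intervalIntegrable _ _),
    ← neg_zero, ← intervalIntegral.integral_comp_neg, neg_zero]
  have habs : ∫ s in 0..r, |s| = r ^ 2 / 2 := by
    rw [intervalIntegral.integral_congr (g := fun s => s), integral_id]
    · ring
    · intro s hs
      exact abs_of_nonneg (Set.uIcc_of_le hr ▸ hs).1
  simp only [abs_neg, habs, add_halves]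

/- In the coordinates `(s * w, s)` the area element is `|s| ds dw`. -/
theorem volume_seminorm_closedBall_prod (q : Seminorm ℝ (ℝ × ℝ)) (hq : ∀ w, 0 < q (w, 1)) :
    volume (q.closedBall 0 1) = ∫⁻ w, ENNReal.ofReal ((q (w, 1))⁻¹ ^ 2) := by
  have hcont : Continuous q := q.convexOn.locallyLipschitz.continuous
  have hhom (s w : ℝ) : q (s * w, s) = |s| * q (w, 1) := by
    simpa using map_smul_eq_mul q s (w, 1)
  let ν : Measure ℝ := volume.withDensity fun s => ENNReal.ofReal |s|
  let P : Set (ℝ × ℝ) := {z | |z.1| * q (z.2, 1) ≤ 1}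
  have hP : MeasurableSet P := by
    apply IsClosed.measurableSet
    exact isClosed_le (by fun_prop) continuous_const
  have hball : MeasurableSet (q.closedBall 0 1) := by
    rw [Seminorm.closedBall_zero_eq]
    exact (isClosed_le hcont continuous_const).measurableSet
  have hslice (s : ℝ) (hs : s ≠ 0) : volume ((fun p => (p, s)) ⁻¹' q.closedBall 0 1)
      = ENNReal.ofReal |s| * volume (Prod.mk s ⁻¹' P) := by
    have hpre : Prod.mk s ⁻¹' P = (s * ·) ⁻¹' ((fun p => (p, s)) ⁻¹' q.closedBall 0 1) := by
      ext w
      simp [P, hhom]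
    rw [hpre, Real.volume_preimage_mul_left hs, ← mul_assoc,
      ← ENNReal.ofReal_mul (abs_nonneg s), ← abs_mul, mul_inv_cancel₀ hs]
    simp
  calc volume (q.closedBall 0 1)
      = ∫⁻ s, ENNReal.ofReal |s| * volume (Prod.mk s ⁻¹' P) := by
        rw [Measure.volume_eq_prod, Measure.prod_apply_symm hball]
        refine lintegral_congr_ae ?_
        filter_upwards [Measure.ae_ne volume (0 : ℝ)] with s hs using hslice s hs
    _ = (ν.prod volume) P := by
        rw [Measure.prod_apply hP, lintegral_withDensity_eq_lintegral_mul _ (by fun_prop)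
          (measurable_measure_prodMk_left hP)]
        rfl
    _ = ∫⁻ w, ENNReal.ofReal ((q (w, 1))⁻¹ ^ 2) := by
        rw [Measure.prod_apply_symm hP]
        refine lintegral_congr fun w => ?_
        have hstrip : (fun s => (s, w)) ⁻¹' P = Icc (-(q (w, 1))⁻¹) (q (w, 1))⁻¹ := by
          ext s
          simp [P, ← abs_le, ← le_div_iff₀ (hq w)]
        rw [hstrip, withDensity_apply _ measurableSet_Icc,
          setLIntegral_abs_Icc (inv_nonneg.2 (hq w).le)]

theorem exists_measure_seminorm_closedBall_eq {E : Type*} [NormedAddCommGroup E]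
    [NormedSpace ℝ E] [MeasurableSpace E] [BorelSpace E] (μ : Measure E) [μ.IsAddHaarMeasure]
    (hE : Module.finrank ℝ E = 2) {a b : E} (hab : LinearIndependent ℝ ![a, b]) :
    ∃ D : ℝ≥0∞, D ≠ 0 ∧ D ≠ ∞ ∧ ∀ q : Seminorm ℝ E,
      (∀ w : ℝ, 0 < q (AffineMap.lineMap a b w)) → μ (q.closedBall 0 1) =
        D * ∫⁻ w : ℝ, ENNReal.ofReal ((q (AffineMap.lineMap a b w))⁻¹ ^ 2) := by
  have : FiniteDimensional ℝ E := .of_finrank_pos (by lia)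
  let f : ℝ × ℝ →ₗ[ℝ] E :=
    (LinearMap.fst ℝ ℝ ℝ).smulRight (b - a) + (LinearMap.snd ℝ ℝ ℝ).smulRight a
  have hf (z : ℝ × ℝ) : f z = (z.2 - z.1) • a + z.1 • b := by
    simp [f, smul_sub, sub_smul]
    abel
  have hinj : Function.Injective f := by
    rw [injective_iff_map_eq_zero]
    intro z hz
    obtain ⟨h₁, h₂⟩ := LinearIndependent.pair_iff.1 hab _ _ ((hf z).symm.trans hz)
    exact Prod.ext h₂ (by simpa [h₂] using h₁)
  let Φ : (ℝ × ℝ) ≃L[ℝ] E :=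
    (f.linearEquivOfInjective hinj (by simp [hE])).toContinuousLinearEquiv
  have : (Measure.map Φ volume).IsAddHaarMeasure := Φ.isAddHaarMeasure_map _
  refine ⟨μ.addHaarScalarFactor (.map Φ volume), ?_, ENNReal.coe_ne_top, fun q hq => ?_⟩
  · exact_mod_cast (Measure.addHaarScalarFactor_pos_of_isAddHaarMeasure _ _).ne'
  · have hline (w : ℝ) : f (w, 1) = AffineMap.lineMap a b w :=
      (hf _).trans (AffineMap.lineMap_apply_module ..).symm
    have hball : Measure.map Φ volume (q.closedBall 0 1)
        = volume ((q.comp f).closedBall 0 1) := by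
      refine (Φ.toHomeomorph.measurableEmbedding.map_apply ..).trans (congrArg _ ?_)
      ext z
      simp [Φ]
    refine (DFunLike.congr_fun (μ.isAddLeftInvariant_eq_smul (.map Φ volume)) _).trans ?_
    rw [Measure.smul_apply, hball, volume_seminorm_closedBall_prod]
    · simp [hline, ENNReal.smul_def]
    · simpa [hline] using hq

theorem integrable_inv_one_add_abs_sq : Integrable fun w : ℝ => (1 + |w|)⁻¹ ^ 2 := by
  have h := integrable_one_add_norm (E := ℝ) (μ := volume) (r := 2) (by simp)
  refine h.congr (.of_forall fun w => ?_)
  have hpos : 0 ≤ 1 + |w| := by positivity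
  simp only [Real.norm_eq_abs, Real.rpow_neg hpos, Real.rpow_two, inv_pow]

theorem integrable_inv_sq_of_mul_one_add_abs_le {f : ℝ → ℝ} {η : ℝ} (hη : 0 < η)
    (hf : AEStronglyMeasurable f volume) (hle : ∀ w, η * (1 + |w|) ≤ f w) :
    Integrable fun w => (f w)⁻¹ ^ 2 := by
  refine (integrable_inv_one_add_abs_sq.const_mul (η⁻¹ ^ 2)).mono'
    (hf.aemeasurable.inv.pow_const 2).aestronglyMeasurable (.of_forall fun w => ?_)
  rw [Real.norm_of_nonneg (sq_nonneg _), ← mul_pow, ← mul_inv]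
  have hpos : 0 < η * (1 + |w|) := by positivity
  have := hpos.trans_le (hle w)
  gcongr
  exact hle w

theorem abs_inv_sq_sub_inv_sq_le {p q m : ℝ} (hm : 0 < m) (hp : m ≤ p) (hq : m ≤ q) :
    |p⁻¹ ^ 2 - q⁻¹ ^ 2| ≤ 2 * m⁻¹ ^ 3 * |p - q| := by
  have hp₀ := hm.trans_le hp
  have hq₀ := hm.trans_le hq
  have hfactor : p⁻¹ ^ 2 - q⁻¹ ^ 2 = (p⁻¹ ^ 2 * q⁻¹ + p⁻¹ * q⁻¹ ^ 2) * (q - p) := by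
    field_simp
    ring
  rw [hfactor, abs_mul, abs_of_pos (by positivity), abs_sub_comm q p]
  gcongr
  calc p⁻¹ ^ 2 * q⁻¹ + p⁻¹ * q⁻¹ ^ 2 ≤ m⁻¹ ^ 2 * m⁻¹ + m⁻¹ * m⁻¹ ^ 2 := by gcongr
    _ = 2 * m⁻¹ ^ 3 := by ring

theorem hasDerivAt_integral_inv_sq {f : ℝ → ℝ → ℝ} {f' : ℝ → ℝ} {t₀ η C : ℝ} {s : Set ℝ}
    (hs : s ∈ 𝓝 t₀) (hη : 0 < η) (hf : ∀ t, AEStronglyMeasurable (f t) volume)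
    (hf' : AEStronglyMeasurable f' volume) (hle : ∀ t ∈ s, ∀ w, η * (1 + |w|) ≤ f t w)
    (hlip : ∀ t ∈ s, ∀ t' ∈ s, ∀ w, |f t w - f t' w| ≤ C * (1 + |w|) * |t - t'|)
    (hderiv : ∀ᵐ w, HasDerivAt (fun t => f t w) (f' w) t₀) :
    HasDerivAt (fun t => ∫ w, (f t w)⁻¹ ^ 2) (∫ w, -2 * f' w / f t₀ w ^ 3) t₀ := by
  have hpos (w : ℝ) : 0 < η * (1 + |w|) := by positivity
  refine (hasDerivAt_integral_of_dominated_loc_of_lip hs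
    (bound := fun w => 2 * η⁻¹ ^ 3 * C * (1 + |w|)⁻¹ ^ 2)
    (.of_forall fun t => ((hf t).aemeasurable.inv.pow_const 2).aestronglyMeasurable)
    (integrable_inv_sq_of_mul_one_add_abs_le hη (hf t₀) (hle t₀ (mem_of_mem_nhds hs)))
    ((hf'.aemeasurable.const_mul _).div ((hf t₀).aemeasurable.pow_const 3)).aestronglyMeasurable
    (.of_forall fun w => .of_dist_le_mul fun t ht t' ht' => ?_)
    (integrable_inv_one_add_abs_sq.const_mul _) ?_).2
  · rw [Real.dist_eq, Real.dist_eq, Real.coe_nnabs]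
    calc |(f t w)⁻¹ ^ 2 - (f t' w)⁻¹ ^ 2|
        ≤ 2 * (η * (1 + |w|))⁻¹ ^ 3 * |f t w - f t' w| :=
          abs_inv_sq_sub_inv_sq_le (hpos w) (hle t ht w) (hle t' ht' w)
      _ ≤ 2 * (η * (1 + |w|))⁻¹ ^ 3 * (C * (1 + |w|) * |t - t'|) := by
          gcongr
          exact hlip t ht t' ht' w
      _ = 2 * η⁻¹ ^ 3 * C * (1 + |w|)⁻¹ ^ 2 * |t - t'| := by
          have : 1 + |w| ≠ 0 := by positivity
          field_simp
      _ ≤ |2 * η⁻¹ ^ 3 * C * (1 + |w|)⁻¹ ^ 2| * |t - t'| := by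
          gcongr
          exact le_abs_self _
  · filter_upwards [hderiv] with w hw
    have hne := ((hpos w).trans_le (hle t₀ (mem_of_mem_nhds hs) w)).ne'
    refine ((hw.inv hne).pow 2).congr_deriv ?_
    simp
    field_simp

theorem lt_one_of_convexOn {α : ℝ → ℝ} (hα : ConvexOn ℝ univ α) (hα₀ : α 0 = 1)
    (hα₁ : α 1 = 1) (hmid : α (1 / 2) < 1) {w : ℝ} (hw : w ∈ Ioo 0 1) : α w < 1 := by
  obtain ⟨h₀, h₁⟩ := hw
  rcases le_total w (1 / 2) with h | h
  · have := hα.2 (mem_univ 0) (mem_univ (1 / 2))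
      (show 0 ≤ 1 - 2 * w by linarith) (show 0 ≤ 2 * w by linarith) (by ring)
    simp only [smul_eq_mul, hα₀] at this
    ring_nf at this hmid
    nlinarith
  · have := hα.2 (mem_univ 1) (mem_univ (1 / 2))
      (show 0 ≤ 2 * w - 1 by linarith) (show 0 ≤ 2 - 2 * w by linarith) (by ring)
    simp only [smul_eq_mul, hα₁] at this
    ring_nf at this hmid
    nlinarith

theorem one_add_mul_le_of_convexOn {α : ℝ → ℝ} (hα : ConvexOn ℝ univ α) (hα₀ : α 0 = 1)
    (hα₁ : α 1 = 1) {w : ℝ} (hw : w ∉ Ioo 0 1) :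
    1 + (1 - α (1 / 2)) * (|2 * w - 1| - 1) ≤ α w := by
  rcases not_and_or.1 hw with hw | hw
  · rcases (not_lt.1 hw).eq_or_lt with rfl | hw
    · simp [hα₀]
    have := hα.slope_mono_adjacent (mem_univ w) (mem_univ (1 / 2)) hw (by norm_num)
    rw [hα₀, div_le_iff₀ (by linarith)] at this
    rw [abs_of_neg (by linarith)]
    generalize α (1 / 2) = m at this ⊢
    ring_nf at this ⊢
    linarith
  · rcases (not_lt.1 hw).eq_or_lt with rfl | hw
    · norm_num [hα₁]
    have := hα.slope_mono_adjacent (mem_univ (1 / 2)) (mem_univ w) (by norm_num) hw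
    rw [hα₁, le_div_iff₀ (by linarith)] at this
    rw [abs_of_pos (by linarith)]
    generalize α (1 / 2) = m at this ⊢
    ring_nf at this ⊢
    linarith

theorem abs_lineMap_le (g₀ g₁ w : ℝ) :
    |AffineMap.lineMap g₀ g₁ w| ≤ (|g₀| + |g₁|) * (1 + |w|) := by
  rw [AffineMap.lineMap_apply_ring]
  calc |(1 - w) * g₀ + w * g₁| ≤ |1 - w| * |g₀| + |w| * |g₁| := by
        simpa only [abs_mul] using abs_add_le ((1 - w) * g₀) (w * g₁)
    _ ≤ (1 + |w|) * |g₀| + (1 + |w|) * |g₁| := by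
        gcongr
        · simpa using abs_sub 1 w
        · linarith
    _ = (|g₀| + |g₁|) * (1 + |w|) := by ring

theorem exists_eventually_mul_one_add_abs_le_max {α : ℝ → ℝ} (hα : ConvexOn ℝ univ α)
    (hα₀ : α 0 = 1) (hα₁ : α 1 = 1) (hmid : α (1 / 2) < 1) (g₀ g₁ : ℝ) :
    ∃ η > 0, ∀ᶠ t in 𝓝 (0 : ℝ), ∀ w : ℝ,
      η * (1 + |w|) ≤ max (α w) |1 + t * AffineMap.lineMap g₀ g₁ w| := by
  obtain ⟨η, hη, hη₁, hη₂⟩ : ∃ η : ℝ, 0 < η ∧ η ≤ 1 / 4 ∧ η ≤ 1 - α (1 / 2) :=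
    ⟨_, lt_min (by norm_num) (sub_pos.2 hmid), min_le_left _ _, min_le_right _ _⟩
  refine ⟨η, hη, ?_⟩
  have hlim : Tendsto (fun t => |t| * ((|g₀| + |g₁|) * 2)) (𝓝 0) (𝓝 0) :=
    Continuous.tendsto' (by fun_prop) _ _ (by simp)
  filter_upwards [hlim.eventually_le_const one_half_pos] with t ht w
  by_cases hw : w ∈ Ioo 0 1
  · have hw_abs : |w| ≤ 1 := abs_le.2 ⟨by linarith [hw.1], hw.2.le⟩
    have hg : |t * AffineMap.lineMap g₀ g₁ w| ≤ 1 / 2 := by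
      rw [abs_mul]
      refine le_trans ?_ ht
      gcongr
      refine (abs_lineMap_le g₀ g₁ w).trans ?_
      gcongr
      linarith
    calc η * (1 + |w|) ≤ 1 / 4 * 2 := by
          gcongr
          linarith
      _ ≤ 1 + t * AffineMap.lineMap g₀ g₁ w := by linarith [neg_le_of_abs_le hg]
      _ ≤ |1 + t * AffineMap.lineMap g₀ g₁ w| := le_abs_self _
      _ ≤ _ := le_max_right _ _
  · refine le_trans ?_ ((one_add_mul_le_of_convexOn hα hα₀ hα₁ hw).trans (le_max_left _ _))
    have h₁ : 1 ≤ |2 * w - 1| := by grind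
    have h₂ : 2 * |w| - 1 ≤ |2 * w - 1| := by grind
    calc η * (1 + |w|) ≤ 1 + η * (|2 * w - 1| - 1) := by nlinarith [abs_nonneg w]
      _ ≤ 1 + (1 - α (1 / 2)) * (|2 * w - 1| - 1) := by gcongr

theorem ae_hasDerivAt_max {α : ℝ → ℝ} (hα : ConvexOn ℝ univ α)
    (hα₀ : α 0 = 1) (hα₁ : α 1 = 1) (hmid : α (1 / 2) < 1) (g : ℝ → ℝ) :
    ∀ᵐ w, HasDerivAt (fun t => max (α w) |1 + t * g w|) ((Ioo 0 1).indicator g w) 0 := by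
  filter_upwards [Measure.ae_ne volume (0 : ℝ), Measure.ae_ne volume (1 : ℝ)] with w hw₀ hw₁
  have hlim : Tendsto (fun t => 1 + t * g w) (𝓝 0) (𝓝 1) :=
    Continuous.tendsto' (by fun_prop) _ _ (by simp)
  by_cases hw : w ∈ Ioo 0 1
  · rw [indicator_of_mem hw]
    have hαw := lt_one_of_convexOn hα hα₀ hα₁ hmid hw
    have hlin : HasDerivAt (fun t => 1 + t * g w) (g w) 0 := by
      simpa using ((hasDerivAt_id (0 : ℝ)).mul_const (g w)).const_add 1
    refine hlin.congr_of_eventuallyEq ?_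
    filter_upwards [hlim.eventually_const_lt hαw, hlim.eventually_const_lt one_pos] with t h₁ h₂
    rw [abs_of_pos h₂, max_eq_right h₁.le]
  · rw [indicator_of_notMem hw]
    have hαw : 1 < α w := by
      refine lt_of_lt_of_le ?_ (one_add_mul_le_of_convexOn hα hα₀ hα₁ hw)
      have : 1 < |2 * w - 1| := by grind
      nlinarith
    refine (hasDerivAt_const 0 (α w)).congr_of_eventuallyEq ?_
    filter_upwards [hlim.abs.eventually_lt_const (abs_one.trans_lt hαw)] with t ht
    exact max_eq_left ht.le

theorem setIntegral_Ioo_lineMap (g₀ g₁ : ℝ) :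
    ∫ w in Ioo (0 : ℝ) 1, AffineMap.lineMap g₀ g₁ w = (g₀ + g₁) / 2 := by
  have hprim (w : ℝ) : HasDerivAt (fun w => g₀ * w + (g₁ - g₀) * (w ^ 2 / 2))
      (AffineMap.lineMap g₀ g₁ w) w := by
    refine (((hasDerivAt_id w).const_mul g₀).add
      (((hasDerivAt_pow 2 w).div_const 2).const_mul (g₁ - g₀))).congr_deriv ?_
    simp [AffineMap.lineMap_apply_ring]
    ring
  rw [← integral_Ioc_eq_integral_Ioo, ← intervalIntegral.integral_of_le zero_le_one,
    intervalIntegral.integral_eq_sub_of_hasDerivAt (fun w _ => hprim w)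
      (AffineMap.lineMap_continuous.intervalIntegrable _ _)]
  ring

theorem hasDerivAt_integral_inv_max_sq {α : ℝ → ℝ} (hα : ConvexOn ℝ univ α)
    (hα₀ : α 0 = 1) (hα₁ : α 1 = 1) (hmid : α (1 / 2) < 1) (g₀ g₁ : ℝ) :
    HasDerivAt (fun t => ∫ w, (max (α w) |1 + t * AffineMap.lineMap g₀ g₁ w|)⁻¹ ^ 2)
      (-(g₀ + g₁)) 0 := by
  set g : ℝ → ℝ := fun w => AffineMap.lineMap g₀ g₁ w with hg
  have hα_cont : Continuous α := hα.locallyLipschitz.continuous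
  have hg_cont : Continuous g := AffineMap.lineMap_continuous
  obtain ⟨η, hη, hle⟩ := exists_eventually_mul_one_add_abs_le_max hα hα₀ hα₁ hmid g₀ g₁
  refine (hasDerivAt_integral_inv_sq hle hη
    (fun t => Continuous.aestronglyMeasurable (by fun_prop))
    (hg_cont.aestronglyMeasurable.indicator measurableSet_Ioo) (fun t ht => ht)
    (C := |g₀| + |g₁|) (fun t _ t' _ w => ?_)
    (ae_hasDerivAt_max hα hα₀ hα₁ hmid g)).congr_deriv ?_
  · calc _ ≤ |(1 + t * g w) - (1 + t' * g w)| := by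
          refine (abs_max_sub_max_le_max ..).trans ?_
          simpa using abs_abs_sub_abs_le (1 + t * g w) (1 + t' * g w)
      _ = |g w| * |t - t'| := by rw [← abs_mul]; ring_nf
      _ ≤ (|g₀| + |g₁|) * (1 + |w|) * |t - t'| := by
          gcongr
          exact abs_lineMap_le g₀ g₁ w
  · have hintegrand (w : ℝ) :
        -2 * (Ioo 0 1).indicator g w / max (α w) |1 + 0 * g w| ^ 3
          = (Ioo 0 1).indicator (fun w => -2 * g w) w := by
      by_cases hw : w ∈ Ioo 0 1
      · simp [hw, max_eq_right (lt_one_of_convexOn hα hα₀ hα₁ hmid hw).le]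
      · simp [hw]
    rw [integral_congr_ae (.of_forall hintegrand), integral_indicator measurableSet_Ioo,
      integral_const_mul, hg, setIntegral_Ioo_lineMap]
    ring

theorem linearIndependent_pair_of_map_eq_one {E : Type*} [AddCommGroup E] [Module ℝ E]
    (φ : E →ₗ[ℝ] ℝ) {a b : E} (hab : a ≠ b) (ha : φ a = 1) (hb : φ b = 1) :
    LinearIndependent ℝ ![a, b] := by
  rw [LinearIndependent.pair_iff]
  intro s t hst
  have hsum : s + t = 0 := by simpa [ha, hb] using congrArg φ hst
  obtain rfl : t = -s := by linarith
  have : s • (a - b) = 0 := by rw [← hst]; module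
  have hs := (smul_eq_zero.1 this).resolve_right (sub_ne_zero.2 hab)
  simp [hs]

theorem add_eq_zero_of_isLocalMax_lintegral {α : ℝ → ℝ} (hα : ConvexOn ℝ univ α)
    (hα₀ : α 0 = 1) (hα₁ : α 1 = 1) (hmid : α (1 / 2) < 1) {g₀ g₁ : ℝ}
    (hmax : IsLocalMax (fun t : ℝ => ∫⁻ w : ℝ,
      ENNReal.ofReal ((max (α w) |1 + t * AffineMap.lineMap g₀ g₁ w|)⁻¹ ^ 2)) 0) :
    g₀ + g₁ = 0 := by
  obtain ⟨η, hη, hle⟩ := exists_eventually_mul_one_add_abs_le_max hα hα₀ hα₁ hmid g₀ g₁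
  have hcont : Continuous α := hα.locallyLipschitz.continuous
  have hreal : ∀ᶠ t : ℝ in 𝓝 0,
      ∫⁻ w, ENNReal.ofReal ((max (α w) |1 + t * AffineMap.lineMap g₀ g₁ w|)⁻¹ ^ 2) =
        ENNReal.ofReal (∫ w, (max (α w) |1 + t * AffineMap.lineMap g₀ g₁ w|)⁻¹ ^ 2) := by
    filter_upwards [hle] with t ht
    rw [ofReal_integral_eq_lintegral_ofReal
      (integrable_inv_sq_of_mul_one_add_abs_le hη (by fun_prop) ht)
      (.of_forall fun w => sq_nonneg _)]
  have hmax' : IsLocalMax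
      (fun t => ∫ w, (max (α w) |1 + t * AffineMap.lineMap g₀ g₁ w|)⁻¹ ^ 2) 0 := by
    filter_upwards [hmax, hreal] with t ht hreal_t
    rw [hreal_t, hreal.self_of_nhds] at ht
    exact (ENNReal.ofReal_le_ofReal_iff (integral_nonneg fun w => sq_nonneg _)).1 ht
  exact neg_eq_zero.1
    (hmax'.hasDerivAt_eq_zero (hasDerivAt_integral_inv_max_sq hα hα₀ hα₁ hmid g₀ g₁))

theorem map_add_map_eq_zero_of_isLocalMax {E : Type*} [NormedAddCommGroup E] [NormedSpace ℝ E]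
    [MeasurableSpace E] [BorelSpace E] (μ : Measure E) [μ.IsAddHaarMeasure]
    (hE : Module.finrank ℝ E = 2) (p : Seminorm ℝ E) (φ ψ : E →ₗ[ℝ] ℝ) {a b : E}
    (hpa : p a = 1) (hpb : p b = 1) (hpab : p (a + b) < 2) (hφa : φ a = 1) (hφb : φ b = 1)
    (hmax : IsLocalMax (fun t : ℝ => μ ((p ⊔ (φ + t • ψ).toSeminorm).closedBall 0 1)) 0) :
    ψ a + ψ b = 0 := by
  have hne : a ≠ b := by
    rintro rfl
    rw [← two_smul ℝ, map_smul_eq_mul, hpa] at hpab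
    norm_num at hpab
  obtain ⟨D, hD₀, hD, hμ⟩ := exists_measure_seminorm_closedBall_eq μ hE
    (linearIndependent_pair_of_map_eq_one φ hne hφa hφb)
  set α : ℝ → ℝ := fun w => p (AffineMap.lineMap a b w)
  have hα : ConvexOn ℝ univ α := p.convexOn.comp_affineMap (AffineMap.lineMap a b)
  have hα₀ : α 0 = 1 := by simpa [α] using hpa
  have hα₁ : α 1 = 1 := by simpa [α] using hpb
  have hmid : α (1 / 2) < 1 := by
    have hα_mid : α (1 / 2) = p (a + b) / 2 := by
      simp only [α, lineMap_one_half, midpoint_eq_smul_add, invOf_eq_inv, map_smul_eq_mul]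
      norm_num
      ring
    linarith
  have hline (t w : ℝ) : (p ⊔ (φ + t • ψ).toSeminorm) (AffineMap.lineMap a b w)
      = max (α w) |1 + t * AffineMap.lineMap (ψ a) (ψ b) w| := by
    simp [α, AffineMap.lineMap_apply_module, hφa, hφb]
  obtain ⟨η, hη, hle⟩ := exists_eventually_mul_one_add_abs_le_max hα hα₀ hα₁ hmid (ψ a) (ψ b)
  have hvol : ∀ᶠ t : ℝ in 𝓝 0, μ ((p ⊔ (φ + t • ψ).toSeminorm).closedBall 0 1) =
      D * ∫⁻ w, ENNReal.ofReal
        ((max (α w) |1 + t * AffineMap.lineMap (ψ a) (ψ b) w|)⁻¹ ^ 2) := by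
    filter_upwards [hle] with t ht
    simp only [hμ _ fun w => hline t w ▸ lt_of_lt_of_le (by positivity) (ht w), hline]
  refine add_eq_zero_of_isLocalMax_lintegral hα hα₀ hα₁ hmid ?_
  filter_upwards [hmax, hvol] with t ht hvol_t
  rwa [hvol_t, hvol.self_of_nhds, ENNReal.mul_le_mul_iff_right hD₀ hD] at ht

theorem measure_eq_two_mul_add_of_eq_neg {G : Type*} [InvolutiveNeg G] [MeasurableSpace G]
    [MeasurableNeg G] (μ : Measure G) [μ.IsNegInvariant] {M U : Set G} (hM : M = -M)
    (hU : MeasurableSet U) (hdisj : Disjoint U (-U)) : μ M = 2 * μ (M ∩ U) + μ (M \ (U ∪ -U)) := by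
  have hneg : μ ((M \ U) ∩ -U) = μ (M ∩ U) := by
    rw [← Measure.measure_neg μ (M ∩ U), inter_neg, ← hM, ← inter_sdiff_right_comm,
      (hdisj.symm.mono_left inter_subset_right).sdiff_eq_left]
  rw [← measure_inter_add_sdiff M hU, ← measure_inter_add_sdiff (M \ U) hU.neg, hneg,
    Set.sdiff_sdiff, two_mul, add_assoc]

theorem affineMap_neg_apply {E : Type*} [AddCommGroup E] [Module ℝ E] (f : E →ᵃ[ℝ] ℝ) (x : E) :
    f (-x) = 2 * f 0 - f x := by
  have := f.map_midpoint x (-x)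
  rw [midpoint_self_neg, midpoint_eq_smul_add, smul_eq_mul, invOf_eq_inv] at this
  linarith

section Shear

variable {E : Type*} [NormedAddCommGroup E] [NormedSpace ℝ E] [FiniteDimensional ℝ E]
  [MeasurableSpace E] [BorelSpace E] (μ : Measure E) [μ.IsAddHaarMeasure]

theorem measure_shear_image {f : E →ᵃ[ℝ] ℝ} {u : E} (hu : f.linear u = 0) (s : Set E) :
    μ ((fun x => x + f x • u) '' s) = μ s := by
  have hshear : (fun x => x + f x • u)
      = (fun x => x + f 0 • u) ∘ LinearMap.transvection f.linear u := by
    ext x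
    simp only [Function.comp_apply, LinearMap.transvection.apply]
    rw [congrFun f.decomp x]
    simp only [Pi.add_apply, add_smul, add_assoc]
  rw [hshear, image_comp, image_add_right, measure_preimage_add_right,
    Measure.addHaar_image_linearMap, LinearMap.transvection.det, hu]
  simp

theorem measure_le_of_shear {K L : Set E} (hK : K = -K) (hL : L = -L) {f : E →ᵃ[ℝ] ℝ} {u : E}
    (hu : f.linear u = 0) (hf₀ : f 0 ≤ 0)
    (hstrip : ∀ x ∈ K, f x ≤ 0 → f (-x) ≤ 0 → x ∈ L)
    (hcap : ∀ x ∈ K, 0 < f x → x + f x • u ∈ L) : μ K ≤ μ L := by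
  set U : Set E := {x | 0 < f x}
  have hU : MeasurableSet U :=
    (isOpen_lt continuous_const f.continuous_of_finiteDimensional).measurableSet
  have hdisj : Disjoint U (-U) := by
    rw [disjoint_left]
    intro x (hx : 0 < f x) (hx' : 0 < f (-x))
    rw [affineMap_neg_apply] at hx'
    linarith
  have hshear : (fun x => x + f x • u) '' (K ∩ U) ⊆ L ∩ U := by
    rintro _ ⟨x, ⟨hxK, hxU⟩, rfl⟩
    refine ⟨hcap x hxK hxU, ?_⟩
    have : f (f x • u + x) = f x := by
      rw [← vadd_eq_add, f.map_vadd, map_smul, hu, smul_zero, zero_vadd]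
    simpa [U, add_comm x, this] using hxU
  have hrest : K \ (U ∪ -U) ⊆ L \ (U ∪ -U) := by
    rintro x ⟨hxK, hx⟩
    refine ⟨hstrip x hxK ?_ ?_, hx⟩
    · exact not_lt.1 fun h => hx (.inl h)
    · exact not_lt.1 fun h => hx (.inr h)
  rw [measure_eq_two_mul_add_of_eq_neg μ hK hU hdisj,
    measure_eq_two_mul_add_of_eq_neg μ hL hU hdisj, ← measure_shear_image μ hu (K ∩ U)]
  gcongr

end Shear

section SymmHull

variable {E : Type*} [AddCommGroup E] [Module ℝ E]

/-- The centrally symmetric convex body `conv (R ∪ {z, -z})`. The set `R = -R` is meant to consist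
of the vertices that stay fixed while the opposite vertices `z` and `-z` move. -/
def symmHull (R : Set E) (z : E) : Set E := convexHull ℝ (insert z (insert (-z) R))

theorem symmHull_eq_neg {R : Set E} (hR : R = -R) (z : E) : symmHull R z = -symmHull R z := by
  rw [symmHull, ← convexHull_neg, neg_insert, neg_insert, neg_neg, ← hR, insert_comm]

end SymmHull

section SimpleVertex

variable {ι E : Type*} [AddCommGroup E] [Module ℝ E]

/-- The point `b i` is a simple vertex of the centrally symmetric polytope `conv (R ∪ {b i, -b i})`,
where `R` is the set of vertices other than `±b i` and the points `b j` with `j ≠ i` are the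
neighbours of `b i`: the polytope lies in the simplicial cone with apex `b i` spanned by its
neighbours, and the hyperplane through these neighbours cuts `b i` off from `R`. -/
structure IsSimpleVertex (b : AffineBasis ι ℝ E) (i : ι) (R : Set E) : Prop where
  eq_neg : R = -R
  neighbour_mem : ∀ j ≠ i, b j ∈ R
  coord_nonneg : ∀ j ≠ i, ∀ x ∈ R, 0 ≤ b.coord j x
  coord_nonpos : ∀ x ∈ R, b.coord i x ≤ 0
  coord_zero_pos : ∀ j ≠ i, 0 < b.coord j 0

variable {b : AffineBasis ι ℝ E} {i : ι} {R : Set E}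

theorem IsSimpleVertex.coord_self_zero_nonpos [Nontrivial ι] (h : IsSimpleVertex b i R) :
    b.coord i 0 ≤ 0 := by
  obtain ⟨j, hj⟩ := exists_ne i
  have hneg : -b j ∈ R := by
    rw [h.eq_neg]
    simpa using h.neighbour_mem j hj
  have := h.coord_nonpos _ hneg
  rw [affineMap_neg_apply, b.coord_apply_ne hj.symm] at this
  linarith

theorem IsSimpleVertex.ne_neg [Nontrivial ι] (h : IsSimpleVertex b i R) : b i ≠ -b i := by
  obtain ⟨j, hj⟩ := exists_ne i
  intro hi
  have hcoord := congrArg (b.coord j) hi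
  rw [affineMap_neg_apply, b.coord_apply_ne hj] at hcoord
  linarith [h.coord_zero_pos j hj]

theorem coord_linear_sub_eq_zero {j k : ι} (hj : i ≠ j) (hk : i ≠ k) :
    (b.coord i).linear (b j - b k) = 0 := by
  rw [← vsub_eq_sub, AffineMap.linearMap_vsub, b.coord_apply_ne hj, b.coord_apply_ne hk, vsub_self]

theorem convex_coord_nonneg (b : AffineBasis ι ℝ E) (i : ι) : Convex ℝ {x | 0 ≤ b.coord i x} :=
  (convex_Ici (0 : ℝ)).affine_preimage (b.coord i)

theorem convex_coord_nonpos (b : AffineBasis ι ℝ E) (i : ι) : Convex ℝ {x | b.coord i x ≤ 0} :=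
  (convex_Iic (0 : ℝ)).affine_preimage (b.coord i)

theorem IsSimpleVertex.coord_nonneg_of_mem_symmHull (h : IsSimpleVertex b i R) {j : ι} (hj : j ≠ i)
    {x : E} (hx : x ∈ symmHull R (b i)) : 0 ≤ b.coord j x := by
  refine convexHull_min ?_ (convex_coord_nonneg b j) hx
  rintro y (rfl | rfl | hy)
  · exact (b.coord_apply_ne hj).ge
  · change 0 ≤ b.coord j (-b i)
    rw [affineMap_neg_apply, b.coord_apply_ne hj]
    linarith [h.coord_zero_pos j hj]
  · exact h.coord_nonneg j hj y hy

theorem inv_smul_sub_mem_convexHull [Finite ι] {T : Set E} (hmem : ∀ j ≠ i, b j ∈ T) {q : E}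
    (hnonneg : ∀ j ≠ i, 0 ≤ b.coord j q) (hnonpos : b.coord i q ≤ 0) :
    (1 - b.coord i q)⁻¹ • (q - b.coord i q • b i) ∈ convexHull ℝ T := by
  classical
  cases nonempty_fintype ι
  have hweights : ∑ j ∈ Finset.univ.erase i, b.coord j q = 1 - b.coord i q := by
    rw [Finset.sum_erase_eq_sub (Finset.mem_univ i), b.sum_coord_apply_eq_one]
  have hcenter : ∑ j ∈ Finset.univ.erase i, b.coord j q • b j = q - b.coord i q • b i := by
    rw [Finset.sum_erase_eq_sub (Finset.mem_univ i), b.linear_combination_coord_eq_self]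
  have := (Finset.univ.erase i).centerMass_mem_convexHull (w := fun j => b.coord j q) (z := b)
    (fun j hj => hnonneg j (Finset.ne_of_mem_erase hj)) (by linarith)
    (fun j hj => hmem j (Finset.ne_of_mem_erase hj))
  rwa [Finset.centerMass, hweights, hcenter] at this

theorem mem_convexHull_of_coord_nonpos [Finite ι] {T : Set E} (hmem : ∀ j ≠ i, b j ∈ T)
    (hnonneg : ∀ j ≠ i, ∀ x ∈ T, 0 ≤ b.coord j x) (hnonpos : ∀ x ∈ T, b.coord i x ≤ 0) {x : E}
    (hx : x ∈ convexHull ℝ (insert (b i) T)) (hxi : b.coord i x ≤ 0) : x ∈ convexHull ℝ T := by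
  rcases T.eq_empty_or_nonempty with rfl | hT
  · obtain rfl : x = b i := by simpa using hx
    rw [b.coord_apply_eq] at hxi
    linarith
  rw [convexHull_insert hT, convexJoin_singleton_left, mem_iUnion₂] at hx
  obtain ⟨q, hq, s, t, hs, ht, hst, rfl⟩ := hx
  obtain rfl : t = 1 - s := by linarith
  rcases hs.eq_or_lt with rfl | hs
  · simpa using hq
  have hqi : b.coord i q ≤ 0 := convexHull_min hnonpos (convex_coord_nonpos b i) hq
  have hr := inv_smul_sub_mem_convexHull hmem
    (fun j hj => convexHull_min (hnonneg j hj) (convex_coord_nonneg b j) hq) hqi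
  set c := b.coord i q
  have hxi_eq : b.coord i (s • b i + (1 - s) • q) = s + (1 - s) * c := by
    rw [Convex.combo_affine_apply hst, b.coord_apply_eq]
    simp [c]
  rw [hxi_eq] at hxi
  have hc : c < 0 := by nlinarith
  have hx_eq : s • b i + (1 - s) • q
      = (s * (1 - c) / -c) • (1 - c)⁻¹ • (q - c • b i) + (1 - s * (1 - c) / -c) • q := by
    have hc₀ := hc.ne
    have hc₁ : 1 - c ≠ 0 := by linarith
    match_scalars
    · field_simp
    · field_simp
      ring
  rw [hx_eq]
  refine convex_convexHull ℝ T hr hq (div_nonneg ?_ ?_) (sub_nonneg.2 ((div_le_one ?_).2 ?_)) ?_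
  · nlinarith
  all_goals linarith

theorem IsSimpleVertex.mem_convexHull [Finite ι] [Nontrivial ι] (h : IsSimpleVertex b i R) {x : E}
    (hx : x ∈ symmHull R (b i)) (hxi : b.coord i x ≤ 0) (hxi' : b.coord i (-x) ≤ 0) :
    x ∈ convexHull ℝ R := by
  have h₀ := h.coord_self_zero_nonpos
  have hx' : x ∈ convexHull ℝ (insert (-b i) R) := by
    refine mem_convexHull_of_coord_nonpos (fun j hj => .inr (h.neighbour_mem j hj)) ?_ ?_ hx hxi
    · exact fun j hj y hy => h.coord_nonneg_of_mem_symmHull hj (subset_convexHull _ _ (.inr hy))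
    · rintro y (rfl | hy)
      · rw [affineMap_neg_apply, b.coord_apply_eq]
        linarith
      · exact h.coord_nonpos y hy
  rw [h.eq_neg, convexHull_neg]
  refine mem_convexHull_of_coord_nonpos h.neighbour_mem h.coord_nonneg h.coord_nonpos ?_ hxi'
  rw [← Set.mem_neg, ← convexHull_neg, neg_insert]
  simpa [← h.eq_neg] using hx'

theorem IsSimpleVertex.add_smul_mem_symmHull [Finite ι] (h : IsSimpleVertex b i R) {x : E}
    (hx : x ∈ symmHull R (b i)) (hxi : 0 ≤ b.coord i x) (u : E) :
    x + b.coord i x • u ∈ symmHull R (b i + u) := by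
  classical
  cases nonempty_fintype ι
  have hsum : x + b.coord i x • u = ∑ j, b.coord j x • Function.update b i (b i + u) j := by
    have hupdate (j : ι) : b.coord j x • Function.update b i (b i + u) j
        = b.coord j x • b j + if j = i then b.coord i x • u else 0 := by
      rcases eq_or_ne j i with rfl | hj
      · simp
      · simp [hj]
    simp only [hupdate, Finset.sum_add_distrib, b.linear_combination_coord_eq_self,
      Finset.sum_ite_eq', Finset.mem_univ, if_true]
  rw [hsum]
  refine (convex_convexHull ℝ _).sum_mem (fun j _ => ?_) (b.sum_coord_apply_eq_one x) fun j _ => ?_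
  · rcases eq_or_ne j i with rfl | hj
    · exact hxi
    · exact h.coord_nonneg_of_mem_symmHull hj hx
  · refine subset_convexHull _ _ ?_
    rcases eq_or_ne j i with rfl | hj
    · simp
    · simpa [hj] using .inr (.inr (h.neighbour_mem j hj))

end SimpleVertex

theorem IsSimpleVertex.measure_symmHull_le {ι E : Type*} [Finite ι] [Nontrivial ι]
    [NormedAddCommGroup E] [NormedSpace ℝ E] [MeasurableSpace E] [BorelSpace E] (μ : Measure E)
    [μ.IsAddHaarMeasure] {b : AffineBasis ι ℝ E} {i : ι} {R : Set E} (h : IsSimpleVertex b i R)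
    {u : E} (hu : (b.coord i).linear u = 0) :
    μ (symmHull R (b i)) ≤ μ (symmHull R (b i + u)) := by
  have := b.finiteDimensional
  refine measure_le_of_shear μ (symmHull_eq_neg h.eq_neg _) (symmHull_eq_neg h.eq_neg _) hu
    h.coord_self_zero_nonpos (fun x hx hxi hxi' => ?_)
    (fun x hx hxi => h.add_smul_mem_symmHull hx hxi.le u)
  exact convexHull_mono ((subset_insert _ _).trans (subset_insert _ _))
    (h.mem_convexHull hx hxi hxi')

section ExtremePoints

variable {ι E : Type*} [AddCommGroup E] [Module ℝ E] {K : Set E}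

theorem affineIndependent_of_mem_extremePoints {x₁ x₂ x₃ : E} (hx₁ : x₁ ∈ K.extremePoints ℝ)
    (hx₂ : x₂ ∈ K.extremePoints ℝ) (hx₃ : x₃ ∈ K.extremePoints ℝ) (h₁₂ : x₁ ≠ x₂)
    (h₂₃ : x₂ ≠ x₃) (h₁₃ : x₁ ≠ x₃) : AffineIndependent ℝ ![x₁, x₂, x₃] := by
  rw [affineIndependent_iff_not_collinear_set]
  intro hcol
  rw [mem_extremePoints_iff_forall_segment] at hx₁ hx₂ hx₃
  rcases hcol.wbtw_or_wbtw_or_wbtw with h | h | h <;> rw [← mem_segment_iff_wbtw] at h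
  · exact (hx₂.2 _ hx₁.1 _ hx₃.1 h).elim h₁₂ h₂₃.symm
  · exact (hx₃.2 _ hx₂.1 _ hx₁.1 h).elim h₂₃ h₁₃
  · exact (hx₁.2 _ hx₃.1 _ hx₂.1 h).elim h₁₃.symm h₁₂.symm

theorem coord_nonpos_of_mem_extremePoints [Finite ι] (hK : Convex ℝ K) {b : AffineBasis ι ℝ E}
    (hb : ∀ j, b j ∈ K) {i : ι} {x : E} (hx : x ∈ K.extremePoints ℝ) (hxi : x ≠ b i)
    (hnonneg : ∀ j ≠ i, 0 ≤ b.coord j x) : b.coord i x ≤ 0 := by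
  by_contra! hpos
  have hmem : x ∈ convexHull ℝ (range b) := by
    rw [b.convexHull_eq_nonneg_coord]
    intro j
    rcases eq_or_ne j i with rfl | hj
    exacts [hpos.le, hnonneg j hj]
  have hext := inter_extremePoints_subset_extremePoints_of_subset
    (convexHull_min (range_subset_iff.2 hb) hK) ⟨hmem, hx⟩
  obtain ⟨j, rfl⟩ := extremePoints_convexHull_subset hext
  rw [b.coord_apply_ne fun hij => hxi (congrArg b hij.symm)] at hpos
  exact hpos.false

theorem extremePoints_eq_neg (hK : K = -K) : K.extremePoints ℝ = -K.extremePoints ℝ := by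
  conv_lhs => rw [hK]
  simpa using (image_extremePoints (LinearEquiv.neg ℝ) K).symm

theorem neg_mem_extremePoints_s2 (hK : K = -K) {x : E} (hx : x ∈ K.extremePoints ℝ) :
    -x ∈ K.extremePoints ℝ := by
  rwa [extremePoints_eq_neg hK, Set.neg_mem_neg]

end ExtremePoints

section Frontier

variable {ι E : Type*} [Finite ι] [NormedAddCommGroup E] [NormedSpace ℝ E] {K : Set E}
  {b : AffineBasis ι ℝ E} {i : ι} {m : E}

theorem coord_pos_of_mem_interior (hK : Convex ℝ K) (hb : ∀ j, b j ∈ K) (hm : m ∉ interior K)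
    (hmi : b.coord i m = 0) (hmj : ∀ j ≠ i, 0 < b.coord j m) {x : E} (hx : x ∈ interior K) :
    0 < b.coord i x := by
  classical
  cases nonempty_fintype ι
  obtain ⟨f, hf⟩ := geometric_hahn_banach_open_point hK.interior isOpen_interior hm
  have hfK (y : E) (hy : y ∈ K) : f y ≤ f m := by
    refine closure_minimal (t := {y | f y ≤ f m}) (fun y hy => (hf y hy).le)
      (isClosed_le f.continuous continuous_const) ?_
    rw [hK.closure_interior_eq_closure_of_nonempty_interior ⟨x, hx⟩]
    exact subset_closure hy
  have hf_sub (y : E) : f m - f y = ∑ j, b.coord j y * (f m - f (b j)) := by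
    conv_lhs => rw [← b.linear_combination_coord_eq_self y]
    simp only [mul_sub, Finset.sum_sub_distrib, ← Finset.sum_mul, b.sum_coord_apply_eq_one, one_mul,
      map_sum, map_smul, smul_eq_mul]
  have hterm_nonneg (j : ι) : 0 ≤ b.coord j m * (f m - f (b j)) := by
    refine mul_nonneg ?_ (sub_nonneg.2 (hfK _ (hb j)))
    rcases eq_or_ne j i with rfl | hj
    exacts [hmi.ge, (hmj j hj).le]
  have hfb (j : ι) (hj : j ≠ i) : f m - f (b j) = 0 := by
    have hzero := hf_sub m
    rw [sub_self, eq_comm, Finset.sum_eq_zero_iff_of_nonneg fun j _ => hterm_nonneg j] at hzero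
    exact (mul_eq_zero.1 (hzero j (Finset.mem_univ j))).resolve_left (hmj j hj).ne'
  have hx_pos : 0 < b.coord i x * (f m - f (b i)) := by
    rw [← Fintype.sum_eq_single (f := fun j => b.coord j x * (f m - f (b j))) i
      fun j hj => by rw [hfb j hj, mul_zero], ← hf_sub]
    exact sub_pos.2 (hf x hx)
  exact pos_of_mul_pos_left hx_pos (sub_nonneg.2 (hfK _ (hb i)))

theorem coord_nonneg_of_mem (hK : Convex ℝ K) (h_int : (interior K).Nonempty) (hb : ∀ j, b j ∈ K)
    (hm : m ∉ interior K) (hmi : b.coord i m = 0) (hmj : ∀ j ≠ i, 0 < b.coord j m) {x : E}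
    (hx : x ∈ K) : 0 ≤ b.coord i x := by
  have := b.finiteDimensional
  refine closure_minimal (t := {y | 0 ≤ b.coord i y})
    (fun y hy => (coord_pos_of_mem_interior hK hb hm hmi hmj hy).le)
    (isClosed_le continuous_const (b.coord i).continuous_of_finiteDimensional) ?_
  rw [hK.closure_interior_eq_closure_of_nonempty_interior h_int]
  exact subset_closure hx

theorem isSimpleVertex_extremePoints (hK : Convex ℝ K) (hsym : K = -K) (h0 : (0 : E) ∈ interior K)
    (hb : ∀ j, b j ∈ K.extremePoints ℝ) (hι : ∀ j, ∃ k, k ≠ i ∧ k ≠ j)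
    (hfacet : ∀ j ≠ i, ∃ m ∉ interior K, b.coord j m = 0 ∧ ∀ k ≠ j, 0 < b.coord k m) :
    IsSimpleVertex b i (K.extremePoints ℝ \ {b i, -b i}) := by
  have hbK (j : ι) : b j ∈ K := extremePoints_subset (hb j)
  have hpos (j : ι) (hj : j ≠ i) : 0 < b.coord j 0 := by
    obtain ⟨m, hm, hmj, hmk⟩ := hfacet j hj
    exact coord_pos_of_mem_interior hK hbK hm hmj hmk h0
  have hnonneg (j : ι) (hj : j ≠ i) (x : E) (hx : x ∈ K) : 0 ≤ b.coord j x := by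
    obtain ⟨m, hm, hmj, hmk⟩ := hfacet j hj
    exact coord_nonneg_of_mem hK ⟨0, h0⟩ hbK hm hmj hmk hx
  refine ⟨?_, fun j hj => ⟨hb j, ?_⟩, fun j hj x hx => hnonneg j hj x (extremePoints_subset hx.1),
    fun x hx => ?_, hpos⟩
  · conv_lhs => rw [extremePoints_eq_neg hsym]
    ext x
    simp [neg_eq_iff_eq_neg, or_comm]
  · rintro (hji | hji)
    · exact hj (b.ind.injective hji)
    · obtain ⟨k, hki, hkj⟩ := hι j
      have hk := congrArg (b.coord k) (mem_singleton_iff.1 hji)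
      rw [affineMap_neg_apply, b.coord_apply_ne hki, b.coord_apply_ne hkj] at hk
      linarith [hpos k hki]
  · refine coord_nonpos_of_mem_extremePoints hK hbK hx.1 (fun hxi => hx.2 (.inl hxi)) fun j hj => ?_
    exact hnonneg j hj x (extremePoints_subset hx.1)

end Frontier

theorem zero_mem_interior_of_measure_pos {E : Type*} [NormedAddCommGroup E] [NormedSpace ℝ E]
    [MeasurableSpace E] [BorelSpace E] [FiniteDimensional ℝ E] (μ : Measure E)
    [μ.IsAddHaarMeasure] {L : Set E} (hL : Convex ℝ L) (hsym : L = -L) (hμ : 0 < μ L) :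
    (0 : E) ∈ interior L := by
  obtain ⟨x, hx⟩ : (interior L).Nonempty := by
    by_contra! hempty
    have hsub : L ⊆ frontier L := fun x hx => ⟨subset_closure hx, by simp [hempty]⟩
    exact hμ.ne' (measure_mono_null hsub (hL.addHaar_frontier μ))
  have hneg : -x ∈ L := by
    rw [hsym]
    simpa using interior_subset hx
  refine hL.openSegment_interior_self_subset_interior hx hneg ?_
  exact ⟨1 / 2, 1 / 2, by norm_num, by norm_num, by norm_num, by simp⟩

section SupportSeminorm

variable {E : Type*} [NormedAddCommGroup E] [InnerProductSpace ℝ E]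

/-- The support function of the centrally symmetric polytope `conv (F ∪ -F)`. Its closed unit ball
is the polar body of this polytope. -/
def supportSeminorm (F : Finset E) : Seminorm ℝ E := F.sup fun x => (innerₗ E x).toSeminorm

variable {F : Finset E} {x y : E} {r : ℝ}

theorem inner_le_supportSeminorm (hx : x ∈ F) : ⟪x, y⟫ ≤ supportSeminorm F y :=
  (le_abs_self _).trans
    (Seminorm.le_finset_sup_apply (p := fun x => (innerₗ E x).toSeminorm) hx)

theorem exists_mem_abs_inner_eq (hF : (F : Set E) = -F) (hx : x ∈ F) (y : E) :
    ∃ x' ∈ F, |⟪x, y⟫| = ⟪x', y⟫ := by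
  rcases abs_choice ⟪x, y⟫ with h | h
  · exact ⟨x, hx, h⟩
  · refine ⟨-x, ?_, by rw [h, inner_neg_left]⟩
    rwa [← Finset.mem_coe, hF, Set.neg_mem_neg]

theorem supportSeminorm_le_iff (hF : (F : Set E) = -F) (hr : 0 ≤ r) :
    supportSeminorm F y ≤ r ↔ ∀ x ∈ F, ⟪x, y⟫ ≤ r := by
  refine ⟨fun h x hx => (inner_le_supportSeminorm hx).trans h,
    fun h => Seminorm.finset_sup_apply_le hr fun x hx => ?_⟩
  obtain ⟨x', hx', habs⟩ := exists_mem_abs_inner_eq hF hx y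
  exact habs.trans_le (h x' hx')

theorem supportSeminorm_lt (hF : (F : Set E) = -F) (hr : 0 < r) (h : ∀ x ∈ F, ⟪x, y⟫ < r) :
    supportSeminorm F y < r := by
  refine Seminorm.finset_sup_apply_lt hr fun x hx => ?_
  obtain ⟨x', hx', habs⟩ := exists_mem_abs_inner_eq hF hx y
  exact habs.trans_lt (h x' hx')

theorem IsSimpleVertex.supportSeminorm_eq_one {ι : Type*} {b : AffineBasis ι ℝ E} {i j k : ι}
    (h : IsSimpleVertex b i (F : Set E)) (hj : j ≠ i) (hk : k ≠ i) (hkj : k ≠ j)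
    (hy : ∀ x, ⟪x, y⟫ = 1 - b.coord j x / b.coord j 0) : supportSeminorm F y = 1 := by
  refine le_antisymm ((supportSeminorm_le_iff h.eq_neg zero_le_one).2 fun x hx => ?_) ?_
  · rw [hy]
    exact sub_le_self _ (div_nonneg (h.coord_nonneg j hj x hx) (h.coord_zero_pos j hj).le)
  · have hbk : ⟪b k, y⟫ = 1 := by rw [hy, b.coord_apply_ne hkj.symm, zero_div, sub_zero]
    exact hbk ▸ inner_le_supportSeminorm (h.neighbour_mem k hk)

end SupportSeminorm

theorem polarBody_symmHull {F : Finset E2} (hF : (F : Set E2) = -F) (z : E2) :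
    polarBody (symmHull F z) =
      (supportSeminorm F ⊔ (innerₗ E2 z).toSeminorm).closedBall 0 1 := by
  ext y
  have hhull : y ∈ polarBody (symmHull F z) ↔
      ∀ x ∈ insert z (insert (-z) (F : Set E2)), ⟪x, y⟫ ≤ 1 := by
    refine ⟨fun h x hx => h x (subset_convexHull ℝ _ hx), fun h x hx => ?_⟩
    exact convexHull_min h (convex_halfSpace_le ((innerₗ E2).flip y).isLinear 1) hx
  have hball : y ∈ (supportSeminorm F ⊔ (innerₗ E2 z).toSeminorm).closedBall 0 1 ↔
      (∀ x ∈ F, ⟪x, y⟫ ≤ 1) ∧ |⟪z, y⟫| ≤ 1 := by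
    simp [Seminorm.mem_closedBall, supportSeminorm_le_iff hF]
  rw [hhull, hball, abs_le', forall_mem_insert, forall_mem_insert, inner_neg_left]
  simp only [Finset.mem_coe]
  tauto

theorem exists_forall_inner_eq_one_sub_div {E : Type*} [NormedAddCommGroup E]
    [InnerProductSpace ℝ E] [FiniteDimensional ℝ E] {f : E →ᵃ[ℝ] ℝ} (hf : f 0 ≠ 0) :
    ∃ a : E, ∀ x, ⟪x, a⟫ = 1 - f x / f 0 := by
  refine ⟨(InnerProductSpace.toDual ℝ E).symm (-(f 0)⁻¹ • f.linear.toContinuousLinearMap),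
    fun x => ?_⟩
  have hlin : f.linear x = f x - f 0 := by simpa using f.linearMap_vsub x 0
  rw [real_inner_comm, InnerProductSpace.toDual_symm_apply]
  simp only [smul_apply, LinearMap.coe_toContinuousLinearMap', hlin, smul_eq_mul]
  field_simp
  ring

theorem IsSimpleVertex.coord_zero_eq {b : AffineBasis (Fin 3) ℝ E2} {F : Finset E2}
    (h : IsSimpleVertex b 1 (F : Set E2))
    (hmax : ∀ t : ℝ, volume (polarBody (symmHull F (b 1 + t • (b 2 - b 0)))) ≤
      volume (polarBody (symmHull F (b 1)))) :
    b.coord 0 0 = b.coord 2 0 := by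
  have hc₀ := h.coord_zero_pos 0 (by decide)
  have hc₂ := h.coord_zero_pos 2 (by decide)
  -- The vertices of the polar body dual to the edges `b 0, b 1` and `b 1, b 2`.
  obtain ⟨a, ha⟩ := exists_forall_inner_eq_one_sub_div hc₂.ne'
  obtain ⟨a', ha'⟩ := exists_forall_inner_eq_one_sub_div hc₀.ne'
  have haa' : supportSeminorm F (a + a') < 2 := by
    refine supportSeminorm_lt h.eq_neg two_pos fun x hx => ?_
    have hsum := b.sum_coord_apply_eq_one x
    rw [Fin.sum_univ_three] at hsum
    have hx₀ := h.coord_nonneg 0 (by decide) x hx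
    have hx₂ := h.coord_nonneg 2 (by decide) x hx
    have hpos : 0 < b.coord 2 x / b.coord 2 0 + b.coord 0 x / b.coord 0 0 := by
      rcases hx₀.eq_or_lt with hx₀ | hx₀
      · have : 0 < b.coord 2 x := by linarith [h.coord_nonpos x hx]
        rw [← hx₀]
        positivity
      · positivity
    rw [inner_add_right, ha, ha']
    linarith
  have hfirst := map_add_map_eq_zero_of_isLocalMax volume finrank_euclideanSpace_fin
    (supportSeminorm F) (innerₗ E2 (b 1)) (innerₗ E2 (b 2) - innerₗ E2 (b 0))
    (h.supportSeminorm_eq_one (by decide) (k := 0) (by decide) (by decide) ha)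
    (h.supportSeminorm_eq_one (by decide) (k := 2) (by decide) (by decide) ha') haa'
    (by simp [ha]) (by simp [ha'])
    (.of_forall fun t => by simpa [polarBody_symmHull h.eq_neg] using hmax t)
  have hinv : (b.coord 0 0)⁻¹ - (b.coord 2 0)⁻¹ = 0 := by
    simpa [ha, ha', ← sub_eq_add_neg, neg_add_eq_sub] using hfirst
  exact inv_injective (sub_eq_zero.1 hinv)

theorem collinear_zero_midpoint_of_coord_zero_eq {E : Type*} [AddCommGroup E] [Module ℝ E]
    {b : AffineBasis (Fin 3) ℝ E} (hpos : 0 < b.coord 0 0) (heq : b.coord 0 0 = b.coord 2 0) :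
    Collinear ℝ {(0 : E), (2 : ℝ)⁻¹ • (b 0 + b 2), b 1} := by
  have hzero := b.linear_combination_coord_eq_self 0
  rw [Fin.sum_univ_three, ← heq] at hzero
  rw [collinear_iff_of_mem (p₀ := 0) (by simp)]
  refine ⟨b 1, ?_⟩
  rintro p (rfl | rfl | rfl)
  · exact ⟨0, by simp⟩
  · refine ⟨-b.coord 1 0 / (2 * b.coord 0 0), ?_⟩
    have hne := hpos.ne'
    rw [vadd_eq_add, add_zero]
    linear_combination (norm := (match_scalars <;> field_simp <;> ring_nf))
      (2 * b.coord 0 0)⁻¹ • hzero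
  · exact ⟨1, by simp⟩

theorem exists_affineBasis_of_mem_extremePoints {E : Type*} [AddCommGroup E] [Module ℝ E]
    (hE : Module.finrank ℝ E = 2) {K : Set E} {x₁ x₂ x₃ : E} (hx₁ : x₁ ∈ K.extremePoints ℝ)
    (hx₂ : x₂ ∈ K.extremePoints ℝ) (hx₃ : x₃ ∈ K.extremePoints ℝ) (h₁₂ : x₁ ≠ x₂)
    (h₂₃ : x₂ ≠ x₃) (h₁₃ : x₁ ≠ x₃) :
    ∃ b : AffineBasis (Fin 3) ℝ E, b 0 = x₁ ∧ b 1 = x₂ ∧ b 2 = x₃ := by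
  have := Module.finite_of_finrank_eq_succ hE
  have hind := affineIndependent_of_mem_extremePoints hx₁ hx₂ hx₃ h₁₂ h₂₃ h₁₃
  refine ⟨⟨_, hind, ?_⟩, rfl, rfl, rfl⟩
  rw [hind.affineSpan_eq_top_iff_card_eq_finrank_add_one, hE, Fintype.card_fin]

theorem isSimpleVertex_of_segment_subset_frontier {E : Type*} [NormedAddCommGroup E]
    [NormedSpace ℝ E] {K : Set E} (hK : Convex ℝ K) (hsym : K = -K) (h0 : (0 : E) ∈ interior K)
    {b : AffineBasis (Fin 3) ℝ E} (hb : ∀ j, b j ∈ K.extremePoints ℝ)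
    (h₀₁ : segment ℝ (b 0) (b 1) ⊆ frontier K) (h₁₂ : segment ℝ (b 1) (b 2) ⊆ frontier K) :
    IsSimpleVertex b 1 (K.extremePoints ℝ \ {b 1, -b 1}) := by
  have hfacet (j k l : Fin 3) (hjk : j ≠ k) (hjl : j ≠ l) (hkl : ∀ i ≠ j, i = k ∨ i = l)
      (hseg : segment ℝ (b k) (b l) ⊆ frontier K) :
      ∃ m ∉ interior K, b.coord j m = 0 ∧ ∀ i ≠ j, 0 < b.coord i m := by
    have hmid (i : Fin 3) : b.coord i (midpoint ℝ (b k) (b l)) =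
        midpoint ℝ (b.coord i (b k)) (b.coord i (b l)) :=
      (b.coord i).map_midpoint _ _
    refine ⟨midpoint ℝ (b k) (b l), (hseg (midpoint_mem_segment _ _)).2, ?_, fun i hij => ?_⟩
    · rw [hmid, b.coord_apply_ne hjk, b.coord_apply_ne hjl, midpoint_self]
    · rw [hmid]
      rcases hkl i hij with rfl | rfl <;>
        rw [b.coord_apply_eq, b.coord_apply, midpoint_eq_smul_add] <;> split_ifs <;> simp
  refine isSimpleVertex_extremePoints hK hsym h0 hb (by decide) fun j hj => ?_
  fin_cases j
  · exact hfacet 0 1 2 (by decide) (by decide) (by decide) h₁₂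
  · exact absurd rfl hj
  · exact hfacet 2 0 1 (by decide) (by decide) (by decide) h₀₁

theorem symmHull_extremePoints_diff {E : Type*} [AddCommGroup E] [Module ℝ E] {K : Set E}
    (hsym : K = -K) {z : E} (hz : z ∈ K.extremePoints ℝ) :
    symmHull (K.extremePoints ℝ \ {z, -z}) z = convexHull ℝ (K.extremePoints ℝ) := by
  rw [symmHull, ← singleton_union, ← singleton_union, ← union_assoc, singleton_union,
    union_sdiff_cancel (pair_subset hz (neg_mem_extremePoints_s2 hsym hz))]

theorem exists_finset_card_le_symmHull_eq {E : Type*} [AddCommGroup E] [Module ℝ E]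
    [DecidableEq E] {S : Finset E} {z : E} (hz : z ∈ S) (hz' : -z ∈ S) (hne : z ≠ -z) (z' : E) :
    ∃ T : Finset E, T.card ≤ S.card ∧
      symmHull (S \ {z, -z} : Finset E) z' = convexHull ℝ (T : Set E) := by
  refine ⟨insert z' (insert (-z') (S \ {z, -z})), ?_, by simp [symmHull]⟩
  have hsub : {z, -z} ⊆ S := Finset.insert_subset hz (Finset.singleton_subset_iff.2 hz')
  rw [← Finset.card_sdiff_add_card_eq_card hsub, Finset.card_pair hne]
  grw [Finset.card_insert_le, Finset.card_insert_le]

theorem IsSimpleVertex.volume_polarBody_le {ι : Type*} [Finite ι] [Nontrivial ι]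
    {b : AffineBasis ι ℝ E2} {i : ι} {R : Set E2} (h : IsSimpleVertex b i R) (hR : R.Finite)
    (hvol : 0 < volume (symmHull R (b i))) {u : E2} (hu : (b.coord i).linear u = 0)
    (hprod : (0 : E2) ∈ interior (symmHull R (b i + u)) →
      volume (symmHull R (b i + u)) * volume (polarBody (symmHull R (b i + u))) ≤
        volume (symmHull R (b i)) * volume (polarBody (symmHull R (b i)))) :
    volume (polarBody (symmHull R (b i + u))) ≤ volume (polarBody (symmHull R (b i))) := by
  have hle := h.measure_symmHull_le volume hu
  have h_int := zero_mem_interior_of_measure_pos volume (convex_convexHull ℝ _)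
    (symmHull_eq_neg h.eq_neg _) (hvol.trans_le hle)
  have htop : volume (symmHull R (b i)) ≠ ∞ :=
    ((hR.insert _).insert _).isCompact_convexHull (𝕜 := ℝ) |>.measure_ne_top
  rw [← ENNReal.mul_le_mul_iff_right hvol.ne' htop]
  exact (mul_le_mul_left hle _).trans (hprod h_int)

/-- Property (i) of a maximizer of the volume product among o-symmetric n-gons:
for consecutive vertices x₁, x₂, x₃ the points o, (x₁+x₃)/2, x₂ are collinear. -/
theorem maximizer_consecutive_vertices_collinear
    (n : ℕ) (hn6 : 6 ≤ n) (hneven : Even n)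
    (S : Finset E2) (hScard : S.card = n)
    (K : Set E2) (hK : K = convexHull ℝ (S : Set E2))
    (hvert : (S : Set E2) = K.extremePoints ℝ)
    (hsym : K = -K) (h0 : (0 : E2) ∈ interior K)
    (hmax : ∀ (T : Finset E2) (L : Set E2), T.card ≤ n →
      L = convexHull ℝ (T : Set E2) → L = -L → (0 : E2) ∈ interior L →
      volume L * volume (polarBody L) ≤ volume K * volume (polarBody K))
    (x₁ x₂ x₃ : E2)
    (hx₁ : x₁ ∈ K.extremePoints ℝ) (hx₂ : x₂ ∈ K.extremePoints ℝ)
    (hx₃ : x₃ ∈ K.extremePoints ℝ)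
    (h12 : x₁ ≠ x₂) (h23 : x₂ ≠ x₃) (h13 : x₁ ≠ x₃)
    (hedge12 : segment ℝ x₁ x₂ ⊆ frontier K)
    (hedge23 : segment ℝ x₂ x₃ ⊆ frontier K) :
    Collinear ℝ {(0 : E2), (2 : ℝ)⁻¹ • (x₁ + x₃), x₂} := by
  classical
  obtain ⟨b, rfl, rfl, rfl⟩ := exists_affineBasis_of_mem_extremePoints finrank_euclideanSpace_fin
    hx₁ hx₂ hx₃ h12 h23 h13
  have hR : (↑(S \ {b 1, -b 1}) : Set E2) = K.extremePoints ℝ \ {b 1, -b 1} := by simp [hvert]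
  have hsimple := hR ▸ isSimpleVertex_of_segment_subset_frontier (hK ▸ convex_convexHull ℝ _) hsym
    h0 (Fin.forall_fin_succ.2 ⟨hx₁, Fin.forall_fin_two.2 ⟨hx₂, hx₃⟩⟩) hedge12 hedge23
  have hKhull : symmHull ↑(S \ {b 1, -b 1}) (b 1) = K := by
    rw [hR, symmHull_extremePoints_diff hsym hx₂, ← hvert, ← hK]
  have hneg := neg_mem_extremePoints_s2 hsym hx₂
  rw [← hvert, Finset.mem_coe] at hx₂ hneg
  refine collinear_zero_midpoint_of_coord_zero_eq (hsimple.coord_zero_pos 0 (by decide))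
    (hsimple.coord_zero_eq fun t => ?_)
  refine hsimple.volume_polarBody_le (Finset.finite_toSet _) ?_ ?_ fun h_int => ?_
  · exact Measure.measure_pos_of_nonempty_interior _ ⟨0, hKhull.symm ▸ h0⟩
  · rw [map_smul, coord_linear_sub_eq_zero (by decide) (by decide), smul_zero]
  · obtain ⟨T, hT, hL⟩ := exists_finset_card_le_symmHull_eq hx₂ hneg hsimple.ne_neg _
    exact hKhull.symm ▸ hmax T _ (hScard ▸ hT) hL (symmHull_eq_neg hsimple.eq_neg _) h_int
end
end

section
/- Let n ≥ 6 be an even integer and let K ⊂ ℝ² be an o-symmetric convex polygon with exactly n vertices and o in its interior that maximizes the volume product, i.e. V(L)·V(L*) ≤ V(K)·V(K*) for every o-symmetric convex polygon L with at most n vertices and o in its interior. Let y₁, y₂, y₃, y₄ be four consecutive vertices of K (in counterclockwise order), and suppose m ∈ ℝ² is the intersection point of the line through y₁, y₂ and the line through y₃, y₄. Then o, (y₂+y₃)/2 and m are collinear. -/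
/-!
Let `L` be the symmetric polygon and `C` the larger symmetric body obtained by replacing `y₂, y₃` by
the single corner `m`. Then `L` arises from `C` by cutting off the triangle `m y₂ y₃` and its mirror
image, and dually `C*` arises from `L*` by cutting off the triangle `f a c` and its mirror image,
where `⟪·, a⟫ = 1`, `⟪·, f⟫ = 1`, `⟪·, c⟫ = 1` are the lines `y₁y₂`, `y₂y₃`, `y₃y₄`. Tilting the cut
by moving `f` to `f + t (a - c)` keeps `C` and the area of the triangle `f a c`, hence the area of
the polar body. So for a maximizer the area of the triangle cut off at `m` has a local minimum at
`t = 0`. With `D = ⟪m, f⟫ - 1` this area is inversely proportional to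
`(D - t (1 - ⟪y₂, c⟫)) (D + t (1 - ⟪y₃, a⟫))`, and the derivative at `t = 0` vanishes only if
`⟪y₂, c⟫ = ⟪y₃, a⟫`. This says that `y₂ + y₃` lies on the line `⟪·, a - c⟫ = 0`, which also contains
`0` and `m`.
-/

open MeasureTheory Real
open scoped Pointwise RealInnerProductSpace ENNReal

noncomputable section

lemma neg_sdiff_quadruple {G : Type*} [InvolutiveNeg G] {s : Set G} (hs : -s = s) (u v : G) :
    -(s \ {u, v, -u, -v}) = s \ {u, v, -u, -v} := by
  ext x
  have hx : -x ∈ s ↔ x ∈ s := by rw [← Set.mem_neg, hs]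
  simp only [Set.mem_neg, Set.mem_sdiff, hx, Set.mem_insert_iff, Set.mem_singleton_iff,
    neg_eq_iff_eq_neg, neg_neg]
  tauto

section RealModule

open Topology

variable {E : Type*} [AddCommGroup E] [Module ℝ E] {s W : Set E} {m u v x y z : E} {f : E →ₗ[ℝ] ℝ}

lemma smul_mem_smul_set_of_balanced (hs : Balanced ℝ s) {r t : ℝ} (hr : 0 ≤ r)
    (hrt : r ≤ t) (hx : x ∈ s) : r • x ∈ t • s :=
  hs.smul_mono (by simpa [abs_of_nonneg hr] using hrt.trans (le_abs_self t))
    (Set.smul_mem_smul_set hx)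

lemma exists_mem_segment_of_mem_absConvexHull_insert (hs : AbsConvex ℝ s) (hne : s.Nonempty)
    (hx : x ∈ absConvexHull ℝ (insert m s)) :
    ∃ y ∈ s, x ∈ segment ℝ m y ∨ -x ∈ segment ℝ m y := by
  have hneg : -s = s := hs.1.neg_eq
  have hunion : insert m s ∪ -insert m s = insert m (insert (-m) s) := by
    rw [Set.neg_insert, hneg, Set.insert_union, Set.union_insert, Set.union_self]
  rw [← convexHull_union_neg_eq_absConvexHull, hunion, convexHull_insert (Set.insert_nonempty _ _),
    convexHull_insert hne, hs.2.convexHull_eq] at hx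
  simp only [mem_convexJoin, Set.mem_singleton_iff, exists_eq_left] at hx
  obtain ⟨z, ⟨y, hy, p, q, hp, hq, hpq, rfl⟩, r, t, hr, ht, hrt, rfl⟩ := hx
  rcases le_total (t * p) r with hle | hle
  · have htq : t * q ≤ 1 - (r - t * p) := by nlinarith
    obtain ⟨y', hy', e⟩ := smul_mem_smul_set_of_balanced hs.1 (mul_nonneg ht hq) htq hy
    refine ⟨y', hy', .inl ⟨r - t * p, 1 - (r - t * p), by linarith, by nlinarith, by ring, ?_⟩⟩
    linear_combination (norm := module) e
  · have htq : t * q ≤ 1 - (t * p - r) := by nlinarith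
    obtain ⟨y', hy', e⟩ := smul_mem_smul_set_of_balanced hs.1 (mul_nonneg ht hq) htq
      (hs.1.neg_mem_iff.2 hy)
    refine ⟨y', hy', .inr ⟨t * p - r, 1 - (t * p - r), by linarith, by nlinarith, by ring, ?_⟩⟩
    linear_combination (norm := module) e

lemma exists_mem_segment_apply_eq (hx : x ∈ segment ℝ m y) (hy : f y ≤ 1) (hm : 1 < f m)
    (hfx : f x ≤ 1) : ∃ q ∈ segment ℝ m y, f q = 1 ∧ x ∈ segment ℝ q y := by
  obtain ⟨r, t, hr, -, hrt, rfl⟩ := hx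
  have hD : 0 < f m - f y := by linarith
  simp only [map_add, map_smul, smul_eq_mul] at hfx
  set u := (1 - f y) / (f m - f y)
  have huD : u * (f m - f y) = 1 - f y := div_mul_cancel₀ _ hD.ne'
  have hu0 : 0 ≤ u := div_nonneg (by linarith) hD.le
  have hu1 : u ≤ 1 := (div_le_one hD).2 (by linarith)
  have hru : r ≤ u := le_of_mul_le_mul_right (by nlinarith) hD
  refine ⟨u • m + (1 - u) • y, ⟨u, 1 - u, hu0, by linarith, by ring, rfl⟩, ?_,
    r / u, 1 - r / u, div_nonneg hr hu0, ?_, by ring, ?_⟩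
  · simp only [map_add, map_smul, smul_eq_mul]; linarith
  · linarith [div_le_one_of_le₀ hru hu0]
  · have hcancel : r / u * u = r := div_mul_cancel_of_imp fun h => by linarith
    linear_combination (norm := module) hcancel • (m - y) - hrt • y

lemma mem_of_mem_absConvexHull_insert_of_abs_apply_le_one (hs : AbsConvex ℝ s)
    (hfs : ∀ y ∈ s, f y ≤ 1) (hm : 1 < f m)
    (hlevel : ∀ q ∈ absConvexHull ℝ (insert m s), f q = 1 → q ∈ s) (hne : s.Nonempty)
    (hx : x ∈ absConvexHull ℝ (insert m s)) (hfx : |f x| ≤ 1) : x ∈ s := by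
  suffices h : ∀ z, f z ≤ 1 → ∀ y ∈ s, z ∈ segment ℝ m y → z ∈ s by
    obtain ⟨y, hy, hxy | hxy⟩ := exists_mem_segment_of_mem_absConvexHull_insert hs hne hx
    · exact h x (abs_le.1 hfx).2 y hy hxy
    · refine hs.1.neg_mem_iff.1 (h (-x) ?_ y hy hxy)
      rw [map_neg]; linarith [(abs_le.1 hfx).1]
  intro z hfz y hy hz
  obtain ⟨q, hq, hfq, hzq⟩ := exists_mem_segment_apply_eq hz (hfs y hy) hm hfz
  have hqs : q ∈ s := hlevel q (convex_absConvexHull.segment_subset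
    (subset_absConvexHull (Set.mem_insert m s))
    (subset_absConvexHull (Set.mem_insert_of_mem m hy)) hq) hfq
  exact hs.2.segment_subset hqs hy hzq

lemma mem_openSegment_of_mem_affineSpan {r : ℝ} (hm : m ∈ line[ℝ, x, y]) (hx : f x < r)
    (hy : f y = r) (hfm : r < f m) : y ∈ openSegment ℝ m x := by
  obtain ⟨t, rfl⟩ := mem_affineSpan_pair_iff_exists_lineMap_eq.1 hm
  simp only [AffineMap.lineMap_apply_module, map_add, map_smul, smul_eq_mul, hy] at hfm
  have ht : 1 < t := by nlinarith
  have ht0 : t ≠ 0 := by positivity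
  refine ⟨t⁻¹, 1 - t⁻¹, by positivity, by linarith [inv_lt_one_of_one_lt₀ ht], by ring, ?_⟩
  rw [AffineMap.lineMap_apply_module]
  match_scalars <;> field_simp
  ring

lemma eventually_lineMap_mem_segment (hy : y ∈ openSegment ℝ m x) :
    ∀ᶠ r in 𝓝 (1 : ℝ), AffineMap.lineMap m y r ∈ segment ℝ m x := by
  rw [openSegment_eq_image_lineMap] at hy
  obtain ⟨u, ⟨hu0, hu1⟩, rfl⟩ := hy
  have hmul : ∀ᶠ r in 𝓝 (1 : ℝ), r * u ∈ Set.Icc 0 1 := by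
    refine ContinuousAt.eventually_mem (f := fun r : ℝ => r * u) (by fun_prop) ?_
    simpa using Icc_mem_nhds hu0 hu1
  filter_upwards [hmul] with r hr
  rw [segment_eq_image_lineMap, AffineMap.lineMap_lineMap_right]
  exact ⟨r * u, hr, rfl⟩

lemma combination_mem_convexHull {i j k : ℝ} (hi : 0 ≤ i) (hj : 0 ≤ j) (hk : 0 ≤ k)
    (hsum : i + j + k = 1) : i • x + j • y + k • z ∈ convexHull ℝ {x, y, z} := by
  have hmem := (convex_convexHull ℝ {x, y, z}).sum_mem (t := Finset.univ) (w := ![i, j, k])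
    (z := ![x, y, z]) (by simp [Fin.forall_fin_succ, hi, hj, hk])
    (by simpa [Fin.sum_univ_three] using hsum)
    fun n _ => subset_convexHull ℝ _ (by fin_cases n <;> simp)
  simpa [Fin.sum_univ_three] using hmem

lemma neg_extremePoints (s : Set E) : -(s.extremePoints ℝ) = (-s).extremePoints ℝ := by
  simpa using image_extremePoints (LinearEquiv.neg ℝ : E ≃ₗ[ℝ] E) s

/-- The symmetric convex body generated by `W` and two further points; for a cut-off corner these
are the end points of the cut. -/
abbrev cutBody (W : Set E) (P Q : E) : Set E := absConvexHull ℝ (insert P (insert Q W))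

lemma left_mem_cutBody (W : Set E) (P Q : E) : P ∈ cutBody W P Q := subset_absConvexHull (by simp)

lemma right_mem_cutBody (W : Set E) (P Q : E) : Q ∈ cutBody W P Q := subset_absConvexHull (by simp)

lemma cutBody_eq_convexHull (hW : -W = W) (P Q : E) :
    cutBody W P Q = convexHull ℝ (W ∪ {P, Q, -P, -Q}) := by
  rw [cutBody, ← convexHull_union_neg_eq_absConvexHull]
  congr 1
  simp only [Set.neg_insert, hW]
  ext x
  simp only [Set.mem_union, Set.mem_insert_iff, Set.mem_singleton_iff]
  tauto

lemma cutBody_sdiff_eq_convexHull (hs : -s = s) (hu : u ∈ s) (hv : v ∈ s) :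
    cutBody (s \ {u, v, -u, -v}) u v = convexHull ℝ s := by
  have hneg : ∀ x ∈ s, -x ∈ s := fun x hx => hs ▸ Set.neg_mem_neg.2 hx
  rw [cutBody_eq_convexHull (neg_sdiff_quadruple hs u v), Set.sdiff_union_of_subset]
  simp [Set.insert_subset_iff, hu, hv, hneg]

lemma exists_finset_cutBody_eq {S : Finset E} (hS : -(S : Set E) = S) (hu : u ∈ S) (hv : v ∈ S)
    (huv : u ≠ v) (hfu : f u = 1) (hfv : f v = 1) (P Q : E) :
    ∃ T : Finset E, T.card ≤ S.card ∧
      cutBody (S \ {u, v, -u, -v}) P Q = convexHull ℝ (T : Set E) := by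
  classical
  have hsub : ({u, v, -u, -v} : Finset E) ⊆ S := by
    have hneg : ∀ x ∈ S, -x ∈ S := fun x hx => by
      rw [← Finset.mem_coe, ← hS]
      simpa using hx
    simp [Finset.insert_subset_iff, hu, hv, hneg]
  have hne : ∀ x y : E, f x = 1 → f y = 1 → x ≠ -y := by
    rintro x y hx hy rfl
    norm_num [hy] at hx
  have hcard : ({u, v, -u, -v} : Finset E).card = 4 := by
    rw [Finset.card_insert_of_notMem, Finset.card_insert_of_notMem, Finset.card_pair]
    · exact fun h => huv (neg_inj.1 h)
    · simp [hne v u hfv hfu, hne v v hfv hfv]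
    · simp [huv, hne u u hfu hfu, hne u v hfu hfv]
  refine ⟨S \ {u, v, -u, -v} ∪ {P, Q, -P, -Q}, ?_, ?_⟩
  · calc (S \ {u, v, -u, -v} ∪ {P, Q, -P, -Q}).card
        ≤ (S \ {u, v, -u, -v}).card + ({P, Q, -P, -Q} : Finset E).card :=
          Finset.card_union_le _ _
      _ ≤ (S \ {u, v, -u, -v}).card + ({u, v, -u, -v} : Finset E).card := by
        rw [hcard]
        gcongr
        exact Finset.card_le_four
      _ = S.card := Finset.card_sdiff_add_card_eq_card hsub
  · rw [cutBody_eq_convexHull (neg_sdiff_quadruple hS u v)]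
    push_cast
    rfl

end RealModule

section InnerProductSpace

variable {E : Type*} [NormedAddCommGroup E] [InnerProductSpace ℝ E] {s : Set E} {f u v w x y : E}

lemma inner_eq_of_mem_affineSpan_pair {r : ℝ} (hx : x ∈ line[ℝ, u, v]) (hu : ⟪u, f⟫ = r)
    (hv : ⟪v, f⟫ = r) : ⟪x, f⟫ = r := by
  obtain ⟨t, rfl⟩ := mem_affineSpan_pair_iff_exists_lineMap_eq.1 hx
  rw [AffineMap.lineMap_apply_module, inner_add_left, real_inner_smul_left, real_inner_smul_left,
    hu, hv]
  ring

lemma exists_inner_le_one_of_segment_subset_frontier [CompleteSpace E] (hs : Convex ℝ s)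
    (h0 : (0 : E) ∈ interior s) (hu : u ∈ s) (hv : v ∈ s) (huv : segment ℝ u v ⊆ frontier s) :
    ∃ f : E, (∀ x ∈ s, ⟪x, f⟫ ≤ 1) ∧ ⟪u, f⟫ = 1 ∧ ⟪v, f⟫ = 1 := by
  have hmid : midpoint ℝ u v ∉ interior s := (huv (midpoint_mem_segment u v)).2
  obtain ⟨g, hg⟩ := geometric_hahn_banach_open_point hs.interior isOpen_interior hmid
  set M := g (midpoint ℝ u v) with hM
  have hpos : 0 < M := by simpa using hg 0 h0
  have hle : ∀ x ∈ s, g x ≤ M := by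
    have hsub : interior s ⊆ {x | g x ≤ M} := fun x hx => (hg x hx).le
    have hclosure := closure_minimal hsub (isClosed_le g.continuous continuous_const)
    rw [hs.closure_interior_eq_closure_of_nonempty_interior ⟨0, h0⟩] at hclosure
    exact fun x hx => hclosure (subset_closure hx)
  have hsum : g u + g v = 2 * M := by
    rw [hM, midpoint_eq_smul_add, map_smul, map_add, smul_eq_mul, invOf_eq_inv]
    ring
  have hinner : ∀ x, ⟪x, M⁻¹ • (InnerProductSpace.toDual ℝ E).symm g⟫ = g x / M := by
    intro x
    rw [real_inner_smul_right, real_inner_comm, InnerProductSpace.toDual_symm_apply,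
      inv_mul_eq_div]
  refine ⟨M⁻¹ • (InnerProductSpace.toDual ℝ E).symm g, fun x hx => ?_, ?_, ?_⟩
  · rw [hinner, div_le_one hpos]
    exact hle x hx
  · rw [hinner, div_eq_one_iff_eq hpos.ne']
    linarith [hle u hu, hle v hv]
  · rw [hinner, div_eq_one_iff_eq hpos.ne']
    linarith [hle u hu, hle v hv]

lemma collinear_of_inner_eq [Fact (Module.finrank ℝ E = 2)] {r : ℝ} (hf : f ≠ 0)
    (hs : ∀ x ∈ s, ⟪x, f⟫ = r) : Collinear ℝ s := by
  have : FiniteDimensional ℝ E := .of_fact_finrank_eq_two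
  have hspan : vectorSpan ℝ s ≤ (ℝ ∙ f)ᗮ := by
    refine Submodule.span_le.2 ?_
    rintro _ ⟨x, hx, y, hy, rfl⟩
    change x - y ∈ (ℝ ∙ f)ᗮ
    rw [Submodule.mem_orthogonal_singleton_iff_inner_left, inner_sub_left, hs x hx, hs y hy,
      sub_self]
  have : Fact (Module.finrank ℝ E = 1 + 1) := ‹_›
  rw [collinear_iff_finrank_le_one,
    ← Submodule.finrank_orthogonal_span_singleton (𝕜 := ℝ) (n := 1) hf]
  exact Submodule.finrank_mono hspan

lemma inner_ne_of_mem_extremePoints [Fact (Module.finrank ℝ E = 2)] {r : ℝ}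
    (hf : f ≠ 0) (hu : u ∈ s.extremePoints ℝ) (hv : v ∈ s.extremePoints ℝ)
    (hw : w ∈ s.extremePoints ℝ) (huv : u ≠ v) (huw : u ≠ w) (hvw : v ≠ w) (hfu : ⟪u, f⟫ = r)
    (hfv : ⟪v, f⟫ = r) : ⟪w, f⟫ ≠ r := by
  intro hfw
  have hcol : Collinear ℝ {u, v, w} := collinear_of_inner_eq (r := r) hf (by simp [hfu, hfv, hfw])
  rw [mem_extremePoints_iff_forall_segment] at hu hv hw
  rcases hcol.wbtw_or_wbtw_or_wbtw with h | h | h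
  · exact (hv.2 u hu.1 w hw.1 h.mem_segment).elim huv hvw.symm
  · exact (hw.2 v hv.1 u hu.1 h.mem_segment).elim hvw huw
  · exact (hu.2 w hw.1 v hv.1 h.mem_segment).elim huw.symm huv.symm

lemma absConvex_setOf_abs_inner_le_one (y : E) : AbsConvex ℝ {x : E | |⟪x, y⟫| ≤ 1} := by
  refine ⟨balanced_iff_smul_mem.2 fun {r} hr x (hx : |⟪x, y⟫| ≤ 1) => ?_, ?_⟩
  · rw [Set.mem_ofPred_eq, real_inner_smul_left, abs_mul]
    exact mul_le_one₀ hr (abs_nonneg _) hx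
  · simp only [abs_le, Set.ofPred_and]
    exact (convex_halfSpace_ge ((innerₗ E).flip y).isLinear (-1)).inter
      (convex_halfSpace_le ((innerₗ E).flip y).isLinear 1)

lemma abs_inner_le_one_of_mem_absConvexHull (hs : ∀ z ∈ s, |⟪z, y⟫| ≤ 1)
    (hx : x ∈ absConvexHull ℝ s) : |⟪x, y⟫| ≤ 1 :=
  absConvexHull_min hs (absConvex_setOf_abs_inner_le_one y) hx

lemma abs_inner_le_one_of_neg_eq (hs : -s = s) (hf : ∀ x ∈ s, ⟪x, f⟫ ≤ 1) (hx : x ∈ s) :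
    |⟪x, f⟫| ≤ 1 :=
  abs_le'.2 ⟨hf x hx, inner_neg_left (𝕜 := ℝ) x f ▸ hf (-x) (hs ▸ Set.neg_mem_neg.2 hx)⟩

lemma abs_inner_lt_one_of_mem_extremePoints [Fact (Module.finrank ℝ E = 2)] (hs : -s = s)
    (hf : ∀ x ∈ s, ⟪x, f⟫ ≤ 1) (hu : u ∈ s.extremePoints ℝ) (hv : v ∈ s.extremePoints ℝ)
    (huv : u ≠ v) (hfu : ⟪u, f⟫ = 1) (hfv : ⟪v, f⟫ = 1)
    (hx : x ∈ s.extremePoints ℝ \ {u, v, -u, -v}) : |⟪x, f⟫| < 1 := by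
  simp only [Set.mem_sdiff, Set.mem_insert_iff, Set.mem_singleton_iff, not_or] at hx
  obtain ⟨hx, hxu, hxv, hxu', hxv'⟩ := hx
  have hf0 : f ≠ 0 := by
    rintro rfl
    simp at hfu
  have hlt : ∀ y ∈ s.extremePoints ℝ, u ≠ y → v ≠ y → ⟪y, f⟫ < 1 := fun y hy huy hvy =>
    (hf y hy.1).lt_of_ne (inner_ne_of_mem_extremePoints hf0 hu hv hy huv huy hvy hfu hfv)
  have hnegx : -x ∈ s.extremePoints ℝ := by
    rw [← Set.mem_neg, neg_extremePoints, hs]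
    exact hx
  rw [abs_lt, neg_lt, ← inner_neg_left]
  exact ⟨hlt (-x) hnegx (fun h => hxu' (by rw [h, neg_neg])) fun h => hxv' (by rw [h, neg_neg]),
    hlt x hx (Ne.symm hxu) (Ne.symm hxv)⟩

section LevelPoint

open Filter Topology

variable {g m c P : E}

/-- The position, along the line from `m` (at `0`) through `P` (at `1`), of the point where it meets
`⟪·, g⟫ = 1`. Meaningful only if `⟪m, g⟫ ≠ ⟪P, g⟫`. -/
def levelRatio (g m P : E) : ℝ := (⟪m, g⟫ - 1) / (⟪m, g⟫ - ⟪P, g⟫)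

/-- The point at which the line through `m` and `P` meets `⟪·, g⟫ = 1`, the new end point of a cut
along that line. -/
def levelPoint (g m P : E) : E := AffineMap.lineMap m P (levelRatio g m P)

lemma inner_levelPoint_eq_one (h : ⟪P, g⟫ < ⟪m, g⟫) : ⟪levelPoint g m P, g⟫ = 1 := by
  have hcancel : levelRatio g m P * (⟪m, g⟫ - ⟪P, g⟫) = ⟪m, g⟫ - 1 :=
    div_mul_cancel₀ _ (sub_pos.2 h).ne'
  rw [levelPoint, AffineMap.lineMap_apply_module, inner_add_left, real_inner_smul_left,
    real_inner_smul_left]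
  linear_combination -hcancel

lemma levelPoint_sub (g m P : E) : levelPoint g m P - m = levelRatio g m P • (P - m) := by
  rw [levelPoint, AffineMap.lineMap_apply, vsub_eq_sub, vadd_eq_add, add_sub_cancel_right]

lemma tendsto_levelRatio (hP : ⟪P, f⟫ = 1) (hm : 1 < ⟪m, f⟫) :
    Tendsto (levelRatio · m P) (𝓝 f) (𝓝 1) := by
  have hne : ⟪m, f⟫ - ⟪P, f⟫ ≠ 0 := by
    rw [hP]
    exact (sub_pos.2 hm).ne'
  have hcont : ContinuousAt (levelRatio · m P) f := by
    unfold levelRatio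
    fun_prop (disch := exact hne)
  have hf : levelRatio f m P = 1 := by
    rw [levelRatio, hP, div_self (hP ▸ hne)]
  simpa only [hf] using hcont.tendsto

lemma inner_levelPoint_lt_one (hm : ⟪m, c⟫ = 1) (hP : ⟪P, c⟫ < 1) (hr : 0 < levelRatio g m P) :
    ⟪levelPoint g m P, c⟫ < 1 := by
  rw [← hm, ← sub_neg, ← inner_sub_left, levelPoint_sub, real_inner_smul_left, inner_sub_left, hm]
  exact mul_neg_of_pos_of_neg hr (sub_neg.2 hP)

lemma eventually_levelPoint (hP : ⟪P, f⟫ = 1) (hm : 1 < ⟪m, f⟫) (hseg : P ∈ openSegment ℝ m u) :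
    ∀ᶠ g in 𝓝 f, ⟪levelPoint g m P, g⟫ = 1 ∧ 0 < levelRatio g m P ∧
      levelPoint g m P ∈ segment ℝ m u := by
  have hcont : ∀ x : E, ContinuousAt (fun g : E => ⟪x, g⟫) f := fun x => by fun_prop
  have hr := tendsto_levelRatio hP hm
  filter_upwards [(hcont P).eventually_lt (hcont m) (hP ▸ hm), hr.eventually_const_lt one_pos,
    hr.eventually (eventually_lineMap_mem_segment hseg)] with g hg hpos hmem
  exact ⟨inner_levelPoint_eq_one hg, hpos, hmem⟩

end LevelPoint

section Measure

variable [FiniteDimensional ℝ E] [MeasurableSpace E] [BorelSpace E]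
  (μ : Measure E) [μ.IsAddHaarMeasure]

lemma addHaar_setOf_inner_eq {r : ℝ} (hr : r ≠ 0) : μ {x | ⟪x, f⟫ = r} = 0 := by
  let S : AffineSubspace ℝ E := (AffineSubspace.mk' r ⊥).comap (innerₗ E f).toAffineMap
  have hS : (S : Set E) = {x | ⟪x, f⟫ = r} := by
    ext x
    simp [S, real_inner_comm, sub_eq_zero]
  rw [← hS]
  refine Measure.addHaar_affineSubspace μ S fun htop => hr ?_
  have : (0 : E) ∈ (S : Set E) := by rw [htop]; trivial
  simpa [hS, eq_comm] using this

lemma measure_eq_slab_add_two_mul (hs : -s = s) (f : E) :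
    μ s = μ (s ∩ {x | |⟪x, f⟫| ≤ 1}) + 2 * μ (s ∩ {x | 1 ≤ ⟪x, f⟫}) := by
  have hcont : Continuous fun x : E => ⟪x, f⟫ := by fun_prop
  have hneg : -(s ∩ {x | 1 < ⟪x, f⟫}) = s ∩ {x | ⟪x, f⟫ < -1} := by
    rw [Set.inter_neg, hs]
    ext x
    simp [lt_neg]
  have hcap : μ (s ∩ {x | 1 ≤ ⟪x, f⟫}) = μ (s ∩ {x | 1 < ⟪x, f⟫}) := by
    refine measure_congr (Filter.EventuallyEq.inter .rfl ?_)
    filter_upwards [measure_eq_zero_iff_ae_notMem.1 (addHaar_setOf_inner_eq (f := f) μ one_ne_zero)]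
      with x hx
    exact propext (Ne.le_iff_lt fun h => hx h.symm)
  have hright : (s \ {x | |⟪x, f⟫| ≤ 1}) ∩ {x | 1 < ⟪x, f⟫} = s ∩ {x | 1 < ⟪x, f⟫} := by
    ext x
    simp only [Set.mem_inter_iff, Set.mem_sdiff, Set.mem_ofPred_eq, not_le, lt_abs]
    tauto
  have hleft : (s \ {x | |⟪x, f⟫| ≤ 1}) \ {x | 1 < ⟪x, f⟫} = s ∩ {x | ⟪x, f⟫ < -1} := by
    ext x
    simp only [Set.mem_inter_iff, Set.mem_sdiff, Set.mem_ofPred_eq, not_le, lt_abs, lt_neg]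
    grind
  rw [← measure_inter_add_sdiff s (measurableSet_le hcont.abs.measurable measurable_const),
    ← measure_inter_add_sdiff (s \ _) (measurableSet_lt measurable_const hcont.measurable),
    hright, hleft, ← hneg, Measure.measure_neg, hcap, two_mul]

end Measure
end InnerProductSpace

section Plane

variable {x y z a b c : E2}

/-- The determinant of two plane vectors, the signed area of the parallelogram they span. -/
def cross (u v : E2) : ℝ := u 0 * v 1 - u 1 * v 0

lemma inner_eq_coord (u v : E2) : ⟪u, v⟫ = u 0 * v 0 + u 1 * v 1 := by
  simp [PiLp.inner_apply, Fin.sum_univ_two, mul_comm]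

lemma cross_mul_cross (u v a c : E2) :
    cross u v * cross a c = ⟪u, a⟫ * ⟪v, c⟫ - ⟪u, c⟫ * ⟪v, a⟫ := by
  simp only [inner_eq_coord, cross]
  ring

lemma eq_of_inner_eq_of_cross_ne_zero (h : cross a c ≠ 0) (ha : ⟪x, a⟫ = ⟪y, a⟫)
    (hc : ⟪x, c⟫ = ⟪y, c⟫) : x = y := by
  simp only [inner_eq_coord] at ha hc
  ext i
  fin_cases i <;> apply mul_left_cancel₀ h <;> simp only [cross, Fin.zero_eta, Fin.mk_one]
  · linear_combination c 1 * ha - a 1 * hc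
  · linear_combination a 0 * hc - c 0 * ha

lemma mem_convexHull_parallelogram (hyb : ⟪y, b⟫ = 1) (hzb : ⟪z, b⟫ = 1) (hya : ⟪y, a⟫ = 1)
    (hza : ⟪z, a⟫ = -1) (hxa : |⟪x, a⟫| ≤ 1) (hxb : |⟪x, b⟫| ≤ 1) :
    x ∈ convexHull ℝ {y, z, -y, -z} := by
  have hcross : cross a b ≠ 0 := by
    have h := cross_mul_cross y z a b
    rw [hyb, hzb, hya, hza] at h
    intro h0
    norm_num [h0] at h
  obtain ⟨ha, ha'⟩ := abs_le.1 hxa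
  obtain ⟨hb, hb'⟩ := abs_le.1 hxb
  set A := ⟪x, a⟫ with hA
  set B := ⟪x, b⟫ with hB
  have hsub := subset_convexHull ℝ {y, z, -y, -z}
  have hconv := convex_convexHull ℝ {y, z, -y, -z}
  have hp : ((1 + A) / 2) • y + ((1 - A) / 2) • z ∈ convexHull ℝ {y, z, -y, -z} :=
    hconv (hsub (by simp)) (hsub (by simp)) (by linarith) (by linarith) (by ring)
  have hq : ((1 - A) / 2) • -y + ((1 + A) / 2) • -z ∈ convexHull ℝ {y, z, -y, -z} :=
    hconv (hsub (by simp)) (hsub (by simp)) (by linarith) (by linarith) (by ring)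
  convert hconv hp hq (a := (1 + B) / 2) (b := (1 - B) / 2) (by linarith) (by linarith) (by ring)
    using 1
  apply eq_of_inner_eq_of_cross_ne_zero hcross <;>
  · simp only [inner_add_left, real_inner_smul_left, inner_neg_left, hya, hyb, hza, hzb, ← hA, ← hB]
    ring

section Area

/-- The triangle with vertices `(0, 0)`, `(1, 0)`, `(0, 1)`, the unit in which triangle areas are
expressed below. -/
def stdTriangle : Set E2 :=
  convexHull ℝ {0, EuclideanSpace.single 0 1, EuclideanSpace.single 1 1}

lemma convexHull_triple_eq_image (m P Q : E2) :
    convexHull ℝ {m, P, Q} = m +ᵥ (Matrix.toEuclideanLin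
      !![(P - m) 0, (Q - m) 0; (P - m) 1, (Q - m) 1] '' stdTriangle) := by
  rw [stdTriangle, LinearMap.image_convexHull, ← convexHull_vadd]
  congr 1
  simp only [Set.image_insert_eq, Set.image_singleton, Set.vadd_set_insert, Set.vadd_set_singleton,
    vadd_eq_add, map_zero, add_zero]
  congr 2 <;> [skip; congr 1] <;> ext i <;> fin_cases i <;> simp [Matrix.toLpLin_apply]

lemma volume_convexHull_triple (m P Q : E2) :
    volume (convexHull ℝ {m, P, Q}) =
      ENNReal.ofReal |cross (P - m) (Q - m)| * volume stdTriangle := by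
  have hdet : LinearMap.det (Matrix.toEuclideanLin
      !![(P - m) 0, (Q - m) 0; (P - m) 1, (Q - m) 1]) = cross (P - m) (Q - m) := by
    rw [Matrix.toEuclideanLin_eq_toLin_orthonormal, LinearMap.det_toLin, Matrix.det_fin_two_of,
      cross]
    ring
  rw [convexHull_triple_eq_image, measure_vadd, Measure.addHaar_image_linearMap, hdet]

lemma volume_stdTriangle_ne_top : volume stdTriangle ≠ ⊤ :=
  (isBounded_convexHull.2 (Set.toFinite _).isBounded).measure_lt_top.ne

lemma volume_stdTriangle_ne_zero : volume stdTriangle ≠ 0 := by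
  refine (Measure.measure_pos_of_nonempty_interior volume ?_).ne'
  rw [stdTriangle, interior_convexHull_nonempty_iff_affineSpan_eq_top, ← SetLike.coe_set_eq,
    affineSpan_insert_zero]
  have hrange : Set.range (EuclideanSpace.basisFun (Fin 2) ℝ).toBasis =
      {EuclideanSpace.single 0 1, EuclideanSpace.single 1 1} := by
    ext x
    simp [eq_comm]
  rw [← hrange, Module.Basis.span_eq, Submodule.top_coe, AffineSubspace.top_coe]

end Area
end Plane

section PolarBody

variable {s K L : Set E2} {f x y : E2}

lemma polarBody_anti (h : K ⊆ L) : polarBody L ⊆ polarBody K := fun _ hy x hx => hy x (h hx)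

lemma convex_polarBody (K : Set E2) : Convex ℝ (polarBody K) := by
  have h : polarBody K = ⋂ x ∈ K, {y | ⟪x, y⟫ ≤ 1} := by
    ext y
    simp [polarBody]
  rw [h]
  exact convex_iInter₂ fun x _ => convex_halfSpace_le (innerₗ E2 x).isLinear 1

lemma mem_polarBody_absConvexHull :
    y ∈ polarBody (absConvexHull ℝ s) ↔ ∀ x ∈ s, |⟪x, y⟫| ≤ 1 := by
  refine ⟨fun h x hx => abs_le'.2 ⟨h x (subset_absConvexHull hx), ?_⟩,
    fun h x hx => (abs_le.1 (abs_inner_le_one_of_mem_absConvexHull h hx)).2⟩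
  rw [← inner_neg_left]
  exact h (-x) (balanced_absConvexHull.neg_mem_iff.2 (subset_absConvexHull hx))

lemma neg_polarBody_absConvexHull (s : Set E2) :
    -polarBody (absConvexHull ℝ s) = polarBody (absConvexHull ℝ s) := by
  ext y
  simp [mem_polarBody_absConvexHull]

lemma polarBody_closedBall {r : ℝ} (hr : 0 < r) :
    polarBody (Metric.closedBall 0 r) = Metric.closedBall 0 r⁻¹ := by
  ext y
  rw [mem_closedBall_zero_iff]
  constructor
  · intro hy
    rcases eq_or_ne y 0 with rfl | hne
    · simpa using hr.le
    have hnorm : 0 < ‖y‖ := norm_pos_iff.2 hne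
    have hmem : (r / ‖y‖) • y ∈ Metric.closedBall (0 : E2) r := by
      rw [mem_closedBall_zero_iff, norm_smul, norm_div, norm_norm, div_mul_cancel₀ _ hnorm.ne',
        Real.norm_of_nonneg hr.le]
    have hle := hy _ hmem
    rw [real_inner_smul_left, real_inner_self_eq_norm_mul_norm] at hle
    rw [← one_div, le_div_iff₀ hr]
    calc ‖y‖ * r = r / ‖y‖ * (‖y‖ * ‖y‖) := by field_simp
      _ ≤ 1 := hle
  · intro hy x hx
    rw [mem_closedBall_zero_iff] at hx
    calc ⟪x, y⟫ ≤ ‖x‖ * ‖y‖ := real_inner_le_norm x y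
      _ ≤ r * r⁻¹ := by gcongr
      _ = 1 := mul_inv_cancel₀ hr.ne'

lemma volume_polarBody_ne_zero (hK : Bornology.IsBounded K) : volume (polarBody K) ≠ 0 := by
  obtain ⟨r, hr, hsub⟩ := hK.subset_closedBall_lt 0 0
  have hball := polarBody_closedBall hr ▸ polarBody_anti hsub
  exact ((Metric.measure_closedBall_pos volume 0 (inv_pos.2 hr)).trans_le (measure_mono hball)).ne'

lemma volume_polarBody_ne_top (hK : (0 : E2) ∈ interior K) : volume (polarBody K) ≠ ⊤ := by
  obtain ⟨r, hr, hsub⟩ :=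
    Metric.nhds_basis_closedBall.mem_iff.1 (mem_interior_iff_mem_nhds.1 hK)
  have hball := polarBody_closedBall hr ▸ polarBody_anti hsub
  exact ((measure_mono hball).trans_lt measure_closedBall_lt_top).ne

end PolarBody

section Cap

open scoped EuclideanSpace Topology

variable {X : Set E2} {m P Q f a c x : E2}

/-- The incidences between a triangle `m P Q` and the functionals `f`, `a`, `c` of its side lines
`PQ`, `mP`, `mQ`, where `f` strictly separates `m` from the origin, `c` keeps `P` strictly inside
and `a` keeps `Q` strictly inside. -/
structure IsCap (m P Q f a c : E2) : Prop where
  apex_a : ⟪m, a⟫ = 1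
  apex_c : ⟪m, c⟫ = 1
  left_a : ⟪P, a⟫ = 1
  right_c : ⟪Q, c⟫ = 1
  left_f : ⟪P, f⟫ = 1
  right_f : ⟪Q, f⟫ = 1
  one_lt_apex_f : 1 < ⟪m, f⟫
  left_c_lt_one : ⟪P, c⟫ < 1
  right_a_lt_one : ⟪Q, a⟫ < 1

namespace IsCap

lemma dual (h : IsCap m P Q f a c) : IsCap f a c m P Q := by
  constructor <;> rw [real_inner_comm] <;> cases h <;> assumption

lemma cross_sides_mul_cross_ne_zero (h : IsCap m P Q f a c) :
    cross (P - m) (Q - m) * cross a c ≠ 0 := by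
  rw [cross_mul_cross, inner_sub_left, inner_sub_left, inner_sub_left, inner_sub_left, h.left_a,
    h.apex_a, h.right_c, h.apex_c, sub_self, zero_mul, zero_sub, neg_ne_zero]
  exact (mul_pos_of_neg_of_neg (sub_neg.2 h.left_c_lt_one) (sub_neg.2 h.right_a_lt_one)).ne'

lemma exists_eq_combination (h : IsCap m P Q f a c) (ha : ⟪x, a⟫ ≤ 1) (hc : ⟪x, c⟫ ≤ 1) :
    ∃ i j k : ℝ, 0 ≤ j ∧ 0 ≤ k ∧ i + j + k = 1 ∧ ⟪x, f⟫ - 1 = i * (⟪m, f⟫ - 1) ∧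
      x = i • m + j • P + k • Q := by
  have hP := sub_pos.2 h.left_c_lt_one
  have hQ := sub_pos.2 h.right_a_lt_one
  set j := (1 - ⟪x, c⟫) / (1 - ⟪P, c⟫)
  set k := (1 - ⟪x, a⟫) / (1 - ⟪Q, a⟫)
  have hjP : j * (1 - ⟪P, c⟫) = 1 - ⟪x, c⟫ := div_mul_cancel₀ _ hP.ne'
  have hkQ : k * (1 - ⟪Q, a⟫) = 1 - ⟪x, a⟫ := div_mul_cancel₀ _ hQ.ne'
  have hx : x = (1 - j - k) • m + j • P + k • Q := by
    apply eq_of_inner_eq_of_cross_ne_zero (right_ne_zero_of_mul h.cross_sides_mul_cross_ne_zero) <;>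
      simp only [inner_add_left, real_inner_smul_left, h.apex_a, h.apex_c, h.left_a, h.right_c]
    · linarith
    · linarith
  refine ⟨1 - j - k, j, k, div_nonneg (sub_nonneg.2 hc) hP.le,
    div_nonneg (sub_nonneg.2 ha) hQ.le, by ring, ?_, hx⟩
  rw [hx]
  simp only [inner_add_left, real_inner_smul_left, h.left_f, h.right_f]
  ring

lemma mem_segment (h : IsCap m P Q f a c) (ha : ⟪x, a⟫ ≤ 1) (hc : ⟪x, c⟫ ≤ 1)
    (hf : ⟪x, f⟫ = 1) : x ∈ segment ℝ P Q := by
  obtain ⟨i, j, k, hj, hk, hsum, hi, rfl⟩ := h.exists_eq_combination ha hc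
  rw [hf, sub_self, zero_eq_mul, or_iff_left (sub_pos.2 h.one_lt_apex_f).ne'] at hi
  exact ⟨j, k, hj, hk, by linarith, by rw [hi, zero_smul, zero_add]⟩

lemma inter_halfSpace_eq (h : IsCap m P Q f a c) (hX : Convex ℝ X) (hm : m ∈ X) (hP : P ∈ X)
    (hQ : Q ∈ X) (ha : ∀ x ∈ X, ⟪x, a⟫ ≤ 1) (hc : ∀ x ∈ X, ⟪x, c⟫ ≤ 1) :
    X ∩ {x | 1 ≤ ⟪x, f⟫} = convexHull ℝ {m, P, Q} := by
  refine Set.Subset.antisymm ?_ (convexHull_min ?_ (hX.inter ?_))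
  · rintro x ⟨hx, hf : 1 ≤ ⟪x, f⟫⟩
    obtain ⟨i, j, k, hj, hk, hsum, hi, rfl⟩ := h.exists_eq_combination (ha x hx) (hc x hx)
    have hi0 : 0 ≤ i := nonneg_of_mul_nonneg_left (hi ▸ sub_nonneg.2 hf)
      (sub_pos.2 h.one_lt_apex_f)
    exact combination_mem_convexHull hi0 hj hk hsum
  · rintro x (rfl | rfl | rfl)
    · exact ⟨hm, h.one_lt_apex_f.le⟩
    · exact ⟨hP, h.left_f.ge⟩
    · exact ⟨hQ, h.right_f.ge⟩
  · exact convex_halfSpace_ge ((innerₗ E2).flip f).isLinear 1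

lemma volume_eq (h : IsCap m P Q f a c) (hX : Convex ℝ X) (hneg : -X = X) (hm : m ∈ X)
    (hP : P ∈ X) (hQ : Q ∈ X) (ha : ∀ x ∈ X, ⟪x, a⟫ ≤ 1) (hc : ∀ x ∈ X, ⟪x, c⟫ ≤ 1) :
    volume X = volume (X ∩ {x | |⟪x, f⟫| ≤ 1}) + 2 * volume (convexHull ℝ {m, P, Q}) := by
  rw [measure_eq_slab_add_two_mul volume hneg f, h.inter_halfSpace_eq hX hm hP hQ ha hc]

lemma left_ne_right (h : IsCap m P Q f a c) : P ≠ Q := by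
  rintro rfl
  exact h.left_c_lt_one.ne h.right_c

lemma collinear_zero_midpoint_apex (h : IsCap m P Q f a c) (heq : ⟪P, c⟫ = ⟪Q, a⟫) :
    Collinear ℝ {0, (2 : ℝ)⁻¹ • (P + Q), m} := by
  refine collinear_of_inner_eq (f := a - c) (r := 0) (sub_ne_zero.2 h.dual.left_ne_right) ?_
  simp [inner_sub_right, inner_add_left, real_inner_smul_left, h.apex_a, h.apex_c, h.left_a,
    h.right_c, heq, add_comm]

lemma one_le_levelRatio_mul_levelRatio (h : IsCap m P Q f a c) {g : E2}
    (hle : volume (convexHull ℝ {m, P, Q}) ≤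
      volume (convexHull ℝ {m, levelPoint g m P, levelPoint g m Q})) :
    1 ≤ |levelRatio g m P * levelRatio g m Q| := by
  have hcross : cross (levelPoint g m P - m) (levelPoint g m Q - m) =
      levelRatio g m P * levelRatio g m Q * cross (P - m) (Q - m) := by
    rw [levelPoint_sub, levelPoint_sub]
    simp only [cross, PiLp.smul_apply, smul_eq_mul]
    ring
  rw [volume_convexHull_triple, volume_convexHull_triple,
    ENNReal.mul_le_mul_iff_left volume_stdTriangle_ne_zero volume_stdTriangle_ne_top,
    ENNReal.ofReal_le_ofReal_iff (abs_nonneg _), hcross, abs_mul] at hle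
  exact (le_mul_iff_one_le_left
    (abs_pos.2 (left_ne_zero_of_mul h.cross_sides_mul_cross_ne_zero))).1 hle

lemma inner_eq_inner_of_eventually_volume_le (h : IsCap m P Q f a c)
    (hle : ∀ᶠ t : ℝ in 𝓝 0, volume (convexHull ℝ {m, P, Q}) ≤ volume (convexHull ℝ
      {m, levelPoint (f + t • (a - c)) m P, levelPoint (f + t • (a - c)) m Q})) :
    ⟪P, c⟫ = ⟪Q, a⟫ := by
  set D := ⟪m, f⟫ - 1 with hD
  have hDpos : 0 < D := sub_pos.2 h.one_lt_apex_f
  have hP : ∀ t : ℝ, levelRatio (f + t • (a - c)) m P = D / (D - t * (1 - ⟪P, c⟫)) := fun t => by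
    simp only [levelRatio, inner_add_right, real_inner_smul_right, inner_sub_right, h.apex_a,
      h.apex_c, h.left_a, h.left_f, hD]
    ring_nf
  have hQ : ∀ t : ℝ, levelRatio (f + t • (a - c)) m Q = D / (D + t * (1 - ⟪Q, a⟫)) := fun t => by
    simp only [levelRatio, inner_add_right, real_inner_smul_right, inner_sub_right, h.apex_a,
      h.apex_c, h.right_c, h.right_f, hD]
    ring_nf
  have hmax : IsLocalMax (fun t : ℝ => (D - t * (1 - ⟪P, c⟫)) * (D + t * (1 - ⟪Q, a⟫))) 0 := by
    have hposP : ∀ᶠ t : ℝ in 𝓝 0, 0 < D - t * (1 - ⟪P, c⟫) :=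
      continuousAt_const.eventually_lt (by fun_prop) (by simpa using hDpos)
    have hposQ : ∀ᶠ t : ℝ in 𝓝 0, 0 < D + t * (1 - ⟪Q, a⟫) :=
      continuousAt_const.eventually_lt (by fun_prop) (by simpa using hDpos)
    filter_upwards [hle, hposP, hposQ] with t ht hPt hQt
    have hratio := h.one_le_levelRatio_mul_levelRatio ht
    rw [hP, hQ, abs_of_nonneg (by positivity), div_mul_div_comm, one_le_div (by positivity)]
      at hratio
    simpa using hratio
  have hderiv : HasDerivAt (fun t : ℝ => (D - t * (1 - ⟪P, c⟫)) * (D + t * (1 - ⟪Q, a⟫)))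
      (D * (⟪P, c⟫ - ⟪Q, a⟫)) 0 := by
    refine (((hasDerivAt_mul_const (1 - ⟪P, c⟫)).const_sub D).fun_mul
      ((hasDerivAt_mul_const (1 - ⟪Q, a⟫)).const_add D)).congr_deriv ?_
    ring
  have hzero := hmax.hasDerivAt_eq_zero hderiv
  rw [mul_eq_zero, or_iff_right hDpos.ne'] at hzero
  exact sub_eq_zero.1 hzero

end IsCap
end Cap

section CornerCut

open Filter Topology

variable {W : Set E2} {m P Q f a c u v P' Q' : E2}

/-- The symmetric convex body generated by `W` and the points `P`, `Q` arises from the one generated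
by `W` and `m` by cutting off the triangle `m P Q` along the line `⟪·, f⟫ = 1`, and its mirror
image. The sides `mP` and `mQ` lie on the supporting lines `⟪·, a⟫ = 1` and `⟪·, c⟫ = 1`. -/
structure IsCornerCut (W : Set E2) (m P Q f a c : E2) : Prop extends IsCap m P Q f a c where
  left_mem : P ∈ absConvexHull ℝ (insert m W)
  right_mem : Q ∈ absConvexHull ℝ (insert m W)
  abs_inner_a : ∀ x ∈ W, |⟪x, a⟫| ≤ 1
  abs_inner_c : ∀ x ∈ W, |⟪x, c⟫| ≤ 1
  abs_inner_f : ∀ x ∈ W, |⟪x, f⟫| ≤ 1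

namespace IsCornerCut

lemma cutBody_subset (h : IsCornerCut W m P Q f a c) :
    cutBody W P Q ⊆ absConvexHull ℝ (insert m W) := by
  refine absConvexHull_min ?_ absConvex_absConvexHull
  rintro x (rfl | rfl | hx)
  · exact h.left_mem
  · exact h.right_mem
  · exact subset_absConvexHull (Set.mem_insert_of_mem m hx)

lemma a_mem_polarBody (h : IsCornerCut W m P Q f a c) :
    a ∈ polarBody (absConvexHull ℝ (insert m W)) := by
  rw [mem_polarBody_absConvexHull, Set.forall_mem_insert]
  exact ⟨by simp [h.apex_a], h.abs_inner_a⟩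

lemma c_mem_polarBody (h : IsCornerCut W m P Q f a c) :
    c ∈ polarBody (absConvexHull ℝ (insert m W)) := by
  rw [mem_polarBody_absConvexHull, Set.forall_mem_insert]
  exact ⟨by simp [h.apex_c], h.abs_inner_c⟩

lemma f_mem_polarBody (h : IsCornerCut W m P Q f a c) : f ∈ polarBody (cutBody W P Q) := by
  simp only [mem_polarBody_absConvexHull, Set.forall_mem_insert, h.left_f, h.right_f, abs_one]
  exact ⟨le_rfl, le_rfl, h.abs_inner_f⟩

lemma inter_slab_eq_cutBody (h : IsCornerCut W m P Q f a c) :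
    absConvexHull ℝ (insert m W) ∩ {x | |⟪x, f⟫| ≤ 1} = cutBody W P Q := by
  have hf : ∀ x ∈ cutBody W P Q, |⟪x, f⟫| ≤ 1 := fun x hx => by
    refine abs_inner_le_one_of_mem_absConvexHull ?_ hx
    simpa [h.left_f, h.right_f] using h.abs_inner_f
  have hsub : absConvexHull ℝ (insert m (cutBody W P Q)) = absConvexHull ℝ (insert m W) := by
    refine Set.Subset.antisymm (absConvexHull_min ?_ absConvex_absConvexHull)
      (absConvexHull_mono (Set.insert_subset_insert ?_))
    · exact Set.insert_subset (subset_absConvexHull (by simp)) h.cutBody_subset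
    · exact fun x hx => subset_absConvexHull (by simp [hx])
  refine Set.Subset.antisymm ?_ fun x hx => ⟨h.cutBody_subset hx, hf x hx⟩
  rintro x ⟨hx, hxf⟩
  rw [← hsub] at hx
  refine mem_of_mem_absConvexHull_insert_of_abs_apply_le_one (f := (innerₗ E2).flip f)
    absConvex_absConvexHull (fun y hy => (abs_le.1 (hf y hy)).2) h.one_lt_apex_f ?_
    ⟨P, left_mem_cutBody W P Q⟩ hx hxf
  intro q hq hqf
  rw [hsub] at hq
  exact convex_absConvexHull.segment_subset (left_mem_cutBody W P Q)
    (right_mem_cutBody W P Q)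
    (h.mem_segment (h.a_mem_polarBody q hq) (h.c_mem_polarBody q hq) hqf)

lemma polarBody_inter_slab_eq (h : IsCornerCut W m P Q f a c) :
    polarBody (cutBody W P Q) ∩ {y | |⟪y, m⟫| ≤ 1} =
      polarBody (absConvexHull ℝ (insert m W)) := by
  ext y
  refine ⟨fun ⟨hy, hym⟩ => ?_, fun hy => ⟨polarBody_anti h.cutBody_subset hy, ?_⟩⟩
  · simp only [mem_polarBody_absConvexHull, Set.forall_mem_insert] at hy ⊢
    exact ⟨real_inner_comm y m ▸ hym, hy.2.2⟩
  · rw [mem_polarBody_absConvexHull, Set.forall_mem_insert] at hy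
    simpa only [Set.mem_ofPred_eq, real_inner_comm] using hy.1

lemma volume_absConvexHull_insert_apex (h : IsCornerCut W m P Q f a c) :
    volume (absConvexHull ℝ (insert m W)) =
      volume (cutBody W P Q) + 2 * volume (convexHull ℝ {m, P, Q}) := by
  rw [← h.inter_slab_eq_cutBody]
  exact h.volume_eq convex_absConvexHull balanced_absConvexHull.neg_eq
    (subset_absConvexHull (by simp)) h.left_mem h.right_mem h.a_mem_polarBody h.c_mem_polarBody

lemma volume_polarBody_cutBody (h : IsCornerCut W m P Q f a c) :
    volume (polarBody (cutBody W P Q)) = volume (polarBody (absConvexHull ℝ (insert m W))) +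
      2 * volume (convexHull ℝ {f, a, c}) := by
  rw [← h.polarBody_inter_slab_eq]
  refine h.dual.volume_eq (convex_polarBody _) (neg_polarBody_absConvexHull _) h.f_mem_polarBody
    (polarBody_anti h.cutBody_subset h.a_mem_polarBody)
    (polarBody_anti h.cutBody_subset h.c_mem_polarBody) (fun y hy => ?_) fun y hy => ?_
  · exact real_inner_comm P y ▸ hy P (left_mem_cutBody W P Q)
  · exact real_inner_comm Q y ▸ hy Q (right_mem_cutBody W P Q)

lemma zero_mem_interior_cutBody (h : IsCornerCut W m P Q f a c)
    (h0 : (0 : E2) ∈ interior (absConvexHull ℝ (insert m W))) :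
    (0 : E2) ∈ interior (cutBody W P Q) := by
  rw [mem_interior_iff_mem_nhds] at h0 ⊢
  rw [← h.inter_slab_eq_cutBody]
  refine inter_mem h0 ?_
  have hcont : Continuous fun x : E2 => |⟪x, f⟫| := by fun_prop
  exact mem_of_superset ((isOpen_lt hcont continuous_const).mem_nhds (by simp))
    fun x (hx : |⟪x, f⟫| < 1) => hx.le

lemma volume_cap_le (h : IsCornerCut W m P Q f a c) {t : ℝ}
    (h' : IsCornerCut W m P' Q' (f + t • (a - c)) a c)
    (hW : W.Finite) (h0 : (0 : E2) ∈ interior (cutBody W P Q))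
    (hmax : volume (cutBody W P' Q') * volume (polarBody (cutBody W P' Q')) ≤
      volume (cutBody W P Q) * volume (polarBody (cutBody W P Q))) :
    volume (convexHull ℝ {m, P, Q}) ≤ volume (convexHull ℝ {m, P', Q'}) := by
  have hbdd : ∀ p q : E2, Bornology.IsBounded (cutBody W p q) := fun p q =>
    ((hW.insert q).insert p).totallyBounded.absConvexHull.isBounded
  have hdual :
      volume (convexHull ℝ {f + t • (a - c), a, c}) = volume (convexHull ℝ {f, a, c}) := by
    have hcross : cross (a - (f + t • (a - c))) (c - (f + t • (a - c))) =
        cross (a - f) (c - f) := by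
      simp only [cross, PiLp.sub_apply, PiLp.add_apply, PiLp.smul_apply, smul_eq_mul]
      ring
    rw [volume_convexHull_triple, volume_convexHull_triple, hcross]
  have hpolar : volume (polarBody (cutBody W P' Q')) = volume (polarBody (cutBody W P Q)) := by
    rw [h'.volume_polarBody_cutBody, hdual, h.volume_polarBody_cutBody]
  have hbody : volume (cutBody W P' Q') ≤ volume (cutBody W P Q) := by
    rw [hpolar] at hmax
    exact (ENNReal.mul_le_mul_iff_left (volume_polarBody_ne_zero (hbdd P Q))
      (volume_polarBody_ne_top h0)).1 hmax
  have htotal := h.volume_absConvexHull_insert_apex.symm.trans h'.volume_absConvexHull_insert_apex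
  have hcap : volume (cutBody W P Q) + 2 * volume (convexHull ℝ {m, P, Q}) ≤
      volume (cutBody W P Q) + 2 * volume (convexHull ℝ {m, P', Q'}) := by
    rw [htotal]
    gcongr
  exact (ENNReal.mul_le_mul_iff_right two_ne_zero ENNReal.ofNat_ne_top).1
    ((ENNReal.add_le_add_iff_left (hbdd P Q).measure_lt_top.ne).1 hcap)

lemma eventually_isCornerCut (h : IsCornerCut W m P Q f a c) (hW : W.Finite)
    (hf : ∀ x ∈ W, |⟪x, f⟫| < 1) (hu : u ∈ W) (hP : P ∈ openSegment ℝ m u) (hv : v ∈ W)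
    (hQ : Q ∈ openSegment ℝ m v) :
    ∀ᶠ g in 𝓝 f, IsCornerCut W m (levelPoint g m P) (levelPoint g m Q) g a c := by
  have hcont : ∀ x : E2, ContinuousAt (fun g : E2 => ⟪x, g⟫) f := fun x => by fun_prop
  have hWf : ∀ᶠ g in 𝓝 f, ∀ x ∈ W, |⟪x, g⟫| < 1 :=
    (eventually_all_finite hW).2 fun x hx =>
      (hcont x).abs.eventually_lt continuousAt_const (hf x hx)
  have hmf : ∀ᶠ g in 𝓝 f, 1 < ⟪m, g⟫ :=
    continuousAt_const.eventually_lt (hcont m) h.one_lt_apex_f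
  have hseg : ∀ x ∈ W, segment ℝ m x ⊆ absConvexHull ℝ (insert m W) := fun x hx =>
    convex_absConvexHull.segment_subset (subset_absConvexHull (by simp))
      (subset_absConvexHull (by simp [hx]))
  filter_upwards [hWf, hmf, eventually_levelPoint h.left_f h.one_lt_apex_f hP,
    eventually_levelPoint h.right_f h.one_lt_apex_f hQ]
    with g hWg hmg ⟨hPg, hPpos, hPseg⟩ ⟨hQg, hQpos, hQseg⟩
  exact {
    apex_a := h.apex_a
    apex_c := h.apex_c
    left_a := inner_eq_of_mem_affineSpan_pair (AffineMap.lineMap_mem_affineSpan_pair _ _ _)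
      h.apex_a h.left_a
    right_c := inner_eq_of_mem_affineSpan_pair (AffineMap.lineMap_mem_affineSpan_pair _ _ _)
      h.apex_c h.right_c
    left_f := hPg
    right_f := hQg
    one_lt_apex_f := hmg
    left_c_lt_one := inner_levelPoint_lt_one h.apex_c h.left_c_lt_one hPpos
    right_a_lt_one := inner_levelPoint_lt_one h.apex_a h.right_a_lt_one hQpos
    left_mem := hseg u hu hPseg
    right_mem := hseg v hv hQseg
    abs_inner_a := h.abs_inner_a
    abs_inner_c := h.abs_inner_c
    abs_inner_f := fun x hx => (hWg x hx).le }

lemma inner_eq_inner_of_maximal (h : IsCornerCut W m P Q f a c) (hW : W.Finite)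
    (hf : ∀ x ∈ W, |⟪x, f⟫| < 1) (hu : u ∈ W) (hP : P ∈ openSegment ℝ m u) (hv : v ∈ W)
    (hQ : Q ∈ openSegment ℝ m v) (h0 : (0 : E2) ∈ interior (cutBody W P Q))
    (hmax : ∀ P' Q' : E2, (0 : E2) ∈ interior (cutBody W P' Q') →
      volume (cutBody W P' Q') * volume (polarBody (cutBody W P' Q')) ≤
        volume (cutBody W P Q) * volume (polarBody (cutBody W P Q))) :
    ⟪P, c⟫ = ⟪Q, a⟫ := by
  have htilt : Tendsto (fun t : ℝ => f + t • (a - c)) (𝓝 0) (𝓝 f) :=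
    Continuous.tendsto' (by fun_prop) _ _ (by simp)
  refine h.inner_eq_inner_of_eventually_volume_le ?_
  filter_upwards [htilt.eventually (h.eventually_isCornerCut hW hf hu hP hv hQ)] with t ht
  exact h.volume_cap_le ht hW h0 (hmax _ _ (ht.zero_mem_interior_cutBody
    (interior_mono h.cutBody_subset h0)))

end IsCornerCut
end CornerCut

section Polygon

open scoped EuclideanSpace

variable {K : Set E2} {m f a c u v w y₁ y₂ y₃ y₄ : E2}

lemma ncard_extremePoints_le_four (hKc : Convex ℝ K) (hK : -K = K) (hu : u ∈ K) (hv : v ∈ K)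
    (ha : ∀ x ∈ K, ⟪x, a⟫ ≤ 1) (hf : ∀ x ∈ K, ⟪x, f⟫ ≤ 1) (huf : ⟪u, f⟫ = 1) (hvf : ⟪v, f⟫ = 1)
    (hua : ⟪u, a⟫ = 1) (hva : ⟪v, a⟫ = -1) : (K.extremePoints ℝ).ncard ≤ 4 := by
  have hKeq : K = convexHull ℝ {u, v, -u, -v} := by
    refine Set.Subset.antisymm (fun x hx => ?_) (convexHull_min ?_ hKc)
    · exact mem_convexHull_parallelogram huf hvf hua hva (abs_inner_le_one_of_neg_eq hK ha hx)
        (abs_inner_le_one_of_neg_eq hK hf hx)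
    · rintro x (rfl | rfl | rfl | rfl)
      · exact hu
      · exact hv
      · exact hK ▸ Set.neg_mem_neg.2 hu
      · exact hK ▸ Set.neg_mem_neg.2 hv
  have hsub : K.extremePoints ℝ ⊆ ({u, v, -u, -v} : Finset E2) := by
    rw [hKeq]
    simpa using extremePoints_convexHull_subset
  calc (K.extremePoints ℝ).ncard ≤ ({u, v, -u, -v} : Finset E2).card :=
        Set.ncard_coe_finset _ ▸ Set.ncard_le_ncard hsub
    _ ≤ 4 := Finset.card_le_four

lemma exists_adjacent_edge_functional (hKc : Convex ℝ K) (hK : -K = K)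
    (h0 : (0 : E2) ∈ interior K) (hcard : 4 < (K.extremePoints ℝ).ncard)
    (hu : u ∈ K.extremePoints ℝ) (hv : v ∈ K.extremePoints ℝ) (hw : w ∈ K.extremePoints ℝ)
    (huv : u ≠ v) (huw : u ≠ w) (hvw : v ≠ w) (hf : ∀ x ∈ K, ⟪x, f⟫ ≤ 1) (hvf : ⟪v, f⟫ = 1)
    (hwf : ⟪w, f⟫ = 1) (hedge : segment ℝ u v ⊆ frontier K) :
    ∃ a : E2, (∀ x ∈ K, ⟪x, a⟫ ≤ 1) ∧ ⟪u, a⟫ = 1 ∧ ⟪v, a⟫ = 1 ∧ ⟪w, a⟫ < 1 ∧ u ≠ -v ∧ u ≠ -w := by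
  obtain ⟨a, ha, hua, hva⟩ :=
    exists_inner_le_one_of_segment_subset_frontier hKc h0 hu.1 hv.1 hedge
  have ha0 : a ≠ 0 := by
    rintro rfl
    simp at hua
  refine ⟨a, ha, hua, hva, ?_, ?_, ?_⟩
  · exact (ha w hw.1).lt_of_ne (inner_ne_of_mem_extremePoints ha0 hu hv hw huv huw hvw hua hva)
  · rintro rfl
    norm_num [hva] at hua
  · -- If `u = -w`, then `K` is the parallelogram with vertices `±v`, `±w`.
    rintro rfl
    rw [inner_neg_left, neg_eq_iff_eq_neg] at hua
    exact hcard.not_ge (ncard_extremePoints_le_four hKc hK hv.1 hw.1 ha hf hvf hwf hva hua)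

lemma one_lt_inner_of_inner_eq_one (hua : ⟪u, a⟫ = 1) (huf : ⟪u, f⟫ = 1) (hvf : ⟪v, f⟫ = 1)
    (hvc : ⟪v, c⟫ = 1) (hma : ⟪m, a⟫ = 1) (hmc : ⟪m, c⟫ = 1) (huc : |⟪u, c⟫| ≤ 1)
    (hva : |⟪v, a⟫| ≤ 1) (huc1 : ⟪u, c⟫ < 1) (hva1 : ⟪v, a⟫ < 1) : 1 < ⟪m, f⟫ := by
  -- The `3 × 3` matrix pairing `u`, `v`, `m` with `a`, `f`, `c` has rank at most two.
  have hdet : ⟪u, a⟫ * (⟪v, f⟫ * ⟪m, c⟫ - ⟪v, c⟫ * ⟪m, f⟫)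
      - ⟪u, f⟫ * (⟪v, a⟫ * ⟪m, c⟫ - ⟪v, c⟫ * ⟪m, a⟫)
      + ⟪u, c⟫ * (⟪v, a⟫ * ⟪m, f⟫ - ⟪v, f⟫ * ⟪m, a⟫) = 0 := by
    simp only [inner_eq_coord]
    ring
  rw [hua, huf, hvf, hvc, hma, hmc] at hdet
  have hfactor : (⟪m, f⟫ - 1) * (1 - ⟪u, c⟫ * ⟪v, a⟫) = (1 - ⟪u, c⟫) * (1 - ⟪v, a⟫) := by
    linear_combination -hdet
  have hle : ⟪u, c⟫ * ⟪v, a⟫ ≤ 1 := by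
    refine (le_abs_self _).trans ?_
    rw [abs_mul]
    exact mul_le_one₀ huc (abs_nonneg _) hva
  have hpos : 0 < (1 - ⟪u, c⟫) * (1 - ⟪v, a⟫) := mul_pos (sub_pos.2 huc1) (sub_pos.2 hva1)
  exact sub_pos.1 (pos_of_mul_pos_left (hfactor ▸ hpos) (sub_nonneg.2 hle))

lemma exists_isCornerCut_of_consecutive_edges (hKc : Convex ℝ K) (hK : -K = K)
    (h0 : (0 : E2) ∈ interior K) (hcard : 4 < (K.extremePoints ℝ).ncard)
    (hy₁ : y₁ ∈ K.extremePoints ℝ) (hy₂ : y₂ ∈ K.extremePoints ℝ) (hy₃ : y₃ ∈ K.extremePoints ℝ)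
    (hy₄ : y₄ ∈ K.extremePoints ℝ) (hdist : [y₁, y₂, y₃, y₄].Pairwise (· ≠ ·))
    (hedge12 : segment ℝ y₁ y₂ ⊆ frontier K) (hedge23 : segment ℝ y₂ y₃ ⊆ frontier K)
    (hedge34 : segment ℝ y₃ y₄ ⊆ frontier K) (hm12 : m ∈ line[ℝ, y₁, y₂])
    (hm34 : m ∈ line[ℝ, y₃, y₄]) :
    ∃ f a c : E2, let W := K.extremePoints ℝ \ {y₂, y₃, -y₂, -y₃}
      IsCornerCut W m y₂ y₃ f a c ∧ (∀ x ∈ W, |⟪x, f⟫| < 1) ∧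
        (y₁ ∈ W ∧ y₂ ∈ openSegment ℝ m y₁) ∧ y₄ ∈ W ∧ y₃ ∈ openSegment ℝ m y₄ := by
  simp only [List.pairwise_cons, List.mem_cons, List.not_mem_nil, or_false, forall_eq_or_imp,
    forall_eq, IsEmpty.forall_iff, implies_true, List.Pairwise.nil, and_true] at hdist
  obtain ⟨⟨h12, h13, -⟩, ⟨h23, h24⟩, h34⟩ := hdist
  obtain ⟨f, hf, hf₂, hf₃⟩ :=
    exists_inner_le_one_of_segment_subset_frontier hKc h0 hy₂.1 hy₃.1 hedge23
  obtain ⟨a, ha, ha₁, ha₂, ha₃, h12', h13'⟩ := exists_adjacent_edge_functional hKc hK h0 hcard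
    hy₁ hy₂ hy₃ h12 h13 h23 hf hf₂ hf₃ hedge12
  obtain ⟨c, hc, hc₄, hc₃, hc₂, h43', h42'⟩ := exists_adjacent_edge_functional hKc hK h0 hcard
    hy₄ hy₃ hy₂ h34.symm h24.symm h23.symm hf hf₃ hf₂ (segment_symm ℝ y₃ y₄ ▸ hedge34)
  have hma := inner_eq_of_mem_affineSpan_pair hm12 ha₁ ha₂
  have hmc := inner_eq_of_mem_affineSpan_pair hm34 hc₃ hc₄
  have hmf : 1 < ⟪m, f⟫ := one_lt_inner_of_inner_eq_one ha₂ hf₂ hf₃ hc₃ hma hmc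
    (abs_inner_le_one_of_neg_eq hK hc hy₂.1) (abs_inner_le_one_of_neg_eq hK ha hy₃.1) hc₂ ha₃
  have hlt : ∀ x ∈ K.extremePoints ℝ \ {y₂, y₃, -y₂, -y₃}, |⟪x, f⟫| < 1 := fun _ =>
    abs_inner_lt_one_of_mem_extremePoints hK hf hy₂ hy₃ h23 hf₂ hf₃
  have hW₁ : y₁ ∈ K.extremePoints ℝ \ {y₂, y₃, -y₂, -y₃} :=
    ⟨hy₁, by simp [h12, h13, h12', h13']⟩
  have hW₄ : y₄ ∈ K.extremePoints ℝ \ {y₂, y₃, -y₂, -y₃} :=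
    ⟨hy₄, by simp [h24.symm, h34.symm, h42', h43']⟩
  have hseg₂ : y₂ ∈ openSegment ℝ m y₁ := mem_openSegment_of_mem_affineSpan
    (f := (innerₗ E2).flip f) hm12 (abs_lt.1 (hlt y₁ hW₁)).2 hf₂ hmf
  have hseg₃ : y₃ ∈ openSegment ℝ m y₄ := mem_openSegment_of_mem_affineSpan
    (f := (innerₗ E2).flip f) (Set.pair_comm y₃ y₄ ▸ hm34)
    (abs_lt.1 (hlt y₄ hW₄)).2 hf₃ hmf
  refine ⟨f, a, c, ⟨⟨hma, hmc, ha₂, hc₃, hf₂, hf₃, hmf, hc₂, ha₃⟩, ?_, ?_, ?_, ?_, ?_⟩, hlt,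
    ⟨hW₁, hseg₂⟩, hW₄, hseg₃⟩
  · exact convex_absConvexHull.openSegment_subset (subset_absConvexHull (by simp))
      (subset_absConvexHull (Set.mem_insert_of_mem m hW₁)) hseg₂
  · exact convex_absConvexHull.openSegment_subset (subset_absConvexHull (by simp))
      (subset_absConvexHull (Set.mem_insert_of_mem m hW₄)) hseg₃
  · exact fun x hx => abs_inner_le_one_of_neg_eq hK ha hx.1.1
  · exact fun x hx => abs_inner_le_one_of_neg_eq hK hc hx.1.1
  · exact fun x hx => (hlt x hx).le

end Polygon

/-- Property (ii) of a maximizer of the volume product among o-symmetric n-gons: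
for consecutive vertices y₁, y₂, y₃, y₄, if m is the intersection of the lines
through y₁,y₂ and through y₃,y₄, then o, (y₂+y₃)/2, m are collinear. -/
theorem maximizer_consecutive_edges_intersection_collinear
    (n : ℕ) (hn6 : 6 ≤ n) (hneven : Even n)
    (S : Finset E2) (hScard : S.card = n)
    (K : Set E2) (hK : K = convexHull ℝ (S : Set E2))
    (hvert : (S : Set E2) = K.extremePoints ℝ)
    (hsym : K = -K) (h0 : (0 : E2) ∈ interior K)
    (hmax : ∀ (T : Finset E2) (L : Set E2), T.card ≤ n →
      L = convexHull ℝ (T : Set E2) → L = -L → (0 : E2) ∈ interior L →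
      volume L * volume (polarBody L) ≤ volume K * volume (polarBody K))
    (y₁ y₂ y₃ y₄ : E2)
    (hy₁ : y₁ ∈ K.extremePoints ℝ) (hy₂ : y₂ ∈ K.extremePoints ℝ)
    (hy₃ : y₃ ∈ K.extremePoints ℝ) (hy₄ : y₄ ∈ K.extremePoints ℝ)
    (hdist : [y₁, y₂, y₃, y₄].Pairwise (· ≠ ·))
    (hedge12 : segment ℝ y₁ y₂ ⊆ frontier K)
    (hedge23 : segment ℝ y₂ y₃ ⊆ frontier K)
    (hedge34 : segment ℝ y₃ y₄ ⊆ frontier K)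
    (m : E2)
    (hm12 : m ∈ (affineSpan ℝ ({y₁, y₂} : Set E2) : Set E2))
    (hm34 : m ∈ (affineSpan ℝ ({y₃, y₄} : Set E2) : Set E2)) :
    Collinear ℝ {(0 : E2), (2 : ℝ)⁻¹ • (y₂ + y₃), m} := by
  have hKc : Convex ℝ K := hK ▸ convex_convexHull ℝ _
  obtain ⟨f, a, c, hcut, hf, ⟨hy₁W, hy₂m⟩, hy₄W, hy₃m⟩ := exists_isCornerCut_of_consecutive_edges
    hKc hsym.symm h0 (by rw [← hvert, Set.ncard_coe_finset]; lia) hy₁ hy₂ hy₃ hy₄ hdist hedge12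
    hedge23 hedge34 hm12 hm34
  have hS : -(S : Set E2) = S := by rw [hvert, neg_extremePoints, ← hsym]
  rw [← hvert] at hcut hf hy₁W hy₄W hy₂ hy₃
  have hbody : cutBody (S \ {y₂, y₃, -y₂, -y₃}) y₂ y₃ = K := by
    rw [hK, cutBody_sdiff_eq_convexHull hS hy₂ hy₃]
  refine hcut.collinear_zero_midpoint_apex ?_
  refine hcut.inner_eq_inner_of_maximal S.finite_toSet.sdiff hf hy₁W hy₂m hy₄W hy₃m
    (hbody.symm ▸ h0) fun P Q hPQ => ?_
  obtain ⟨T, hTcard, hT⟩ := exists_finset_cutBody_eq (f := (innerₗ E2).flip f) hS hy₂ hy₃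
    hcut.left_ne_right hcut.left_f hcut.right_f P Q
  rw [hbody]
  exact hmax T _ (hScard ▸ hTcard) hT balanced_absConvexHull.neg_eq.symm hPQ
end
end
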